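/- arXiv:1904.07007 — 2 statements merged into one kernel-verified Lean document; each statement's English description precedes it below -/
import Mathlib

section
/- Let β ∈ (1,2) with δ(β) = (1^m 0)^∞ for some m ≥ 1. Then for every t ∈ B_β one has lim_{r→0⁺} dim_H(B_β ∩ (t, t + r)) = dim_H K_β(t) > 0. -/
open Set Filter MeasureTheory

/-- The β-transformation `x ↦ βx (mod 1)`. -/
noncomputable def Tbeta (β x : ℝ) : ℝ := Int.fract (β * x)

/-- The survivor set `K_β(t) = {x ∈ [0,1) : T_β^n x ≥ t for all n ≥ 0}`. -/
def Kset (β t : ℝ) : Set ℝ := {x | x ∈ Set.Ico (0 : ℝ) 1 ∧ ∀ n : ℕ, t ≤ (Tbeta β)^[n] x}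

/-- Strict lexicographic order on sequences of naturals. -/
def seqLt (x y : ℕ → ℕ) : Prop := ∃ n, (∀ i, i < n → x i = y i) ∧ x n < y n

/-- Lexicographic order on sequences of naturals. -/
def seqLe (x y : ℕ → ℕ) : Prop := x = y ∨ seqLt x y

/-- The `n`-th iterate of the left shift. -/
def shiftN (n : ℕ) (x : ℕ → ℕ) : ℕ → ℕ := fun i => x (i + n)

/-- The sequence `w 0^∞`. -/
def wordSeq (w : List ℕ) : ℕ → ℕ := fun i => w.getD i 0

/-- The periodic sequence `w^∞`. -/
def perSeq (w : List ℕ) : ℕ → ℕ := fun i => w.getD (i % w.length) 0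

/-- The sequence obtained by concatenating the word `w` with the sequence `x`. -/
def catSeq (w : List ℕ) (x : ℕ → ℕ) : ℕ → ℕ :=
  fun i => if i < w.length then w.getD i 0 else x (i - w.length)

/-- The greedy β-expansion of `t`: the digit `b_{i+1}` is `⌊β T_β^i t⌋`. -/
noncomputable def greedy (β t : ℝ) : ℕ → ℕ := fun i => (⌊β * (Tbeta β)^[i] t⌋).toNat

/-- `d` is the quasi-greedy β-expansion of `1`: the lexicographically largest
sequence in `{0,1}^ℕ` not ending in `0^∞` whose digits sum to `1` in base `β`. -/
def IsQuasiGreedy (β : ℝ) (d : ℕ → ℕ) : Prop :=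
  (∀ i, d i ≤ 1) ∧ (¬ ∃ N, ∀ n, N ≤ n → d n = 0) ∧
  (∑' i : ℕ, (d i : ℝ) / β ^ (i + 1) = 1) ∧
  ∀ e : ℕ → ℕ, (∀ i, e i ≤ 1) → (¬ ∃ N, ∀ n, N ≤ n → e n = 0) →
    (∑' i : ℕ, (e i : ℝ) / β ^ (i + 1) = 1) → seqLe e d

/-- `s = s_1…s_p` is a β-Lyndon word: `s_{i+1}…s_p ≻ s_1…s_{p-i}` for `1 ≤ i < p`
and `σ^n(s^∞) ≺ δ(β)` for all `n ≥ 0`. -/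
def IsBetaLyndon (β : ℝ) (s : List ℕ) : Prop :=
  s ≠ [] ∧ (∀ a ∈ s, a ≤ 1) ∧
  (∀ i, 1 ≤ i → i < s.length →
    seqLt (wordSeq (s.take (s.length - i))) (wordSeq (s.drop i))) ∧
  (∀ d : ℕ → ℕ, IsQuasiGreedy β d → ∀ n : ℕ, seqLt (shiftN n (perSeq s)) d)

/-- Left endpoint `t_L = Σ_{i=1}^p s_i β^{-i}` of the β-Lyndon interval generated by `s`. -/
noncomputable def lyndonLeft (β : ℝ) (s : List ℕ) : ℝ :=
  ∑ i ∈ Finset.range s.length, (s.getD i 0 : ℝ) / β ^ (i + 1)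

/-- Right endpoint `t_R = (β^p/(β^p - 1)) t_L` of the β-Lyndon interval generated by `s`. -/
noncomputable def lyndonRight (β : ℝ) (s : List ℕ) : ℝ :=
  β ^ s.length / (β ^ s.length - 1) * lyndonLeft β s

/-- The union of all β-Lyndon intervals `[t_L, t_R)`. -/
noncomputable def lyndonUnionIco (β : ℝ) : Set ℝ :=
  ⋃ s ∈ {s : List ℕ | IsBetaLyndon β s}, Set.Ico (lyndonLeft β s) (lyndonRight β s)

/-- The symbolic survivor set `K̃_β(t)` with upper bound sequence `d = δ(β)`. -/
def Ktilde (β t : ℝ) (d : ℕ → ℕ) : Set (ℕ → ℕ) :=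
  {x | (∀ i, x i ≤ 1) ∧ ∀ n : ℕ, seqLe (greedy β t) (shiftN n x) ∧ seqLe (shiftN n x) d}

/-- The set-valued bifurcation set `E_β`. -/
def Eset (β : ℝ) : Set ℝ :=
  {t | t ∈ Set.Ico (0 : ℝ) 1 ∧ ∀ t', t < t' → t' < 1 → Kset β t' ≠ Kset β t}

/-- The dimension bifurcation set `B_β`. -/
def Bset (β : ℝ) : Set ℝ :=
  {t | t ∈ Set.Ico (0 : ℝ) 1 ∧ ∀ t', t < t' → t' < 1 → dimH (Kset β t') ≠ dimH (Kset β t)}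

/-- `β` is a multinacci number: `β^{m+1} = β^m + ⋯ + β + 1` for some `m ≥ 1`. -/
def IsMultinacci (β : ℝ) : Prop :=
  ∃ m : ℕ, 1 ≤ m ∧ β ^ (m + 1) = ∑ i ∈ Finset.range (m + 1), β ^ i


section Helpers
open scoped NNReal ENNReal
variable {β : ℝ} {m : ℕ}


/-- Bit as a real. -/
noncomputable def bt (d : Bool) : ℝ := if d then 1 else 0
/-- Inverse branch composition. -/
noncomputable def fw (β : ℝ) : List Bool → ℝ → ℝ
  | [], x => x
  | d :: v, x => (bt d + fw β v x) / β
/-- value of a word -/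
noncomputable def val (β : ℝ) (v : List Bool) : ℝ := fw β v 0
/-- first digit -/
noncomputable def dig (β x : ℝ) : Bool := decide (1 ≤ β * x)
/-- prefix of digits -/
noncomputable def pre (β : ℝ) : ℝ → ℕ → List Bool
  | _, 0 => []
  | x, n + 1 => dig β x :: pre β (Tbeta β x) n
/-- cylinder -/
def cyl (β : ℝ) (v : List Bool) : Set ℝ := {x | x ∈ Set.Ico (0:ℝ) 1 ∧ pre β x v.length = v}
/-- partial sums -/
noncomputable def SS (β : ℝ) : ℕ → ℝ
  | 0 => 0
  | j + 1 => (1 + SS β j) / β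
/-- context -/
structure Ctx (β : ℝ) (m : ℕ) : Prop where
  h1 : 1 < β
  h2 : β < 2
  hm : 1 ≤ m
  hS : SS β (m + 1) = 1
/-- admissible word -/
def IsOk (m : ℕ) (v : List Bool) : Prop := ¬ List.replicate (m + 1) true <:+: v


lemma Ctx.pos (h : Ctx β m) : 0 < β := by linarith [h.h1]

lemma bt_true : bt true = 1 := by simp [bt]
lemma bt_false : bt false = 0 := by simp [bt]
lemma bt_nonneg (d : Bool) : 0 ≤ bt d := by cases d <;> simp [bt]
lemma bt_le (d : Bool) : bt d ≤ 1 := by cases d <;> simp [bt]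

lemma T_mem (x : ℝ) : Tbeta β x ∈ Ico (0:ℝ) 1 := ⟨Int.fract_nonneg _, Int.fract_lt_one _⟩

lemma iter_mem {x : ℝ} (hx : x ∈ Ico (0:ℝ) 1) (n : ℕ) : (Tbeta β)^[n] x ∈ Ico (0:ℝ) 1 := by
  cases n with
  | zero => simpa using hx
  | succ n => rw [Function.iterate_succ_apply']; exact T_mem _

lemma iter_add (x : ℝ) (n k : ℕ) : (Tbeta β)^[n + k] x = (Tbeta β)^[k] ((Tbeta β)^[n] x) := by
  rw [add_comm, Function.iterate_add_apply]

lemma T_eq (h : Ctx β m) {x : ℝ} (hx : x ∈ Ico (0:ℝ) 1) : Tbeta β x = β * x - bt (dig β x) := by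
  have h0 := h.pos
  have h2 := h.h2
  have hb : 0 ≤ β * x := mul_nonneg h0.le hx.1
  have hb2 : β * x < 2 := by nlinarith [hx.1, hx.2]
  unfold Tbeta
  by_cases h1 : 1 ≤ β * x
  · have : ⌊β * x⌋ = 1 := by
      rw [Int.floor_eq_iff]; push_cast; constructor <;> linarith
    simp only [Int.fract, this, dig, h1, decide_true, bt_true]; norm_num
  · have : ⌊β * x⌋ = 0 := by
      rw [Int.floor_eq_iff]; push_cast; constructor <;> linarith
    simp only [Int.fract, this, dig, h1, decide_false, bt_false]; norm_num

@[simp] lemma pre_length (x : ℝ) (n : ℕ) : (pre β x n).length = n := by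
  induction n generalizing x with
  | zero => rfl
  | succ n ih => simp [pre, ih]

lemma pre_zero (x : ℝ) : pre β x 0 = [] := rfl

lemma fw_nil (x : ℝ) : fw β [] x = x := rfl
lemma fw_cons (d : Bool) (v) (x : ℝ) : fw β (d :: v) x = (bt d + fw β v x) / β := rfl

lemma fw_append (u v : List Bool) (x : ℝ) : fw β (u ++ v) x = fw β u (fw β v x) := by
  induction u with
  | nil => rfl
  | cons d u ih => simp [fw_cons, ih]

lemma fw_pre (h : Ctx β m) {x : ℝ} (hx : x ∈ Ico (0:ℝ) 1) (n : ℕ) :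
    fw β (pre β x n) ((Tbeta β)^[n] x) = x := by
  induction n generalizing x with
  | zero => rfl
  | succ n ih =>
    simp only [pre, fw_cons, Function.iterate_succ_apply]
    rw [ih (T_mem x), T_eq h hx]
    have := h.pos
    field_simp
    ring

lemma pre_add (x : ℝ) (n k : ℕ) :
    pre β x (n + k) = pre β x n ++ pre β ((Tbeta β)^[n] x) k := by
  induction n generalizing x with
  | zero => simp [pre]
  | succ n ih =>
    rw [Nat.add_right_comm]
    simp [pre, ih]

lemma pre_take (x : ℝ) {k n : ℕ} (hk : k ≤ n) : (pre β x n).take k = pre β x k := by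
  obtain ⟨j, rfl⟩ := Nat.exists_eq_add_of_le hk
  rw [pre_add]
  rw [List.take_append_of_le_length (by simp)]
  rw [List.take_of_length_le (by simp)]

lemma pre_drop (x : ℝ) {k n : ℕ} (hk : k ≤ n) :
    (pre β x n).drop k = pre β ((Tbeta β)^[k] x) (n - k) := by
  obtain ⟨j, rfl⟩ := Nat.exists_eq_add_of_le hk
  rw [pre_add, List.drop_append_of_le_length (by simp)]
  rw [List.drop_of_length_le (by simp)]
  simp

lemma pre_prefix (x : ℝ) {k n : ℕ} (hk : k ≤ n) : pre β x k <+: pre β x n := by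
  rw [← pre_take x hk]; exact List.take_prefix _ _

lemma mem_cyl_iff_prefix {x : ℝ} {v : List Bool} {n : ℕ} (hx : x ∈ Ico (0:ℝ) 1)
    (hn : v.length ≤ n) : x ∈ cyl β v ↔ v <+: pre β x n := by
  constructor
  · intro hv; rw [← hv.2]; exact pre_prefix _ hn
  · intro hv
    refine ⟨hx, ?_⟩
    rw [List.prefix_iff_eq_take, pre_take x hn] at hv
    exact hv.symm

lemma mem_cyl_append {x : ℝ} {u v : List Bool} :
    x ∈ cyl β (u ++ v) ↔ x ∈ cyl β u ∧ (Tbeta β)^[u.length] x ∈ cyl β v := by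
  constructor
  · rintro ⟨hx, he⟩
    rw [List.length_append, pre_add] at he
    have := List.append_inj he (by simp)
    exact ⟨⟨hx, this.1⟩, iter_mem hx _, this.2⟩
  · rintro ⟨⟨hx, he⟩, -, he'⟩
    refine ⟨hx, ?_⟩
    rw [List.length_append, pre_add, he, he']

lemma cyl_mono {u v : List Bool} (huv : u <+: v) : cyl β v ⊆ cyl β u := by
  obtain ⟨w, rfl⟩ := huv
  intro x hx
  exact (mem_cyl_append.1 hx).1

lemma mem_cyl_pre {x : ℝ} (hx : x ∈ Ico (0:ℝ) 1) (n : ℕ) : x ∈ cyl β (pre β x n) :=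
  ⟨hx, by simp⟩

lemma cyl_comparable {x : ℝ} {u v : List Bool} (hu : x ∈ cyl β u) (hv : x ∈ cyl β v) :
    u <+: v ∨ v <+: u := by
  rw [← hu.2, ← hv.2]
  rcases le_total u.length v.length with h | h
  · left; exact pre_prefix _ h
  · right; exact pre_prefix _ h

lemma cyl_prefix {x : ℝ} {u v : List Bool} (hu : x ∈ cyl β u) (hv : x ∈ cyl β v)
    (h : u.length ≤ v.length) : u <+: v := by
  rw [← hu.2, ← hv.2]; exact pre_prefix _ h

lemma fw_eq (h : Ctx β m) (v : List Bool) (x : ℝ) : fw β v x = val β v + x / β ^ v.length := by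
  induction v with
  | nil => simp [fw_nil, val]
  | cons d v ih =>
    have := h.pos
    simp only [val, fw_cons, List.length_cons] at ih ⊢
    rw [ih]; field_simp; ring

lemma fw_sub (h : Ctx β m) (v : List Bool) (x y : ℝ) :
    fw β v x - fw β v y = (x - y) / β ^ v.length := by
  rw [fw_eq h, fw_eq h v y]; ring

lemma fw_lt (h : Ctx β m) (v : List Bool) {x y : ℝ} : fw β v x < fw β v y ↔ x < y := by
  have := h.pos
  rw [← sub_neg, fw_sub h, div_neg_iff]
  have h1 : 0 < β ^ v.length := by positivity
  constructor
  · rintro (h | h) <;> linarith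
  · intro h; right; constructor <;> linarith

lemma fw_le (h : Ctx β m) (v : List Bool) {x y : ℝ} : fw β v x ≤ fw β v y ↔ x ≤ y := by
  rw [← not_lt, fw_lt h, not_lt]

lemma val_append (u v : List Bool) : val β (u ++ v) = fw β u (val β v) := fw_append u v 0

lemma val_nonneg (h : Ctx β m) (v : List Bool) : 0 ≤ val β v := by
  induction v with
  | nil => simp [val, fw_nil]
  | cons d v ih =>
    have := h.pos
    have h2 := bt_nonneg d
    simp only [val, fw_cons] at ih ⊢
    positivity

lemma fw_cyl (h : Ctx β m) {v : List Bool} {x : ℝ} (hx : x ∈ cyl β v) :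
    fw β v ((Tbeta β)^[v.length] x) = x := by
  conv_lhs => rw [← hx.2]
  rw [pre_length]
  exact fw_pre h hx.1 _

lemma cyl_lower (h : Ctx β m) {v : List Bool} {x : ℝ} (hx : x ∈ cyl β v) : val β v ≤ x := by
  rw [← fw_cyl h hx]
  exact (fw_le h v).2 (iter_mem hx.1 _).1

lemma cyl_upper (h : Ctx β m) {v : List Bool} {x : ℝ} (hx : x ∈ cyl β v) :
    x < val β v + 1 / β ^ v.length := by
  rw [← fw_eq h v 1]
  have h2 := fw_cyl h hx
  have := (fw_lt h v).2 (iter_mem (β := β) hx.1 v.length).2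
  linarith

lemma val_append_ge (h : Ctx β m) (u v : List Bool) : val β u ≤ val β (u ++ v) := by
  rw [val_append]; exact (fw_le h u).2 (val_nonneg h v)

lemma SS_val (j : ℕ) : SS β j = val β (List.replicate j true) := by
  induction j with
  | zero => rfl
  | succ j ih =>
    simp only [SS, ih, List.replicate_succ, val, fw_cons, bt_true]

lemma SS_le_of_pre (h : Ctx β m) {x : ℝ} (hx : x ∈ Ico (0:ℝ) 1) {j : ℕ}
    (hp : pre β x j = List.replicate j true) : SS β j ≤ x := by
  rw [SS_val, ← hp]
  exact cyl_lower h (mem_cyl_pre hx j)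

lemma SS_nonneg (h : Ctx β m) (j : ℕ) : 0 ≤ SS β j := by
  rw [SS_val]; exact val_nonneg h _

lemma pre_of_SS_le (h : Ctx β m) {x : ℝ} (hx : x ∈ Ico (0:ℝ) 1) {j : ℕ}
    (hp : SS β j ≤ x) : pre β x j = List.replicate j true := by
  induction j generalizing x with
  | zero => rfl
  | succ j ih =>
    have h0 := h.pos
    have hj := SS_nonneg h j
    have h1 : 1 + SS β j ≤ β * x := by
      simp only [SS] at hp
      rw [div_le_iff₀ h0] at hp; linarith
    have hd : dig β x = true := by simp [dig]; linarith
    have hT := T_eq h hx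
    rw [hd, bt_true] at hT
    simp only [pre, hd, List.replicate_succ]
    rw [ih (T_mem x) (by rw [hT]; linarith)]

lemma IsOk.infix {u v : List Bool} (hv : IsOk m v) (h : u <:+: v) : IsOk m u :=
  fun h2 => hv (h2.trans h)
lemma IsOk.left {u v : List Bool} (hv : IsOk m (u ++ v)) : IsOk m u :=
  hv.infix (List.infix_append_of_infix_left List.infix_rfl)
lemma IsOk.right {u v : List Bool} (hv : IsOk m (u ++ v)) : IsOk m v :=
  hv.infix (List.infix_append_of_infix_right List.infix_rfl)
lemma IsOk.prefix {u v : List Bool} (hv : IsOk m v) (h : u <+: v) : IsOk m u :=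
  hv.infix h.isInfix
lemma IsOk.suffix {u v : List Bool} (hv : IsOk m v) (h : u <:+ v) : IsOk m u :=
  hv.infix h.isInfix

lemma isOk_pre (h : Ctx β m) {x : ℝ} (hx : x ∈ Ico (0:ℝ) 1) (n : ℕ) : IsOk m (pre β x n) := by
  rintro ⟨a, b, hab⟩
  have hlen := congrArg List.length hab
  simp at hlen
  have h1 : x ∈ cyl β (a ++ List.replicate (m+1) true) := by
    rw [mem_cyl_iff_prefix hx (n := n) (by simp; omega), ← hab]
    exact List.prefix_append _ _
  have h2 := (mem_cyl_append.1 h1).2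
  have h3 := SS_le_of_pre h h2.1 (j := m+1) (by simpa using h2.2)
  rw [h.hS] at h3
  linarith [h2.1.2]

lemma cyl_isOk (h : Ctx β m) {x : ℝ} {v : List Bool} (hx : x ∈ cyl β v) : IsOk m v := by
  rw [← hx.2]; exact isOk_pre h hx.1 _

lemma SS_m (h : Ctx β m) : SS β m = β - 1 := by
  have := h.hS
  have h0 := h.pos
  simp only [SS] at this
  rw [div_eq_one_iff_eq h0.ne'] at this
  linarith

lemma fw_mem (h : Ctx β m) {x : ℝ} (hx : x ∈ Ico (0:ℝ) 1) {v : List Bool}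
    (hv : IsOk m (v ++ pre β x m)) :
    fw β v x ∈ cyl β v ∧ (Tbeta β)^[v.length] (fw β v x) = x := by
  induction v with
  | nil => exact ⟨⟨hx, rfl⟩, rfl⟩
  | cons d v ih =>
    have h0 := h.pos
    have h1 := h.h1
    obtain ⟨⟨hy, hp⟩, hi⟩ := ih (hv.suffix (by simp))
    set y := fw β v x with hydef
    have hyd : fw β (d :: v) x = (bt d + y) / β := by rw [fw_cons]
    have hby : β * ((bt d + y) / β) = bt d + y := by field_simp
    have hmem : (bt d + y) / β ∈ Ico (0:ℝ) 1 := by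
      have := bt_nonneg d
      refine ⟨div_nonneg (by linarith [hy.1]) h0.le, ?_⟩
      rw [div_lt_one h0]
      cases d
      · rw [bt_false]; linarith [hy.2]
      · rw [bt_true]
        by_contra hcon
        have h3 : SS β m ≤ y := by rw [SS_m h]; linarith
        have h4 := pre_of_SS_le h hy h3
        apply hv
        have h5 : pre β y (v.length + m) = v ++ pre β x m := by rw [pre_add, hp, hi]
        have h6 : List.replicate m true <+: v ++ pre β x m := by
          rw [← h4, ← h5]; exact pre_prefix _ (by omega)
        rw [List.replicate_succ, List.cons_append]
        exact (List.prefix_cons_inj true |>.2 h6).isInfix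
    have hdig : dig β ((bt d + y) / β) = d := by
      unfold dig; rw [hby]
      cases d
      · simp [bt_false, hy.2]
      · simp [bt_true, hy.1]
    have hT : Tbeta β ((bt d + y) / β) = y := by
      rw [T_eq h hmem, hdig, hby]; ring
    rw [hyd]
    refine ⟨⟨hmem, ?_⟩, ?_⟩
    · simp only [List.length_cons, pre, hdig, hT, hp]
    · simp only [List.length_cons, Function.iterate_succ_apply, hT, hi]

lemma isOk_overlap {u W z : List Bool} (h1 : IsOk m (u ++ W)) (h2 : IsOk m (W ++ z))
    (hW : m ≤ W.length) : IsOk m (u ++ (W ++ z)) := by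
  rintro ⟨a, b, hab⟩
  rcases le_or_gt (a.length + (m + 1)) (u.length + W.length) with hl | hl
  · apply h1
    have : a ++ List.replicate (m+1) true <+: u ++ W := by
      apply List.prefix_of_prefix_length_le (l₃ := u ++ (W ++ z))
      · rw [← hab]; exact List.prefix_append _ _
      · rw [← List.append_assoc]; exact List.prefix_append _ _
      · simp; omega
    exact (List.suffix_append _ _).isInfix.trans this.isInfix
  · apply h2
    have : List.replicate (m+1) true ++ b <:+ W ++ z := by
      apply List.suffix_of_suffix_length_le (l₃ := u ++ (W ++ z))
      · rw [← hab, List.append_assoc]; exact List.suffix_append _ _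
      · exact List.suffix_append _ _
      · have := congrArg List.length hab
        simp at this ⊢; omega
    exact (List.prefix_append _ _).isInfix.trans this.isInfix

lemma isOk_cat {u W v : List Bool} (h1 : IsOk m (u ++ W)) (h2 : IsOk m v) (hWv : W <+: v)
    (hW : m ≤ W.length) : IsOk m (u ++ v) := by
  obtain ⟨z, rfl⟩ := hWv
  exact isOk_overlap h1 h2 hW

lemma zero_iter (n : ℕ) : (Tbeta β)^[n] 0 = 0 := by
  induction n with
  | zero => rfl
  | succ n ih => rw [Function.iterate_succ_apply', ih]; simp [Tbeta]

lemma pre_zero_pt (n : ℕ) : pre β 0 n = List.replicate n false := by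
  induction n with
  | zero => rfl
  | succ n ih =>
    have : Tbeta β 0 = 0 := by simp [Tbeta]
    simp [pre, this, ih, List.replicate_succ, dig]

lemma isOk_append_zeros {v : List Bool} (hv : IsOk m v) (n : ℕ) :
    IsOk m (v ++ List.replicate n false) := by
  rintro ⟨a, b, hab⟩
  have hlen := congrArg List.length hab
  simp at hlen
  rcases le_or_gt (a.length + (m + 1)) v.length with hl | hl
  · apply hv
    have : a ++ List.replicate (m+1) true <+: v := by
      apply List.prefix_of_prefix_length_le (l₃ := v ++ List.replicate n false)
      · rw [← hab]; exact List.prefix_append _ _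
      · exact List.prefix_append _ _
      · simp; omega
    exact (List.suffix_append _ _).isInfix.trans this.isInfix
  · have h1 : (a ++ List.replicate (m+1) true ++ b)[a.length + m]? = some true := by
      rw [List.append_assoc, List.getElem?_append_right (by omega), List.getElem?_append_left (by simp)]
      simp
    rw [hab, List.getElem?_append_right (by omega), List.getElem?_replicate] at h1
    split_ifs at h1 ; simp at h1

lemma val_mem_cyl (h : Ctx β m) {v : List Bool} (hv : IsOk m v) : val β v ∈ cyl β v := by
  apply (fw_mem h (x := 0) (by simp) _).1
  rw [pre_zero_pt]; exact isOk_append_zeros hv m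

lemma fw_mem_cyl (h : Ctx β m) {v W : List Bool} (hv : IsOk m (v ++ W)) (hW : m ≤ W.length)
    {x : ℝ} (hx : x ∈ cyl β W) :
    fw β v x ∈ cyl β (v ++ W) ∧ (Tbeta β)^[v.length] (fw β v x) = x := by
  have : pre β x m <+: W := by rw [← hx.2]; exact pre_prefix _ hW
  obtain ⟨z, hz⟩ := this
  have h1 : IsOk m (v ++ pre β x m) := by
    rw [← hz, ← List.append_assoc] at hv; exact hv.left
  have := fw_mem h hx.1 h1
  exact ⟨mem_cyl_append.2 ⟨this.1, by rw [this.2]; exact hx⟩, this.2⟩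

-- Order facts
lemma pre_le_order (h : Ctx β m) {x y : ℝ} (hx : x ∈ Ico (0:ℝ) 1) (hy : y ∈ Ico (0:ℝ) 1)
    {n : ℕ} (hne : pre β x n ≠ pre β y n) (hxy : x < y) {x' y' : ℝ}
    (hx' : x' ∈ cyl β (pre β x n)) (hy' : y' ∈ cyl β (pre β y n)) : x' < y' := by
  induction n generalizing x y x' y' with
  | zero => exact absurd rfl hne
  | succ n ih =>
    have h0 := h.pos
    have hx2 := hx'.2
    have hy2 := hy'.2
    simp only [pre, pre_length, List.length_cons, List.cons.injEq] at hx2 hy2 hne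
    have Tx := T_eq h hx
    have Ty := T_eq h hy
    have Tx' := T_eq h hx'.1
    have Ty' := T_eq h hy'.1
    by_cases hd : dig β x = dig β y
    · have := ih (T_mem x) (T_mem y) (fun hh => hne (by rw [hd, hh]))
        (by rw [Tx, Ty, hd]; nlinarith) (x' := Tbeta β x') (y' := Tbeta β y')
        ⟨T_mem _, by simpa using hx2.2⟩ ⟨T_mem _, by simpa using hy2.2⟩
      rw [Tx', Ty', hx2.1, hy2.1, hd] at this
      nlinarith
    · by_cases h1 : 1 ≤ β * x
      · have h2 : 1 ≤ β * y := by nlinarith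
        exact absurd (by simp [dig, h1, h2]) hd
      · have h2 : 1 ≤ β * y := by
          by_contra h2; exact hd (by simp [dig, h1, h2])
        have h3 : dig β x' = false := by rw [hx2.1]; simp [dig]; linarith
        have h4 : dig β y' = true := by rw [hy2.1]; simp [dig]; linarith
        simp [dig] at h3 h4
        nlinarith

lemma ord_cyl (h : Ctx β m) {u v : List Bool} (h1 : ¬ u <+: v) (h2 : ¬ v <+: u) {x y x' y' : ℝ}
    (hx : x ∈ cyl β u) (hy : y ∈ cyl β v) (hxy : x < y) (hx' : x' ∈ cyl β u) (hy' : y' ∈ cyl β v) :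
    x' < y' := by
  set n := min u.length v.length
  have hxu : pre β x n <+: u := by
    rw [← hx.2]; exact pre_prefix _ (min_le_left _ _)
  have hyv : pre β y n <+: v := by
    rw [← hy.2]; exact pre_prefix _ (min_le_right _ _)
  refine pre_le_order h hx.1 hy.1 (n := n) ?_ hxy (cyl_mono hxu hx') (cyl_mono hyv hy')
  intro he
  rcases le_total u.length v.length with hl | hl
  · apply h1
    have : n = u.length := min_eq_left hl
    rw [this, hx.2] at he
    rw [he, ← hy.2]; exact pre_prefix _ hl
  · apply h2
    have : n = v.length := min_eq_right hl
    rw [this, hy.2] at he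
    rw [← he, ← hx.2]; exact pre_prefix _ hl

lemma cyl_convex (h : Ctx β m) {v : List Bool} {x y z : ℝ} (hx : x ∈ cyl β v) (hy : y ∈ cyl β v)
    (hxz : x ≤ z) (hzy : z ≤ y) : z ∈ cyl β v := by
  have hz : z ∈ Ico (0:ℝ) 1 := ⟨hx.1.1.trans hxz, hzy.trans_lt hy.1.2⟩
  refine ⟨hz, ?_⟩
  by_contra hne
  have hlt : z < y := lt_of_le_of_ne hzy (by rintro rfl; exact hne hy.2)
  have := pre_le_order h hz hy.1 (n := v.length) (by rw [hy.2]; exact hne) hlt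
    (mem_cyl_pre hz _) (by rw [hy.2]; exact hx)
  linarith

lemma above_cyl (h : Ctx β m) {v : List Bool} {t z : ℝ} (ht : t ∈ cyl β v) (htz : t ≤ z)
    (hz : z ∈ Ico (0:ℝ) 1) (hzv : z ∉ cyl β v) {n : ℕ} (hn : v.length ≤ n) {z' x : ℝ}
    (hz' : z' ∈ cyl β (pre β z n)) (hx : x ∈ cyl β v) : x < z' := by
  have hlt : t < z := lt_of_le_of_ne htz (by rintro rfl; exact hzv ht)
  refine pre_le_order h ht.1 hz (n := v.length) ?_ hlt (by rw [ht.2]; exact hx)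
    (cyl_mono (pre_prefix z hn) hz')
  rw [ht.2]; exact fun h => hzv ⟨hz, h.symm⟩



/-- weight of a letter -/
noncomputable def qq (β : ℝ) (s : ℝ≥0) : ℝ≥0∞ := ENNReal.ofReal (β ^ (-(s:ℝ)))
/-- weight of a word -/
noncomputable def wt (β : ℝ) (s : ℝ≥0) (u : List Bool) : ℝ≥0∞ := qq β s ^ u.length
/-- weight of a set of words -/
noncomputable def ws (β : ℝ) (s : ℝ≥0) (A : Set (List Bool)) : ℝ≥0∞ := ∑' u : A, wt β s u

lemma qq_ne_top (s : ℝ≥0) : qq β s ≠ ⊤ := ENNReal.ofReal_ne_top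
lemma qq_pos (h : Ctx β m) (s : ℝ≥0) : 0 < qq β s := by
  have := h.pos
  unfold qq; rw [ENNReal.ofReal_pos]; positivity
lemma qq_le_one (h : Ctx β m) (s : ℝ≥0) : qq β s ≤ 1 := by
  unfold qq; rw [ENNReal.ofReal_le_one]
  exact Real.rpow_le_one_of_one_le_of_nonpos h.h1.le (by simp)
lemma qq_lt_one (h : Ctx β m) {s : ℝ≥0} (hs : 0 < s) : qq β s < 1 := by
  unfold qq; rw [ENNReal.ofReal_lt_one]
  exact Real.rpow_lt_one_of_one_lt_of_neg h.h1 (by simpa using hs)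
lemma qq_anti (h : Ctx β m) {s s' : ℝ≥0} (hs : s ≤ s') : qq β s' ≤ qq β s := by
  unfold qq
  apply ENNReal.ofReal_le_ofReal
  exact Real.rpow_le_rpow_of_exponent_le h.h1.le (by simpa using hs)
lemma qq_add (h : Ctx β m) (s s' : ℝ≥0) : qq β (s + s') = qq β s * qq β s' := by
  unfold qq
  rw [← ENNReal.ofReal_mul (by have := h.pos; positivity), ← Real.rpow_add h.pos]
  congr 2; push_cast; ring

lemma wt_nil (s : ℝ≥0) : wt β s [] = 1 := by simp [wt]
lemma wt_append (s : ℝ≥0) (u v) : wt β s (u ++ v) = wt β s u * wt β s v := by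
  simp [wt, pow_add]
lemma wt_ne_top (s : ℝ≥0) (u) : wt β s u ≠ ⊤ := ENNReal.pow_ne_top (qq_ne_top s)
lemma wt_pos (h : Ctx β m) (s : ℝ≥0) (u) : 0 < wt β s u := by
  have := qq_pos h s
  unfold wt; positivity
lemma wt_le_one (h : Ctx β m) (s : ℝ≥0) (u) : wt β s u ≤ 1 := pow_le_one₀ (by simp) (qq_le_one h s)
lemma wt_anti (h : Ctx β m) {s s' : ℝ≥0} (hs : s ≤ s') (u) : wt β s' u ≤ wt β s u :=
  pow_le_pow_left₀ (by simp) (qq_anti h hs) _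

lemma wt_flatten (s : ℝ≥0) (l : List (List Bool)) : wt β s l.flatten = (l.map (wt β s)).prod := by
  induction l with
  | nil => simp [wt_nil]
  | cons a l ih => simp [wt_append, ih]

lemma qq_pow (h : Ctx β m) (s : ℝ≥0) (n : ℕ) :
    qq β s ^ n = (ENNReal.ofReal (1 / β ^ n)) ^ (s : ℝ) := by
  have := h.pos
  unfold qq
  rw [ENNReal.ofReal_rpow_of_pos (by positivity), ← ENNReal.ofReal_pow (by positivity)]
  congr 1
  rw [← Real.rpow_mul_natCast this.le, one_div, ← Real.rpow_natCast β n, ← Real.rpow_neg this.le,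
    ← Real.rpow_mul this.le]
  ring_nf

lemma ws_mono (s : ℝ≥0) {A B : Set (List Bool)} (h : A ⊆ B) : ws β s A ≤ ws β s B :=
  ENNReal.tsum_mono_subtype _ h
lemma ws_union (s : ℝ≥0) (A B : Set (List Bool)) : ws β s (A ∪ B) ≤ ws β s A + ws β s B :=
  ENNReal.tsum_union_le _ _ _
lemma ws_iUnion {ι : Type*} (s : ℝ≥0) (A : ι → Set (List Bool)) :
    ws β s (⋃ i, A i) ≤ ∑' i, ws β s (A i) :=
  ENNReal.tsum_iUnion_le_tsum _ _
lemma ws_anti (h : Ctx β m) {s s' : ℝ≥0} (hs : s ≤ s') (A) : ws β s' A ≤ ws β s A :=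
  ENNReal.tsum_le_tsum fun u => wt_anti h hs u
lemma ws_image_append (s : ℝ≥0) (e : List Bool) (A : Set (List Bool)) :
    ws β s ((fun u => e ++ u) '' A) = wt β s e * ws β s A := by
  unfold ws
  rw [tsum_image (f := wt β s) (g := fun u => e ++ u) (fun x _ y _ hxy => by simpa using hxy),
    ← ENNReal.tsum_mul_left]
  exact tsum_congr fun u => wt_append _ _ _
lemma ws_image_append_right (s : ℝ≥0) (e : List Bool) (A : Set (List Bool)) :
    ws β s ((fun u => u ++ e) '' A) = ws β s A * wt β s e := by
  unfold ws
  rw [tsum_image (f := wt β s) (g := fun u => u ++ e) (fun x _ y _ hxy => by simpa using hxy),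
    ← ENNReal.tsum_mul_right]
  exact tsum_congr fun u => wt_append _ _ _
lemma ws_finite (s : ℝ≥0) {A : Set (List Bool)} (hA : A.Finite) : ws β s A ≠ ⊤ := by
  have := hA.fintype
  unfold ws
  rw [tsum_fintype]
  exact (ENNReal.sum_lt_top.2 fun u _ => (wt_ne_top s u.1).lt_top).ne
lemma ws_singleton (s : ℝ≥0) (u) : ws β s {u} = wt β s u := by
  unfold ws; simp

/-- a finite subfamily carries more than `b` -/
lemma ws_exists_finset {s : ℝ≥0} {A : Set (List Bool)} {b : ℝ≥0∞} (hb : b < ws β s A) :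
    ∃ F : Finset (List Bool), (↑F : Set _) ⊆ A ∧ b < ws β s ↑F := by
  classical
  unfold ws at hb
  rw [ENNReal.tsum_eq_iSup_sum, lt_iSup_iff] at hb
  obtain ⟨G, hG⟩ := hb
  refine ⟨G.map ⟨Subtype.val, Subtype.val_injective⟩, ?_, ?_⟩
  · intro x hx; simp at hx; exact hx.1
  · unfold ws
    rw [Finset.tsum_subtype' (G.map ⟨Subtype.val, Subtype.val_injective⟩) (wt β s)]
    simpa using hG

lemma tsum_list_len {ι : Type*} (f : ι → ℝ≥0∞) (k : ℕ) :
    ∑' l : {l : List ι // l.length = k}, (l.1.map f).prod = (∑' i, f i) ^ k := by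
  induction k with
  | zero =>
    rw [tsum_eq_single ⟨[], rfl⟩]
    · simp
    · rintro ⟨l, hl⟩ hne
      exact absurd (Subtype.ext (List.length_eq_zero_iff.1 hl)) hne
  | succ k ih =>
    let e : ι × {l : List ι // l.length = k} ≃ {l : List ι // l.length = k + 1} :=
      { toFun := fun p => ⟨p.1 :: p.2.1, by simp [p.2.2]⟩
        invFun := fun l => (l.1.head (by intro h; have := l.2; simp [h] at this),
          ⟨l.1.tail, by simp [l.2]⟩)
        left_inv := fun p => by simp
        right_inv := fun l => by simp }
    rw [← e.tsum_eq]
    simp only [e, Equiv.coe_fn_mk, List.map_cons, List.prod_cons]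
    rw [ENNReal.tsum_prod (f := fun (a : ι) (b : {l : List ι // l.length = k}) =>
      f a * (b.1.map f).prod)]
    simp_rw [ENNReal.tsum_mul_left, ih]
    rw [ENNReal.tsum_mul_right, pow_succ, mul_comm]

lemma tsum_list {ι : Type*} (f : ι → ℝ≥0∞) :
    ∑' l : List ι, (l.map f).prod = ∑' k : ℕ, (∑' i, f i) ^ k := by
  rw [← (Equiv.sigmaFiberEquiv (List.length (α := ι))).tsum_eq, ENNReal.tsum_sigma']
  refine tsum_congr fun k => ?_
  rw [← tsum_list_len f k]
  rfl

lemma cyl_diam (h : Ctx β m) (v : List Bool) :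
    Metric.ediam (cyl β v) ≤ ENNReal.ofReal (1 / β ^ v.length) := by
  have : cyl β v ⊆ Icc (val β v) (val β v + 1 / β ^ v.length) := fun x hx =>
    ⟨cyl_lower h hx, (cyl_upper h hx).le⟩
  refine (Metric.ediam_mono this).trans ?_
  rw [Real.ediam_Icc]; simp

lemma cyl_diam_rpow (h : Ctx β m) (s : ℝ≥0) (v : List Bool) :
    Metric.ediam (cyl β v) ^ (s:ℝ) ≤ wt β s v := by
  unfold wt
  rw [qq_pow h]
  exact ENNReal.rpow_le_rpow (cyl_diam h v) (by simp)

lemma L1 (h : Ctx β m) {X : Set ℝ} (hX : X ⊆ Ico (0:ℝ) 1) {R : Set (List Bool)} {s : ℝ≥0}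
    (hR : ∀ x ∈ X, ∃ c ∈ R, x ∈ cyl β c ∧ (Tbeta β)^[c.length] x ∈ X)
    (hs : ws β s R < 1) : dimH X ≤ s := by
  have hne : ∀ c ∈ R, c ≠ [] := by
    rintro c hc rfl
    have : ws β s {[]} ≤ ws β s R := ws_mono s (by simpa using hc)
    rw [ws_singleton, wt_nil] at this
    exact absurd hs (not_lt.2 this)
  let wd : List R → List Bool := fun l => (l.map Subtype.val).flatten
  have hwd : ∀ l, l.length ≤ (wd l).length := by
    intro l
    induction l with
    | nil => simp
    | cons a l ih =>
      have : 1 ≤ a.1.length := List.length_pos_iff.2 (hne a.1 a.2)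
      simp only [wd, List.map_cons, List.flatten_cons, List.length_append, List.length_cons] at ih ⊢
      omega
  have hcov : ∀ k, ∀ x ∈ X, ∃ l : List R, l.length = k ∧ x ∈ cyl β (wd l) := by
    intro k
    induction k with
    | zero => intro x hx; exact ⟨[], rfl, hX hx, rfl⟩
    | succ k ih =>
      intro x hx
      obtain ⟨c, hc, hxc, hT⟩ := hR x hx
      obtain ⟨l, hl, hl2⟩ := ih _ hT
      refine ⟨⟨c, hc⟩ :: l, by simp [hl], ?_⟩
      simp only [wd, List.map_cons, List.flatten_cons]
      exact mem_cyl_append.2 ⟨hxc, hl2⟩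
  have hβ : 1 / β < 1 := by rw [div_lt_one h.pos]; exact h.h1
  have hβ0 : 0 ≤ 1 / β := by have := h.pos; positivity
  have key : Measure.hausdorffMeasure (s:ℝ) X ≤
      liminf (fun k : ℕ => ∑' l : {l : List R // l.length = k},
        Metric.ediam (cyl β (wd l.1)) ^ (s:ℝ)) atTop := by
    refine Measure.hausdorffMeasure_le_liminf_tsum (ι := fun k : ℕ => {l : List R // l.length = k}) (s:ℝ) X
      (fun k => ENNReal.ofReal ((1 / β) ^ k)) ?_ (fun k l => cyl β (wd l.1)) ?_ ?_
    · rw [← ENNReal.ofReal_zero]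
      exact (ENNReal.continuous_ofReal.tendsto _).comp
        (tendsto_pow_atTop_nhds_zero_of_lt_one hβ0 hβ)
    · refine Eventually.of_forall fun k l => (cyl_diam h _).trans (ENNReal.ofReal_le_ofReal ?_)
      rw [← one_div_pow]
      refine pow_le_pow_of_le_one hβ0 hβ.le ?_
      have := hwd l.1; rw [l.2] at this; exact this
    · refine Eventually.of_forall fun k x hx => ?_
      obtain ⟨l, hl, hl2⟩ := hcov k x hx
      exact mem_iUnion.2 ⟨⟨l, hl⟩, hl2⟩
  have h2 : ∀ k : ℕ, ∑' l : {l : List R // l.length = k},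
        Metric.ediam (cyl β (wd l.1)) ^ (s:ℝ) ≤ (ws β s R) ^ k := by
    intro k
    unfold ws
    rw [← tsum_list_len]
    refine ENNReal.tsum_le_tsum fun l => (cyl_diam_rpow h s _).trans ?_
    rw [wt_flatten, List.map_map]; rfl
  have h3 : Measure.hausdorffMeasure (s:ℝ) X ≤ 0 := by
    refine key.trans ?_
    have h4 := (ENNReal.tendsto_pow_atTop_nhds_zero_of_lt_one hs).liminf_eq
    rw [← h4]
    exact liminf_le_liminf (Eventually.of_forall h2)
  apply dimH_le_of_hausdorffMeasure_ne_top
  rw [nonpos_iff_eq_zero] at h3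
  rw [h3]; simp



/-- local condition on words -/
def PP (β : ℝ) (m : ℕ) (τ : ℝ) (Q : List Bool → Prop) (v : List Bool) : Prop :=
  ¬ List.replicate (m + 1) true <+: v ∧ τ ≤ fw β v (1 / (β - 1)) ∧ Q v
/-- language -/
def Lang (β : ℝ) (m : ℕ) (τ : ℝ) (Q : List Bool → Prop) : Set (List Bool) :=
  {u | ∀ v, v <:+ u → PP β m τ Q v}
/-- restricted survivor set -/
def KQ (β τ : ℝ) (Q : List Bool → Prop) : Set ℝ :=
  {x | x ∈ Kset β τ ∧ ∀ n k, Q (pre β ((Tbeta β)^[n] x) k)}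
/-- prefix closed -/
def PrefClosed (Q : List Bool → Prop) : Prop := ∀ u v, u <+: v → Q v → Q u

lemma Ctx.Cpos (h : Ctx β m) : 0 < 1 / (β - 1) := by
  have := h.h1
  apply one_div_pos.2; linarith

lemma fw_C_le (h : Ctx β m) (z : List Bool) : fw β z (1 / (β - 1)) ≤ 1 / (β - 1) := by
  induction z with
  | nil => rfl
  | cons d z ih =>
    have h1 := h.h1
    have h0 := h.pos
    have hd := bt_le d
    rw [fw_cons, div_le_iff₀ h0]
    have : 1 / (β - 1) * β = 1 + 1 / (β - 1) := by
      have : β - 1 ≠ 0 := by linarith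
      field_simp; ring
    linarith

lemma PP_prefix (h : Ctx β m) {τ : ℝ} {Q : List Bool → Prop} (hQ : PrefClosed Q)
    {u v : List Bool} (huv : u <+: v) (hv : PP β m τ Q v) : PP β m τ Q u := by
  refine ⟨fun h2 => hv.1 (h2.trans huv), ?_, hQ _ _ huv hv.2.2⟩
  obtain ⟨z, rfl⟩ := huv
  refine hv.2.1.trans ?_
  rw [fw_append]
  exact (fw_le h u).2 (fw_C_le h z)

lemma Lang_suffix {τ : ℝ} {Q : List Bool → Prop} {u v : List Bool} (huv : u <:+ v)
    (hv : v ∈ Lang β m τ Q) : u ∈ Lang β m τ Q := fun w hw => hv w (hw.trans huv)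

lemma Lang_prefix (h : Ctx β m) {τ : ℝ} {Q : List Bool → Prop} (hQ : PrefClosed Q)
    {u v : List Bool} (huv : u <+: v) (hv : v ∈ Lang β m τ Q) : u ∈ Lang β m τ Q := by
  rintro w ⟨a, rfl⟩
  obtain ⟨z, rfl⟩ := huv
  refine PP_prefix h hQ (List.prefix_append w z) (hv _ ⟨a, by simp⟩)

/-- finite prefix of a sequence -/
def sp (σ : ℕ → Bool) (n : ℕ) : List Bool := List.ofFn (fun i : Fin n => σ i)
/-- shift -/
def sh (n : ℕ) (σ : ℕ → Bool) : ℕ → Bool := fun i => σ (i + n)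
/-- projection -/
noncomputable def pj (β : ℝ) (σ : ℕ → Bool) : ℝ := ∑' i, bt (σ i) / β ^ (i + 1)

@[simp] lemma sp_length (σ n) : (sp σ n).length = n := by simp [sp]
lemma sp_zero (σ) : sp σ 0 = [] := rfl
lemma sp_succ (σ n) : sp σ (n + 1) = σ 0 :: sp (sh 1 σ) n := by
  simp [sp, List.ofFn_succ, sh]
lemma sh_zero (σ) : sh 0 σ = σ := rfl
lemma sh_sh (a b σ) : sh a (sh b σ) = sh (a + b) σ := by
  funext i; simp [sh, add_assoc]
lemma sp_add (σ n k) : sp σ (n + k) = sp σ n ++ sp (sh n σ) k := by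
  induction n generalizing σ with
  | zero => simp [sp_zero, sh_zero]
  | succ n ih =>
    rw [Nat.add_right_comm, sp_succ, ih, sp_succ, sh_sh]; simp

lemma pj_summable (h : Ctx β m) (σ : ℕ → Bool) : Summable fun i => bt (σ i) / β ^ (i + 1) := by
  have h0 := h.pos
  have h1 : Summable fun i : ℕ => (1 / β) ^ (i + 1) := by
    rw [summable_nat_add_iff 1 (f := fun i : ℕ => (1 / β) ^ i)]
    exact summable_geometric_of_lt_one (by positivity) (by rw [div_lt_one h0]; exact h.h1)
  refine Summable.of_nonneg_of_le (fun i => ?_) (fun i => ?_) h1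
  · have := bt_nonneg (σ i); positivity
  · rw [one_div_pow]; gcongr; exact bt_le _

lemma pj_succ (h : Ctx β m) (σ) : pj β σ = (bt (σ 0) + pj β (sh 1 σ)) / β := by
  have h0 := h.pos
  unfold pj
  rw [(pj_summable h σ).tsum_eq_zero_add, add_div, ← tsum_div_const]
  congr 1
  · simp
  · refine tsum_congr fun i => ?_
    simp only [sh]; field_simp; ring

lemma pj_nonneg (h : Ctx β m) (σ) : 0 ≤ pj β σ := by
  have h0 := h.pos
  exact tsum_nonneg fun i => by have := bt_nonneg (σ i); positivity

lemma pj_fw (h : Ctx β m) (σ n) : pj β σ = fw β (sp σ n) (pj β (sh n σ)) := by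
  induction n generalizing σ with
  | zero => simp [sp_zero, fw_nil, sh_zero]
  | succ n ih => rw [sp_succ, fw_cons, pj_succ h, ih (sh 1 σ), sh_sh]

lemma pj_le_C (h : Ctx β m) (σ) : pj β σ ≤ 1 / (β - 1) := by
  have h0 := h.pos
  have h1 := h.h1
  have h3 : 1 / β < 1 := by rw [div_lt_one h0]; exact h.h1
  have hg : Summable fun i : ℕ => (1 / β) ^ i := summable_geometric_of_lt_one (by positivity) h3
  have hg1 : Summable fun i : ℕ => (1 / β) ^ (i + 1) := (summable_nat_add_iff 1).2 hg
  have : pj β σ ≤ ∑' i : ℕ, (1 / β) ^ (i + 1) := by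
    refine (pj_summable h σ).tsum_le_tsum (fun i => ?_) hg1
    rw [one_div_pow]; gcongr; exact bt_le _
  refine this.trans (le_of_eq ?_)
  simp_rw [pow_succ]
  rw [tsum_mul_right, tsum_geometric_of_lt_one (by positivity) h3]
  have : β - 1 ≠ 0 := by linarith
  have : 1 - 1/β ≠ 0 := by linarith
  field_simp

/-- infinite sequences of the language -/
def XX (β : ℝ) (m : ℕ) (τ : ℝ) (Q : List Bool → Prop) : Set (ℕ → Bool) :=
  {σ | ∀ n, sp σ n ∈ Lang β m τ Q}

lemma XX_sh {τ : ℝ} {Q : List Bool → Prop} {σ} (hσ : σ ∈ XX β m τ Q) (k : ℕ) :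
    sh k σ ∈ XX β m τ Q := by
  intro n
  refine Lang_suffix ?_ (hσ (k + n))
  rw [sp_add]; exact List.suffix_append _ _

lemma tendsto_inv_pow (h : Ctx β m) (c : ℝ) : Tendsto (fun n : ℕ => c / β ^ n) atTop (nhds 0) := by
  have h0 := h.pos
  have := (tendsto_pow_atTop_nhds_zero_of_lt_one (r := 1 / β) (by positivity)
    (by rw [div_lt_one h0]; exact h.h1)).const_mul c
  simpa [div_eq_mul_inv] using this

lemma XX_ge (h : Ctx β m) {τ : ℝ} {Q : List Bool → Prop} {σ} (hσ : σ ∈ XX β m τ Q) :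
    τ ≤ pj β σ := by
  have h1 : ∀ n : ℕ, τ - (1 / (β - 1)) / β ^ n ≤ pj β σ := by
    intro n
    have h2 := (hσ n _ List.suffix_rfl).2.1
    rw [fw_eq h, sp_length] at h2
    have h3 := pj_fw h σ n
    have h4 : val β (sp σ n) ≤ pj β σ := by
      rw [h3]; exact (fw_le h _).2 (pj_nonneg h _)
    linarith
  have h5 := (tendsto_inv_pow h (1 / (β - 1))).const_sub τ
  rw [sub_zero] at h5
  exact le_of_tendsto' h5 h1

lemma sp_ones_split (σ : ℕ → Bool) (k : ℕ) (hk : sp σ k ≠ List.replicate k true) :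
    ∃ j, j < k ∧ sp σ (j + 1) = List.replicate j true ++ [false] := by
  induction k with
  | zero => simp [sp_zero] at hk
  | succ k ih =>
    by_cases h1 : sp σ k = List.replicate k true
    · refine ⟨k, by omega, ?_⟩
      rw [sp_add, h1] at hk ⊢
      congr 1
      rw [sp_succ, sp_zero] at hk ⊢
      cases hc : sh k σ 0 with
      | false => rfl
      | true => rw [hc] at hk; exact absurd (List.replicate_succ').symm hk
    · obtain ⟨j, hj, hj2⟩ := ih h1
      exact ⟨j, by omega, hj2⟩

lemma SS_succ_eq (h : Ctx β m) (j : ℕ) : SS β (j + 1) = SS β j + 1 / β ^ (j + 1) := by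
  have h0 := h.pos
  induction j with
  | zero => simp [SS]
  | succ j ih =>
    have : SS β (j + 1 + 1) = (1 + SS β (j + 1)) / β := rfl
    rw [this, ih]
    have : SS β (j + 1) = (1 + SS β j) / β := rfl
    have h2 : SS β j = β * (SS β j + 1 / β ^ (j + 1)) - 1 := by
      rw [← ih, this]; field_simp; ring
    have h3 : 1 + (SS β j + 1 / β ^ (j + 1)) = β * (SS β j + 1 / β ^ (j + 1)) + 1 / β ^ (j+1) := by
      linarith
    rw [h3]; field_simp; ring

lemma SS_mono (h : Ctx β m) : Monotone (SS β) := by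
  refine monotone_nat_of_le_succ fun n => ?_
  rw [SS_succ_eq h]
  have := h.pos
  have : 0 < 1 / β ^ (n + 1) := by positivity
  linarith

lemma XX_le (h : Ctx β m) {τ : ℝ} {Q : List Bool → Prop} {σ} (hσ : σ ∈ XX β m τ Q) :
    pj β σ ≤ 1 := by
  have h0 := h.pos
  have hC := h.Cpos
  have key : ∀ k : ℕ, ∀ σ ∈ XX β m τ Q, pj β σ ≤ 1 + (1 / (β - 1)) / β ^ k := by
    intro k
    induction k with
    | zero => intro σ _; have := pj_le_C h σ; simp at this ⊢; linarith
    | succ k ih =>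
      intro σ hσ
      have h1 := (hσ (m + 1) _ List.suffix_rfl).1
      obtain ⟨j, hj, hj2⟩ := sp_ones_split σ (m + 1) (fun h => h1 (by rw [h]))
      have h2 := ih _ (XX_sh hσ (j + 1))
      rw [pj_fw h σ (j + 1), hj2, fw_append, fw_eq h]
      rw [← SS_val, List.length_replicate]
      have h3 : SS β (j + 1) ≤ 1 := by rw [← h.hS]; exact SS_mono h hj
      rw [SS_succ_eq h] at h3
      have h4 : fw β [false] (pj β (sh (j + 1) σ)) = pj β (sh (j + 1) σ) / β := by
        simp [fw_cons, fw_nil, bt_false]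
      rw [h4, div_div, ← pow_succ']
      have h5 : pj β (sh (j + 1) σ) / β ^ (j + 1) ≤ (1 + (1 / (β - 1)) / β ^ k) / β ^ (j + 1) := by
        gcongr
      rw [add_div] at h5
      have h6 : (1 / (β - 1)) / β ^ k / β ^ (j + 1) ≤ (1 / (β - 1)) / β ^ (k + 1) := by
        rw [div_div, ← pow_add]
        gcongr
        · exact h.h1.le
        · omega
      linarith
  have h5 := (tendsto_inv_pow h (1 / (β - 1))).const_add 1
  rw [add_zero] at h5
  exact ge_of_tendsto' h5 fun k => key k σ hσ

lemma pj_inj (h : Ctx β m) {τ : ℝ} (hτ : 0 < τ) {Q : List Bool → Prop} {σ σ'}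
    (hσ : σ ∈ XX β m τ Q) (hσ' : σ' ∈ XX β m τ Q) (he : pj β σ = pj β σ') : σ = σ' := by
  have h0 := h.pos
  have key : ∀ n : ℕ, ∀ σ ∈ XX β m τ Q, ∀ σ' ∈ XX β m τ Q, pj β σ = pj β σ' → σ n = σ' n := by
    intro n
    induction n with
    | zero =>
      intro σ hσ σ' hσ' he
      rw [pj_succ h, pj_succ h σ', div_left_inj' h0.ne'] at he
      have h1 := XX_ge h (XX_sh hσ 1)
      have h2 := XX_le h (XX_sh hσ 1)
      have h1' := XX_ge h (XX_sh hσ' 1)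
      have h2' := XX_le h (XX_sh hσ' 1)
      cases hc : σ 0 <;> cases hc' : σ' 0 <;> simp only [hc, hc', bt_true, bt_false] at he ⊢ <;>
        linarith
    | succ n ih =>
      intro σ hσ σ' hσ' he
      have h00 : σ 0 = σ' 0 := by
        have h2 := he
        rw [pj_succ h, pj_succ h σ', div_left_inj' h0.ne'] at he
        have h1 := XX_ge h (XX_sh hσ 1)
        have h2 := XX_le h (XX_sh hσ 1)
        have h1' := XX_ge h (XX_sh hσ' 1)
        have h2' := XX_le h (XX_sh hσ' 1)
        cases hc : σ 0 <;> cases hc' : σ' 0 <;> simp only [hc, hc', bt_true, bt_false] at he ⊢ <;>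
          linarith
      rw [pj_succ h, pj_succ h σ', div_left_inj' h0.ne', h00] at he
      exact ih _ (XX_sh hσ 1) _ (XX_sh hσ' 1) (by linarith)
  funext n
  exact key n σ hσ σ' hσ' he

lemma sp_eq_pre (h : Ctx β m) {σ : ℕ → Bool} (hlt : ∀ n, pj β (sh n σ) < 1) (n : ℕ) :
    pre β (pj β σ) n = sp σ n ∧ (Tbeta β)^[n] (pj β σ) = pj β (sh n σ) := by
  have h0 := h.pos
  induction n generalizing σ with
  | zero => exact ⟨rfl, rfl⟩
  | succ n ih =>
    have hx : pj β σ ∈ Ico (0:ℝ) 1 := ⟨pj_nonneg h σ, hlt 0⟩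
    have hb : β * pj β σ = bt (σ 0) + pj β (sh 1 σ) := by
      rw [pj_succ h]; field_simp
    have hd : dig β (pj β σ) = σ 0 := by
      unfold dig; rw [hb]
      have h1 := hlt 1
      have h2 := pj_nonneg h (sh 1 σ)
      cases hc : σ 0
      · simp [bt_false, h1]
      · simp [bt_true, h2]
    have hT : Tbeta β (pj β σ) = pj β (sh 1 σ) := by
      rw [T_eq h hx, hd, hb]; ring
    have := ih (σ := sh 1 σ) (fun n => by rw [sh_sh]; exact hlt _)
    rw [sh_sh] at this
    simp only [pre, hd, hT, Function.iterate_succ_apply, sp_succ, this.1, this.2]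
    simp

lemma XX_good (h : Ctx β m) {τ : ℝ} {Q : List Bool → Prop} {σ : ℕ → Bool}
    (hσ : σ ∈ XX β m τ Q) (hlt : ∀ n, pj β (sh n σ) < 1) : pj β σ ∈ KQ β τ Q := by
  refine ⟨⟨⟨pj_nonneg h σ, hlt 0⟩, fun n => ?_⟩, fun n k => ?_⟩
  · rw [(sp_eq_pre h hlt n).2]; exact XX_ge h (XX_sh hσ n)
  · rw [(sp_eq_pre h hlt n).2, (sp_eq_pre h (σ := sh n σ) (fun n => by rw [sh_sh]; exact hlt _) k).1]
    exact (XX_sh hσ n k _ List.suffix_rfl).2.2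

lemma XX_bad_countable (h : Ctx β m) {τ : ℝ} (hτ : 0 < τ) {Q : List Bool → Prop} :
    {σ | σ ∈ XX β m τ Q ∧ ∃ n, ¬ pj β (sh n σ) < 1}.Countable := by
  have : {σ | σ ∈ XX β m τ Q ∧ ∃ n, ¬ pj β (sh n σ) < 1} ⊆
      ⋃ n : ℕ, ⋃ u : List Bool, {σ | σ ∈ XX β m τ Q ∧ sp σ n = u ∧ ¬ pj β (sh n σ) < 1} := by
    rintro σ ⟨hσ, n, hn⟩
    exact mem_iUnion.2 ⟨n, mem_iUnion.2 ⟨sp σ n, hσ, rfl, hn⟩⟩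
  refine Countable.mono this (countable_iUnion fun n => countable_iUnion fun u => ?_)
  apply Set.Subsingleton.countable
  rintro σ ⟨hσ, hu, hn⟩ σ' ⟨hσ', hu', hn'⟩
  have e1 : pj β (sh n σ) = 1 := le_antisymm (XX_le h (XX_sh hσ n)) (not_lt.1 hn)
  have e2 : pj β (sh n σ') = 1 := le_antisymm (XX_le h (XX_sh hσ' n)) (not_lt.1 hn')
  apply pj_inj h hτ hσ hσ'
  rw [pj_fw h σ n, pj_fw h σ' n, hu, hu', e1, e2]

lemma K_sep (h : Ctx β m) {τ : ℝ} (hτ : 0 < τ) {x y : ℝ} (hx : x ∈ Kset β τ) (hy : y ∈ Kset β τ)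
    {n : ℕ} (hne : pre β x n ≠ pre β y n) : τ / β ^ n ≤ |x - y| := by
  have h0 := h.pos
  induction n generalizing x y with
  | zero => exact absurd rfl hne
  | succ n ih =>
    have hTx : Tbeta β x ∈ Kset β τ := ⟨T_mem _, fun n => hx.2 (n + 1)⟩
    have hTy : Tbeta β y ∈ Kset β τ := ⟨T_mem _, fun n => hy.2 (n + 1)⟩
    have ex := T_eq h hx.1
    have ey := T_eq h hy.1
    have hmul : |x - y| = |β * x - β * y| / β := by
      rw [← mul_sub, abs_mul, abs_of_pos h0]; field_simp
    rw [hmul, pow_succ, ← div_div]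
    gcongr
    by_cases hd : dig β x = dig β y
    · have := ih hTx hTy (fun hh => hne (by simp only [pre, hd, hh]))
      rw [ex, ey, hd] at this
      have e : β * x - β * y = β * x - bt (dig β y) - (β * y - bt (dig β y)) := by ring
      rw [e]; exact this
    · have h1 : τ / β ^ n ≤ τ := div_le_self hτ.le (one_le_pow₀ h.h1.le)
      have hx1 := hTx.2 0
      have hy1 := hTy.2 0
      simp only [Function.iterate_zero, id] at hx1 hy1
      have hx2 := hTx.1.2
      have hy2 := hTy.1.2
      cases hc : dig β x <;> cases hc' : dig β y <;>
        simp only [hc, hc', bt_true, bt_false] at hd ex ey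
      · exact absurd trivial hd
      · rw [abs_of_neg (by linarith)]; linarith
      · rw [abs_of_pos (by linarith)]; linarith
      · exact absurd trivial hd



lemma konig {A : Set (List Bool)} (hpre : ∀ u v, u <+: v → v ∈ A → u ∈ A)
    (hinf : ∀ L, ∃ u ∈ A, u.length = L) : ∃ σ : ℕ → Bool, ∀ n, sp σ n ∈ A := by
  have h1 : (⋂ n, {σ : ℕ → Bool | sp σ n ∈ A}).Nonempty := by
    apply IsCompact.nonempty_iInter_of_sequence_nonempty_isCompact_isClosed
    · intro n σ hσ
      refine hpre _ _ ?_ hσ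
      rw [sp_add]; exact List.prefix_append _ _
    · intro L
      obtain ⟨u, hu, hL⟩ := hinf L
      refine ⟨fun i => u.getD i false, ?_⟩
      have : sp (fun i => u.getD i false) L = u := by
        subst hL
        apply List.ext_getElem
        · simp
        · intro i h1 h2
          simp [sp]
      change sp _ L ∈ A
      rw [this]; exact hu
    · have : IsClosed {σ : ℕ → Bool | sp σ 0 ∈ A} := by
        have hc : Continuous (fun σ : ℕ → Bool => (fun i : Fin 0 => σ i)) := by fun_prop
        exact (isClosed_discrete {f : Fin 0 → Bool | List.ofFn f ∈ A}).preimage hc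
      exact this.isCompact
    · intro n
      have hc : Continuous (fun σ : ℕ → Bool => (fun i : Fin n => σ i)) := by fun_prop
      exact (isClosed_discrete {f : Fin n → Bool | List.ofFn f ∈ A}).preimage hc
  obtain ⟨σ, hσ⟩ := h1
  exact ⟨σ, fun n => mem_iInter.1 hσ n⟩

lemma qq_small (h : Ctx β m) {s : ℝ≥0} (hs : 0 < s) {ε : ℝ≥0∞} (hε : 0 < ε) :
    ∃ n : ℕ, qq β s ^ n ≤ ε :=
  ((ENNReal.tendsto_pow_atTop_nhds_zero_of_lt_one (qq_lt_one h hs)).eventually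
    (ge_mem_nhds hε)).exists

lemma cover_bad (h : Ctx β m) {s : ℝ≥0} (hs : 0 < s) {N : Set (ℕ → Bool)} (hN : N.Countable)
    {ε : ℝ≥0∞} (hε : 0 < ε) : ∃ e : ℕ → List Bool, ∑' i, wt β s (e i) ≤ ε ∧
      ∀ σ ∈ N, ∃ i, e i = sp σ (e i).length := by
  obtain ⟨f, hf⟩ := (countable_iff_exists_subset_range).1 hN
  obtain ⟨ε', hε', hsum⟩ := ENNReal.exists_pos_sum_of_countable' hε.ne' ℕ
  choose n hn using fun i => qq_small h hs (hε' i)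
  refine ⟨fun i => sp (f i) (n i), ?_, ?_⟩
  · refine (ENNReal.tsum_le_tsum fun i => ?_).trans hsum.le
    simpa [wt] using hn i
  · intro σ hσ
    obtain ⟨i, rfl⟩ := hf hσ
    exact ⟨i, by simp⟩

lemma cover_one (h : Ctx β m) {s : ℝ≥0} (hs : 0 < s) {τ : ℝ} (hτ : 0 < τ) {A : Set ℝ}
    (hA : Metric.ediam A ≤ ENNReal.ofReal (τ / 2)) {ε : ℝ≥0∞} (hε : 0 < ε) :
    ∃ e : List Bool, (∀ x ∈ A, x ∈ Kset β τ → x ∈ cyl β e) ∧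
      wt β s e ≤ ENNReal.ofReal (β / τ * 2) ^ (s:ℝ) *
        (⨆ _ : A.Nonempty, Metric.ediam A ^ (s:ℝ)) + ε := by
  have h0 := h.pos
  by_cases hne : ∃ x0, x0 ∈ A ∧ x0 ∈ Kset β τ
  swap
  · obtain ⟨n, hn⟩ := qq_small h hs hε
    refine ⟨List.replicate n false, fun x hx hx' => absurd ⟨x, hx, hx'⟩ hne, ?_⟩
    refine le_add_left ?_
    simpa [wt] using hn
  obtain ⟨x0, hx0, hx0'⟩ := hne
  have hAne : A.Nonempty := ⟨x0, hx0⟩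
  simp only [hAne, iSup_pos]
  have hfin : Metric.ediam A ≠ ⊤ := (hA.trans_lt ENNReal.ofReal_lt_top).ne
  by_cases hz : Metric.ediam A = 0
  · obtain ⟨n, hn⟩ := qq_small h hs hε
    refine ⟨pre β x0 n, fun x hx hx' => ?_, ?_⟩
    · have h1 : edist x x0 ≤ 0 := hz ▸ Metric.edist_le_ediam_of_mem hx hx0
      have h2 : x = x0 := edist_le_zero.1 h1
      rw [h2]; exact mem_cyl_pre hx0'.1 n
    · refine le_add_left ?_
      simpa [wt] using hn
  · set d := (Metric.ediam A).toReal with hd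
    have hd0 : 0 < d := ENNReal.toReal_pos hz hfin
    have hdA : Metric.ediam A = ENNReal.ofReal d := (ENNReal.ofReal_toReal hfin).symm
    have hdτ : d ≤ τ / 2 := by
      rw [hdA] at hA
      exact (ENNReal.ofReal_le_ofReal_iff (by positivity)).1 hA
    obtain ⟨n, hn1, hn2⟩ := exists_nat_pow_near (x := τ / (2 * d)) (y := β)
      (by rw [le_div_iff₀ (by positivity)]; linarith) h.h1
    refine ⟨pre β x0 n, fun x hx hx' => ?_, ?_⟩
    · refine ⟨hx'.1, ?_⟩
      rw [pre_length]
      by_contra hcon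
      have h1 := K_sep h hτ hx' hx0' hcon
      have h2 : |x - x0| ≤ d := by
        have h3 := Metric.edist_le_ediam_of_mem hx hx0
        rw [hdA, edist_dist, Real.dist_eq] at h3
        exact (ENNReal.ofReal_le_ofReal_iff hd0.le).1 h3
      rw [le_div_iff₀ (by positivity)] at hn1
      have h4 : τ / β ^ n ≤ d := h1.trans h2
      rw [div_le_iff₀ (by positivity)] at h4
      have h5 : 0 < β ^ n := by positivity
      nlinarith
    · refine le_add_right ?_
      unfold wt
      rw [pre_length, qq_pow h, ← ENNReal.mul_rpow_of_nonneg _ _ (by simp), hdA,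
        ← ENNReal.ofReal_mul (by positivity)]
      refine ENNReal.rpow_le_rpow (ENNReal.ofReal_le_ofReal ?_) (by simp)
      rw [div_lt_iff₀ (by positivity), pow_succ] at hn2
      rw [div_le_iff₀ (by positivity)]
      have : 1 = τ / τ := by field_simp
      rw [this]
      have : β / τ * 2 * d * β ^ n = (β ^ n * β * (2 * d)) / τ := by ring
      rw [this]
      gcongr

lemma cover_good (h : Ctx β m) {s : ℝ≥0} (hs : 0 < s) {τ : ℝ} (hτ : 0 < τ) {X : Set ℝ}
    (hX : X ⊆ Kset β τ) (hd : dimH X < s)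
    {ε : ℝ≥0∞} (hε : 0 < ε) : ∃ e : ℕ → List Bool, ∑' i, wt β s (e i) ≤ ε ∧
      ∀ x ∈ X, ∃ i, x ∈ cyl β (e i) := by
  have h0 := h.pos
  have hm : Measure.hausdorffMeasure (s:ℝ) X = 0 := hausdorffMeasure_of_dimH_lt hd
  rw [Measure.hausdorffMeasure_apply] at hm
  set K := ENNReal.ofReal (β / τ * 2) ^ (s:ℝ) with hK
  have hKtop : K ≠ ⊤ := ENNReal.rpow_ne_top_of_nonneg (by simp) ENNReal.ofReal_ne_top
  have hK0 : K ≠ 0 := by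
    have : 0 < K := ENNReal.rpow_pos (by rw [ENNReal.ofReal_pos]; positivity) ENNReal.ofReal_ne_top
    exact this.ne'
  have hε2 : 0 < ε / 2 := ENNReal.div_pos hε.ne' (by simp)
  have hr : (0:ℝ≥0∞) < ENNReal.ofReal (τ / 2) := by rw [ENNReal.ofReal_pos]; positivity
  have h1 : (⨅ (t : ℕ → Set ℝ) (_ : X ⊆ ⋃ n, t n) (_ : ∀ n, Metric.ediam (t n) ≤ ENNReal.ofReal (τ / 2)),
          ∑' n, ⨆ _ : (t n).Nonempty, Metric.ediam (t n) ^ (s:ℝ)) < (ε / 2) / K := by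
    refine lt_of_le_of_lt ?_ (ENNReal.div_pos hε2.ne' hKtop)
    rw [← hm]
    exact le_iSup₂_of_le (ENNReal.ofReal (τ / 2)) hr le_rfl
  simp only [iInf_lt_iff] at h1
  obtain ⟨t, hcov, hdiam, hsum⟩ := h1
  obtain ⟨ε', hε', hsum'⟩ := ENNReal.exists_pos_sum_of_countable' hε2.ne' ℕ
  choose e he1 he2 using fun i => cover_one h hs hτ (hdiam i) (hε' i)
  refine ⟨e, ?_, ?_⟩
  · calc ∑' i, wt β s (e i) ≤ ∑' i, (K * (⨆ _ : (t i).Nonempty, Metric.ediam (t i) ^ (s:ℝ)) + ε' i) :=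
          ENNReal.tsum_le_tsum he2
      _ = K * (∑' i, (⨆ _ : (t i).Nonempty, Metric.ediam (t i) ^ (s:ℝ))) + ∑' i, ε' i := by
          rw [ENNReal.tsum_add, ENNReal.tsum_mul_left]
      _ ≤ K * ((ε / 2) / K) + ε / 2 := by gcongr
      _ = ε := by rw [ENNReal.mul_div_cancel hK0 hKtop, ENNReal.add_halves]
  · intro x hx
    obtain ⟨i, hi⟩ := mem_iUnion.1 (hcov hx)
    exact ⟨i, he1 i x hi (hX hx)⟩

theorem L3 (h : Ctx β m) {s : ℝ≥0} {τ : ℝ} (hτ : 0 < τ) {Q : List Bool → Prop}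
    (hQ : PrefClosed Q) (hd : dimH (KQ β τ Q) < s) : ws β s (Lang β m τ Q) ≠ ⊤ := by
  have hs : 0 < s := by
    have := (zero_le (a := dimH (KQ β τ Q))).trans_lt hd
    exact_mod_cast this
  have h4 : (0:ℝ≥0∞) < 1 / 2 / 2 := ENNReal.div_pos (ENNReal.div_pos (by simp) (by simp)).ne' (by simp)
  obtain ⟨e, he, heX⟩ := cover_good h hs hτ (X := KQ β τ Q) (fun x hx => hx.1) hd h4
  obtain ⟨e', he', heX'⟩ := cover_bad h hs (XX_bad_countable h hτ (Q := Q)) h4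
  have hL : ∃ L, ∀ u ∈ Lang β m τ Q, u.length = L → ∃ i, e i <+: u ∨ e' i <+: u := by
    by_contra hcon
    push Not at hcon
    obtain ⟨σ, hσ⟩ := konig (A := {u | u ∈ Lang β m τ Q ∧ ∀ i, ¬ e i <+: u ∧ ¬ e' i <+: u})
      (fun u v huv hv => ⟨Lang_prefix h hQ huv hv.1,
        fun i => ⟨fun h => (hv.2 i).1 (h.trans huv), fun h => (hv.2 i).2 (h.trans huv)⟩⟩)
      (fun L => by obtain ⟨u, hu, hL, h2⟩ := hcon L; exact ⟨u, ⟨hu, h2⟩, hL⟩)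
    have hX : σ ∈ XX β m τ Q := fun n => (hσ n).1
    by_cases hb : ∃ n, ¬ pj β (sh n σ) < 1
    · obtain ⟨i, hi⟩ := heX' σ ⟨hX, hb⟩
      apply ((hσ (e' i).length).2 i).2
      rw [← hi]
    · push Not at hb
      obtain ⟨i, hi⟩ := heX _ (XX_good h hX hb)
      apply ((hσ (e i).length).2 i).1
      rw [← (sp_eq_pre h hb _).1, hi.2]
  obtain ⟨L, hL⟩ := hL
  set B := ws β s {u : List Bool | u.length < L} with hB
  have hBtop : B ≠ ⊤ := ws_finite s (List.finite_length_lt Bool L)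
  have key : ∀ N, ws β s {u | u ∈ Lang β m τ Q ∧ u.length < N} ≤ 2 * B := by
    intro N
    set A := {u | u ∈ Lang β m τ Q ∧ u.length < N} with hA
    have hAtop : ws β s A ≠ ⊤ := ws_finite s ((List.finite_length_lt Bool N).subset fun u hu => hu.2)
    have hsub : A ⊆ ({u : List Bool | u.length < L} ∪ ⋃ i, (fun u => e i ++ u) '' A) ∪
        ⋃ i, (fun u => e' i ++ u) '' A := by
      rintro u ⟨hu, hN⟩
      by_cases hl : u.length < L
      · exact Or.inl (Or.inl hl)
      · obtain ⟨i, hi⟩ := hL (u.take L) (Lang_prefix h hQ (List.take_prefix _ _) hu)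
          (by simp; omega)
        rcases hi with hi | hi
        · obtain ⟨z, rfl⟩ := hi.trans (List.take_prefix _ _)
          exact Or.inl (Or.inr (mem_iUnion.2 ⟨i, z, ⟨Lang_suffix (List.suffix_append _ _) hu,
            by simp at hN; omega⟩, rfl⟩))
        · obtain ⟨z, rfl⟩ := hi.trans (List.take_prefix _ _)
          exact (Or.inr (mem_iUnion.2 ⟨i, z, ⟨Lang_suffix (List.suffix_append _ _) hu,
            by simp at hN; omega⟩, rfl⟩))
    have h5 : ∀ f : ℕ → List Bool, ∑' i, wt β s (f i) ≤ 1 / 2 / 2 →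
        ws β s (⋃ i, (fun u => f i ++ u) '' A) ≤ ws β s A / 2 / 2 := by
      intro f hf
      refine (ws_iUnion s _).trans ?_
      simp_rw [ws_image_append]
      rw [ENNReal.tsum_mul_right]
      calc _ ≤ 1 / 2 / 2 * ws β s A := by gcongr
        _ = _ := by simp only [div_eq_mul_inv]; ring
    have h6 : ws β s A ≤ B + ws β s A / 2 := by
      calc ws β s A ≤ (B + ws β s A / 2 / 2) + ws β s A / 2 / 2 := by
            refine (ws_mono s hsub).trans ((ws_union s _ _).trans ?_)
            gcongr
            · refine (ws_union s _ _).trans ?_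
              gcongr
              exact h5 e he
            · exact h5 e' he'
        _ = _ := by rw [add_assoc, ENNReal.add_halves]
    have h7 : ws β s A / 2 + ws β s A / 2 ≤ B + ws β s A / 2 := by rw [ENNReal.add_halves]; exact h6
    have h8 : ws β s A / 2 ≤ B :=
      (ENNReal.add_le_add_iff_right (ENNReal.div_ne_top hAtop (by simp))).1 h7
    calc ws β s A = ws β s A / 2 + ws β s A / 2 := (ENNReal.add_halves _).symm
      _ ≤ B + B := by gcongr
      _ = 2 * B := by ring
  refine ne_top_of_le_ne_top (ENNReal.mul_ne_top (by simp) hBtop) (b := 2 * B) ?_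
  by_contra hcon
  obtain ⟨F, hF, hF2⟩ := ws_exists_finset (not_le.1 hcon)
  refine absurd hF2 (not_lt.2 ?_)
  refine (ws_mono s ?_).trans (key (F.sup List.length + 1))
  intro u hu
  exact ⟨hF hu, Nat.lt_succ_of_le (Finset.le_sup (f := List.length) hu)⟩



/-- block structure -/
structure Blk (W : List Bool) (D : Set (List Bool)) : Prop where
  ne : ∀ d ∈ D, d ≠ []
  pre : ∀ d ∈ D, W <+: d ++ W
  inc : ∀ d ∈ D, ∀ d' ∈ D, d ++ W <+: d' ++ W → d = d'

lemma Blk.mono {W : List Bool} {D D' : Set (List Bool)} (h : Blk W D) (hs : D' ⊆ D) : Blk W D' :=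
  ⟨fun d hd => h.ne d (hs hd), fun d hd => h.pre d (hs hd),
    fun d hd d' hd' => h.inc d (hs hd) d' (hs hd')⟩

lemma flat_pre {W : List Bool} {D : Set (List Bool)} (hp : ∀ d ∈ D, W <+: d ++ W)
    {l : List (List Bool)} (hl : ∀ d ∈ l, d ∈ D) : W <+: l.flatten ++ W := by
  induction l with
  | nil => simp
  | cons d l ih =>
    have h1 := ih (fun x hx => hl x (List.mem_cons_of_mem _ hx))
    have h2 := hp d (hl d (by simp))
    have h3 : d ++ W <+: d ++ (l.flatten ++ W) := (List.prefix_append_right_inj d).2 h1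
    simpa using h2.trans h3

lemma block_prefix {W : List Bool} {D : Set (List Bool)} (hb : Blk W D)
    {l l' : List (List Bool)} (hl : ∀ d ∈ l, d ∈ D) (hl' : ∀ d ∈ l', d ∈ D)
    (hp : l.flatten ++ W <+: l'.flatten ++ W) : l <+: l' := by
  induction l generalizing l' with
  | nil => simp
  | cons d l ih =>
    have hd := hl d (by simp)
    have hl1 : ∀ x ∈ l, x ∈ D := fun x hx => hl x (List.mem_cons_of_mem _ hx)
    cases l' with
    | nil =>
      have h1 := hp.length_le
      have h2 := List.length_pos_iff.2 (hb.ne d hd)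
      simp at h1; omega
    | cons d' l' =>
      have hd' := hl' d' (by simp)
      have hl1' : ∀ x ∈ l', x ∈ D := fun x hx => hl' x (List.mem_cons_of_mem _ hx)
      simp only [List.flatten_cons, List.append_assoc] at hp
      have h1 : d ++ W <+: d ++ (l.flatten ++ W) :=
        (List.prefix_append_right_inj d).2 (flat_pre hb.pre hl1)
      have h2 : d' ++ W <+: d' ++ (l'.flatten ++ W) :=
        (List.prefix_append_right_inj d').2 (flat_pre hb.pre hl1')
      have h3 : d = d' := by
        rcases List.prefix_or_prefix_of_prefix (h1.trans hp) h2 with h | h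
        · exact hb.inc _ hd _ hd' h
        · exact (hb.inc _ hd' _ hd h).symm
      subst h3
      rw [List.prefix_append_right_inj] at hp
      exact (List.prefix_cons_inj d).2 (ih hl1 hl1' hp)

lemma flatten_inj {W : List Bool} {D : Set (List Bool)} (hb : Blk W D)
    {l l' : List (List Bool)} (hl : ∀ d ∈ l, d ∈ D) (hl' : ∀ d ∈ l', d ∈ D)
    (hp : l.flatten = l'.flatten) : l = l' := by
  have h1 := block_prefix hb hl hl' (by rw [hp])
  have h2 := block_prefix hb hl' hl (by rw [hp])
  exact h1.eq_of_length (le_antisymm h1.length_le h2.length_le)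

lemma map_val_mem {D : Set (List Bool)} (l : List D) : ∀ d ∈ l.map Subtype.val, d ∈ D := by
  intro d hd
  obtain ⟨x, -, rfl⟩ := List.mem_map.1 hd
  exact x.2

lemma low (h : Ctx β m) {s : ℝ≥0} {τ : ℝ} (hτ : 0 < τ) {Q : List Bool → Prop}
    (hQ : PrefClosed Q) {W : List Bool} {D : Set (List Bool)} (hb : Blk W D)
    (hstar : ∀ l : List (List Bool), (∀ d ∈ l, d ∈ D) → l.flatten ∈ Lang β m τ Q)
    (hs : 1 ≤ ws β s D) : (s : ℝ≥0∞) ≤ dimH (KQ β τ Q) := by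
  by_contra hcon
  apply L3 h hτ hQ (not_le.1 hcon)
  let f : List D → Lang β m τ Q := fun l => ⟨(l.map Subtype.val).flatten, hstar _ (map_val_mem l)⟩
  have hf : Function.Injective f := by
    intro l l' hll
    have := flatten_inj hb (map_val_mem l) (map_val_mem l') (congrArg Subtype.val hll)
    exact List.map_injective_iff.2 Subtype.val_injective this
  have h1 : ∑' l : List D, wt β s (f l).1 ≤ ws β s (Lang β m τ Q) :=
    ENNReal.tsum_comp_le_tsum_of_injective hf _
  have h2 : ∑' l : List D, wt β s (f l).1 = ⊤ := by
    have : ∀ l : List D, wt β s (f l).1 = (l.map (fun d : D => wt β s d.1)).prod := by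
      intro l
      simp only [f]
      rw [wt_flatten, List.map_map]; rfl
    simp_rw [this]
    rw [tsum_list, eq_top_iff]
    calc (⊤:ℝ≥0∞) = ∑' k : ℕ, 1 := by rw [ENNReal.tsum_const_eq_top_of_ne_zero one_ne_zero]
      _ ≤ _ := ENNReal.tsum_le_tsum fun k => one_le_pow₀ hs
  rw [h2] at h1
  exact top_le_iff.1 h1

lemma suffix_app {v a b : List Bool} (h : v <:+ a ++ b) :
    v <:+ b ∨ ∃ v1, v1 ≠ [] ∧ v1 <:+ a ∧ v = v1 ++ b := by
  obtain ⟨z, hz⟩ := h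
  rcases List.append_eq_append_iff.1 hz with ⟨c, h1, h2⟩ | ⟨c, h1, h2⟩
  · by_cases hc : c = []
    · left; subst hc; simp at h2; rw [h2]
    · right; exact ⟨c, hc, ⟨z, h1.symm⟩, h2⟩
  · left; exact ⟨c, h2.symm⟩

lemma val_le_C (h : Ctx β m) (W : List Bool) : val β W ≤ 1 / (β - 1) :=
  ((fw_le h W).2 h.Cpos.le).trans (fw_C_le h W)

lemma star_ok {W : List Bool} {D : Set (List Bool)} (hp : ∀ d ∈ D, W <+: d ++ W)
    (hok : ∀ d ∈ D, IsOk m (d ++ W)) (hWok : IsOk m W) (hW : m ≤ W.length)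
    {l : List (List Bool)} (hl : ∀ d ∈ l, d ∈ D) : IsOk m (l.flatten ++ W) := by
  induction l with
  | nil => simpa using hWok
  | cons d l ih =>
    have h1 : ∀ x ∈ l, x ∈ D := fun x hx => hl x (List.mem_cons_of_mem _ hx)
    simp only [List.flatten_cons, List.append_assoc]
    exact isOk_cat (hok d (hl d (by simp))) (ih h1) (flat_pre hp h1) hW

lemma star_val (h : Ctx β m) {τ : ℝ} {W : List Bool} {D : Set (List Bool)}
    (hp : ∀ d ∈ D, W <+: d ++ W)
    (hv : ∀ d ∈ D, ∀ v, v <:+ d → v ≠ [] → τ ≤ val β (v ++ W))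
    {l : List (List Bool)} (hl : ∀ d ∈ l, d ∈ D) {v : List Bool} (hvl : v <:+ l.flatten)
    (hne : v ≠ []) : τ ≤ val β (v ++ W) := by
  induction l generalizing v with
  | nil => simp at hvl; exact absurd hvl hne
  | cons d l ih =>
    have h1 : ∀ x ∈ l, x ∈ D := fun x hx => hl x (List.mem_cons_of_mem _ hx)
    rw [List.flatten_cons] at hvl
    rcases suffix_app hvl with h2 | ⟨v1, hv1, hv2, rfl⟩
    · exact ih h1 h2 hne
    · obtain ⟨z, hz⟩ := flat_pre hp h1
      rw [List.append_assoc, ← hz, ← List.append_assoc]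
      exact (hv d (hl d (by simp)) v1 hv2 hv1).trans (val_append_ge h _ _)

lemma goodstar (h : Ctx β m) {τ : ℝ} (hτ : τ ≤ 1) {Q : List Bool → Prop}
    {W : List Bool} {D : Set (List Bool)} (hp : ∀ d ∈ D, W <+: d ++ W)
    (hok : ∀ d ∈ D, IsOk m (d ++ W)) (hWok : IsOk m W) (hW : m ≤ W.length)
    (hv : ∀ d ∈ D, ∀ v, v <:+ d → v ≠ [] → τ ≤ val β (v ++ W))
    {l : List (List Bool)} (hl : ∀ d ∈ l, d ∈ D)
    (hQ : ∀ v, v <:+ l.flatten → Q v) : l.flatten ∈ Lang β m τ Q := by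
  intro v hvl
  refine ⟨?_, ?_, hQ v hvl⟩
  · intro hpre
    exact star_ok hp hok hWok hW hl (hpre.isInfix.trans
      (hvl.isInfix.trans (List.prefix_append _ _).isInfix))
  · by_cases hne : v = []
    · subst hne
      rw [fw_nil, le_div_iff₀ (by linarith [h.h1])]
      nlinarith [h.h1, h.h2]
    · refine (star_val h hp hv hl hvl hne).trans ?_
      rw [val_append]
      exact (fw_le h v).2 (val_le_C h W)

lemma KQ_true (τ : ℝ) : KQ β τ (fun _ => True) = Kset β τ := by
  ext x; simp [KQ]

lemma fw_dimH (h : Ctx β m) (u : List Bool) (A : Set ℝ) : dimH (fw β u '' A) = dimH A := by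
  have h0 := h.pos
  have hp : 0 < β ^ u.length := by positivity
  apply le_antisymm
  · have : LipschitzWith (Real.toNNReal (1 / β ^ u.length)) (fw β u) := by
      apply LipschitzWith.of_dist_le_mul
      intro x y
      rw [Real.dist_eq, Real.dist_eq, fw_sub h, abs_div, abs_of_pos hp,
        Real.coe_toNNReal _ (by positivity)]
      apply le_of_eq; ring
    exact this.dimH_image_le A
  · have : AntilipschitzWith (Real.toNNReal (β ^ u.length)) (fw β u) := by
      apply AntilipschitzWith.of_le_mul_dist
      intro x y
      rw [Real.dist_eq, Real.dist_eq, fw_sub h, abs_div, abs_of_pos hp,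
        Real.coe_toNNReal _ (by positivity)]
      apply le_of_eq; field_simp
    exact this.le_dimH_image A

/-- points avoiding a cylinder -/
def avoid (β : ℝ) (W : List Bool) (Y : Set ℝ) : Set ℝ :=
  {x | x ∈ Y ∧ ∀ n, (Tbeta β)^[n] x ∉ cyl β W}
/-- recurrent points -/
def recur (β : ℝ) (W : List Bool) (Y : Set ℝ) : Set ℝ :=
  {x | x ∈ Y ∧ x ∈ cyl β W ∧ ∀ N, ∃ n, N ≤ n ∧ (Tbeta β)^[n] x ∈ cyl β W}

lemma split_dim (h : Ctx β m) (W : List Bool) {Y : Set ℝ} (hY : Y ⊆ Ico (0:ℝ) 1)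
    (hT : ∀ x ∈ Y, Tbeta β x ∈ Y) :
    dimH Y ≤ max (dimH (avoid β W Y)) (dimH (recur β W Y)) := by
  have hTn : ∀ x ∈ Y, ∀ n, (Tbeta β)^[n] x ∈ Y := by
    intro x hx n
    induction n with
    | zero => exact hx
    | succ n ih => rw [Function.iterate_succ_apply']; exact hT _ ih
  have hsub : Y ⊆ (⋃ u : List Bool, fw β u '' avoid β W Y) ∪ ⋃ u : List Bool, fw β u '' recur β W Y := by
    intro x hx
    by_cases hio : ∀ N, ∃ n, N ≤ n ∧ (Tbeta β)^[n] x ∈ cyl β W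
    · right
      obtain ⟨n, -, hn⟩ := hio 0
      refine mem_iUnion.2 ⟨pre β x n, (Tbeta β)^[n] x, ⟨hTn x hx n, hn, fun N => ?_⟩, fw_pre h (hY hx) n⟩
      obtain ⟨k, hk, hk2⟩ := hio (n + N)
      refine ⟨k - n, by omega, ?_⟩
      rw [← iter_add, Nat.add_sub_cancel' (by omega)]; exact hk2
    · left
      push Not at hio
      obtain ⟨n, hn⟩ := hio
      refine mem_iUnion.2 ⟨pre β x n, (Tbeta β)^[n] x, ⟨hTn x hx n, fun k => ?_⟩, fw_pre h (hY hx) n⟩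
      rw [← iter_add]; exact hn _ (by omega)
  refine (dimH_mono hsub).trans ?_
  rw [dimH_union, dimH_iUnion, dimH_iUnion]
  simp_rw [fw_dimH h]
  simp

lemma Kset_T {t x : ℝ} (hx : x ∈ Kset β t) : Tbeta β x ∈ Kset β t :=
  ⟨T_mem _, fun n => hx.2 (n + 1)⟩
lemma Kset_iter {t x : ℝ} (hx : x ∈ Kset β t) (n : ℕ) : (Tbeta β)^[n] x ∈ Kset β t :=
  ⟨iter_mem hx.1 n, fun k => by rw [← iter_add]; exact hx.2 _⟩
lemma Kset_sub (t : ℝ) : Kset β t ⊆ Ico (0:ℝ) 1 := fun _ hx => hx.1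
lemma Kset_anti {t t' : ℝ} (h : t ≤ t') : Kset β t' ⊆ Kset β t :=
  fun _ hx => ⟨hx.1, fun n => h.trans (hx.2 n)⟩

/-- return words -/
def Rset (β t : ℝ) (W : List Bool) : Set (List Bool) :=
  {c | c ≠ [] ∧ ∃ x ∈ Kset β t, x ∈ cyl β W ∧ x ∈ cyl β c ∧ (Tbeta β)^[c.length] x ∈ cyl β W ∧
    ∀ j, 0 < j → j < c.length → (Tbeta β)^[j] x ∉ cyl β W}

lemma Rset_cover (t : ℝ) (W : List Bool) : ∀ x ∈ recur β W (Kset β t), ∃ c ∈ Rset β t W,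
    x ∈ cyl β c ∧ (Tbeta β)^[c.length] x ∈ recur β W (Kset β t) := by
  classical
  rintro x ⟨hK, hW, hio⟩
  have hex : ∃ n, 1 ≤ n ∧ (Tbeta β)^[n] x ∈ cyl β W := hio 1
  set n := Nat.find hex with hn
  obtain ⟨hn1, hn2⟩ := Nat.find_spec hex
  refine ⟨pre β x n, ⟨?_, x, hK, hW, mem_cyl_pre hK.1 n, ?_, ?_⟩, mem_cyl_pre hK.1 n, ?_, ?_, ?_⟩
  · rw [← List.length_pos_iff, pre_length]; omega
  · rw [pre_length]; exact hn2
  · intro j hj hj2 hj3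
    rw [pre_length] at hj2
    exact Nat.find_min hex hj2 ⟨hj, hj3⟩
  · exact Kset_iter hK _
  · rw [pre_length]; exact hn2
  · intro N
    rw [pre_length]
    obtain ⟨k, hk, hk2⟩ := hio (n + N)
    refine ⟨k - n, by omega, ?_⟩
    rw [← iter_add, Nat.add_sub_cancel' (by omega)]; exact hk2

lemma Rset_blk (t : ℝ) (W : List Bool) : Blk W (Rset β t W) := by
  refine ⟨fun c hc => hc.1, ?_, ?_⟩
  · rintro c ⟨-, x, hK, hW, hc, hr, -⟩
    exact cyl_prefix hW (mem_cyl_append.2 ⟨hc, hr⟩) (by simp)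
  · rintro c ⟨hne, -⟩ c' ⟨-, x, hK, hW, hc, hr, hfirst⟩ hp
    have h1 : x ∈ cyl β (c ++ W) := cyl_mono hp (mem_cyl_append.2 ⟨hc, hr⟩)
    have h2 := (mem_cyl_append.1 h1)
    have h3 := hp.length_le
    simp at h3
    have h4 : c.length = c'.length := by
      by_contra hcon
      exact hfirst c.length (List.length_pos_iff.2 hne) (by omega) h2.2
    exact (cyl_prefix h2.1 hc h3).eq_of_length h4

lemma Rset_ok (h : Ctx β m) {t : ℝ} {W c : List Bool} (hc : c ∈ Rset β t W) : IsOk m (c ++ W) := by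
  obtain ⟨-, x, hK, hW, hc, hr, -⟩ := hc
  exact cyl_isOk h (mem_cyl_append.2 ⟨hc, hr⟩)

lemma Rset_suffix (h : Ctx β m) {t : ℝ} {W c : List Bool} (ht : t ∈ cyl β W) (hc : c ∈ Rset β t W)
    {v : List Bool} (hv : v <:+ c) (hne : v ≠ []) (hne' : v ≠ c) {z w : ℝ}
    (hz : z ∈ cyl β (v ++ W)) (hw : w ∈ cyl β W) : w < z := by
  obtain ⟨-, x, hK, hW, hxc, hr, hfirst⟩ := hc
  obtain ⟨a, rfl⟩ := hv
  have ha : a ≠ [] := by rintro rfl; simp at hne'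
  have h1 := mem_cyl_append.2 ⟨hxc, hr⟩
  rw [List.append_assoc] at h1
  have h2 := (mem_cyl_append.1 h1).2
  have hla := List.length_pos_iff.2 ha
  have hlv := List.length_pos_iff.2 hne
  refine above_cyl h ht (hK.2 a.length) (iter_mem hK.1 _) (hfirst a.length hla (by simp; omega))
    (n := (v ++ W).length) (by simp) ?_ hw
  rw [h2.2]; exact hz

lemma Rset_sum (h : Ctx β m) {t : ℝ} {W : List Bool} {s : ℝ≥0}
    (h1 : dimH (avoid β W (Kset β t)) < dimH (Kset β t)) (h2 : (s:ℝ≥0∞) < dimH (Kset β t)) :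
    1 ≤ ws β s (Rset β t W) := by
  by_contra hcon
  have h3 := L1 h (X := recur β W (Kset β t)) (fun x hx => hx.1.1) (Rset_cover t W) (not_le.1 hcon)
  have h4 := split_dim h W (Kset_sub (β := β) t) (fun x hx => Kset_T hx)
  exact absurd h4 (not_le.2 (max_lt h1 (h3.trans_lt h2)))

lemma ws_gap (h : Ctx β m) {A : Set (List Bool)} {L : ℕ} (hA : ∀ c ∈ A, L ≤ c.length) {s s' : ℝ≥0}
    (hs : s ≤ s') : ws β s' A ≤ qq β (s' - s) ^ L * ws β s A := by
  unfold ws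
  rw [← ENNReal.tsum_mul_left]
  refine ENNReal.tsum_le_tsum fun c => ?_
  unfold wt
  have : s' = (s' - s) + s := (tsub_add_cancel_of_le hs).symm
  conv_lhs => rw [this]
  rw [qq_add h, mul_pow]
  exact mul_le_mul_left (pow_le_pow_of_le_one (by simp) (qq_le_one h _) (hA c.1 c.2)) _

/-- concatenations of `M` blocks -/
def powF (F : Set (List Bool)) (M : ℕ) : Set (List Bool) :=
  {u | ∃ l : List (List Bool), l.length = M ∧ (∀ d ∈ l, d ∈ F) ∧ u = l.flatten}

lemma powF_ws {W : List Bool} {F : Set (List Bool)} (hb : Blk W F) (s : ℝ≥0) (M : ℕ) :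
    (ws β s F) ^ M ≤ ws β s (powF F M) := by
  have := tsum_list_len (fun d : F => wt β s d.1) M
  unfold ws
  rw [← this]
  let f : {l : List F // l.length = M} → powF F M := fun l =>
    ⟨(l.1.map Subtype.val).flatten, l.1.map Subtype.val, by simp [l.2], map_val_mem l.1, rfl⟩
  have hf : Function.Injective f := by
    intro l l' hll
    have := flatten_inj hb (map_val_mem l.1) (map_val_mem l'.1) (congrArg Subtype.val hll)
    exact Subtype.ext (List.map_injective_iff.2 Subtype.val_injective this)
  refine le_trans (le_of_eq (tsum_congr fun l => ?_)) (ENNReal.tsum_comp_le_tsum_of_injective hf _)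
  simp only [f]
  rw [wt_flatten, List.map_map]; rfl

lemma powF_finite {F : Set (List Bool)} (hF : F.Finite) (M : ℕ) : (powF F M).Finite := by
  induction M with
  | zero =>
    refine (finite_singleton ([] : List Bool)).subset ?_
    rintro u ⟨l, hl, -, rfl⟩
    simp [List.length_eq_zero_iff.1 hl]
  | succ M ih =>
    refine (Set.Finite.image2 (fun a b : List Bool => a ++ b) hF ih).subset ?_
    rintro u ⟨l, hl, hl2, rfl⟩
    cases l with
    | nil => simp at hl
    | cons d l =>
      exact ⟨d, hl2 d (by simp), l.flatten, ⟨l, by simpa using hl,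
        fun x hx => hl2 x (List.mem_cons_of_mem _ hx), rfl⟩, by simp⟩

lemma tail_blk {W : List Bool} {F : Set (List Bool)} (hb : Blk W F) {es : List (List Bool)}
    (hes : ∀ d ∈ es, d ∈ F) (hne : es ≠ []) (M : ℕ) :
    Blk W ((fun u => u ++ es.flatten) '' powF F M) := by
  have hall : ∀ l : List (List Bool), (∀ d ∈ l, d ∈ F) → ∀ d ∈ l ++ es, d ∈ F := by
    intro l hl d hd
    rcases List.mem_append.1 hd with h | h
    · exact hl d h
    · exact hes d h
  refine ⟨?_, ?_, ?_⟩
  · rintro d ⟨u, ⟨l, hl, hl2, rfl⟩, rfl⟩ hcon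
    simp only [List.append_eq_nil_iff] at hcon
    obtain ⟨e, es', rfl⟩ := List.exists_cons_of_ne_nil hne
    have := hcon.2
    simp only [List.flatten_cons, List.append_eq_nil_iff] at this
    exact hb.ne e (hes e (by simp)) this.1
  · rintro d ⟨u, ⟨l, hl, hl2, rfl⟩, rfl⟩
    have := flat_pre hb.pre (hall l hl2)
    simpa using this
  · rintro d ⟨u, ⟨l, hl, hl2, rfl⟩, rfl⟩ d' ⟨u', ⟨l', hl', hl2', rfl⟩, rfl⟩ hp
    have := block_prefix hb (hall l hl2) (hall l' hl2') (by simpa using hp)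
    have := this.eq_of_length (by simp [hl, hl'])
    rw [List.append_cancel_right this]

lemma exists_pow_ge {x y : ℝ≥0∞} (hx : 1 < x) (hy : 0 < y) (b : ℝ≥0∞) (hb : b ≠ ⊤) :
    ∃ M : ℕ, b ≤ x ^ M * y := by
  have h1 : Tendsto (fun n : ℕ => x ^ n) atTop (nhds ⊤) := ENNReal.tendsto_pow_atTop_nhds_top_iff.2 hx
  obtain ⟨M, hM⟩ := (h1.eventually (lt_mem_nhds (ENNReal.div_lt_top hb hy.ne'))).exists
  refine ⟨M, ?_⟩
  by_cases hy2 : y = ⊤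
  · have : x ^ M ≠ 0 := pow_ne_zero M (zero_lt_one.trans hx).ne'
    rw [hy2, ENNReal.mul_top this]; exact le_top
  · exact ENNReal.div_le_iff_le_mul (Or.inl hy.ne') (Or.inl hy2) |>.1 hM.le

lemma run_low (h : Ctx β m) {W a : List Bool} {ta : ℝ} (hta : fw β a ta = ta)
    {F : Set (List Bool)} (hb : Blk W F)
    (hpr : ∀ f ∈ F, ∀ v, v <:+ f → v ≠ [] → v ≠ f → ta < val β (v ++ W))
    (hF : ∀ f ∈ F, f ≠ a → ta < val β (f ++ W)) {fs : List (List Bool)} (hfs : ∀ f ∈ fs, f ∈ F)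
    {e : List Bool} (he : e ∈ F) (hea : e ≠ a) {v : List Bool} (hv : v <:+ fs.flatten ++ e)
    (hne : v ≠ []) : ta < val β (v ++ W) := by
  induction fs generalizing v with
  | nil =>
    simp only [List.flatten_nil, List.nil_append] at hv
    by_cases hve : v = e
    · subst hve; exact hF v he hea
    · exact hpr e he v hv hne hve
  | cons f fs ih =>
    have h1 : ∀ x ∈ fs, x ∈ F := fun x hx => hfs x (List.mem_cons_of_mem _ hx)
    have hf := hfs f (by simp)
    rw [List.flatten_cons, List.append_assoc] at hv
    rcases suffix_app hv with h2 | ⟨v1, hv1, hv2, rfl⟩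
    · exact ih h1 h2 hne
    · have hpre : W <+: (fs.flatten ++ e) ++ W := by
        have := flat_pre hb.pre (l := fs ++ [e]) (by
          intro d hd
          rcases List.mem_append.1 hd with hh | hh
          · exact h1 d hh
          · rw [List.mem_singleton.1 hh]; exact he)
        simpa using this
      by_cases hvf : v1 = f ∧ f = a
      · obtain ⟨rfl, rfl⟩ := hvf
        rw [List.append_assoc, val_append]
        have h3 := ih h1 List.suffix_rfl (by
          intro hcon
          exact hb.ne e he (List.append_eq_nil_iff.1 hcon).2)
        calc ta = fw β v1 ta := hta.symm
          _ < _ := (fw_lt h v1).2 h3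
      · obtain ⟨z, hz⟩ := hpre
        rw [List.append_assoc, ← hz, ← List.append_assoc]
        refine lt_of_lt_of_le ?_ (val_append_ge h _ _)
        by_cases h5 : v1 = f
        · subst h5; exact hF v1 hf (fun hh => hvf ⟨rfl, hh⟩)
        · exact hpr f hf v1 hv2 hv1 h5

lemma finite_gap {D : Set (List Bool)} (hD : D.Finite) {W : List Bool} {t : ℝ}
    (hv : ∀ d ∈ D, ∀ v, v <:+ d → v ≠ [] → t < val β (v ++ W)) {b : ℝ} (hb : t < b) :
    ∃ τ, t < τ ∧ τ ≤ b ∧ ∀ d ∈ D, ∀ v, v <:+ d → v ≠ [] → τ ≤ val β (v ++ W) := by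
  set V := ⋃ d ∈ D, {v : List Bool | v <:+ d} with hV
  have hVf : V.Finite := by
    refine hD.biUnion fun d _ => ?_
    refine (List.finite_toSet d.tails).subset fun v hv => ?_
    simpa using hv
  set S := insert b ((fun v => val β (v ++ W)) '' {v | v ∈ V ∧ v ≠ []})
  have hS : S.Finite := ((hVf.subset fun v hv => hv.1).image _).insert b
  obtain ⟨τ, hτ, hmin⟩ := Set.exists_min_image S id hS ⟨b, mem_insert _ _⟩
  refine ⟨τ, ?_, hmin b (mem_insert _ _), fun d hd v hvd hne => hmin _ (mem_insert_of_mem _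
    ⟨v, ⟨mem_biUnion hd hvd, hne⟩, rfl⟩)⟩
  rcases hτ with rfl | ⟨v, ⟨hv1, hv2⟩, rfl⟩
  · exact hb
  · obtain ⟨d, hd, hd2⟩ := mem_iUnion₂.1 hv1
    exact hv d hd v hd2 hv2



lemma right_nbhd (h : Ctx β m) {x : ℝ} (hx : x ∈ Ico (0:ℝ) 1) (n : ℕ) :
    ∃ ε > 0, ∀ y, x ≤ y → y < x + ε → y ∈ cyl β (pre β x n) := by
  have h0 := h.pos
  induction n generalizing x with
  | zero =>
    exact ⟨1 - x, by linarith [hx.2], fun y h1 h2 => ⟨⟨hx.1.trans h1, by linarith⟩, rfl⟩⟩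
  | succ n ih =>
    obtain ⟨ε, hε, hy⟩ := ih (T_mem (β := β) x)
    have hbase : ∃ ε1 > 0, ∀ y, x ≤ y → y < x + ε1 → y ∈ Ico (0:ℝ) 1 ∧ dig β y = dig β x := by
      by_cases hd : 1 ≤ β * x
      · refine ⟨1 - x, by linarith [hx.2], fun y h1 h2 => ⟨⟨hx.1.trans h1, by linarith⟩, ?_⟩⟩
        have : 1 ≤ β * y := by nlinarith
        simp [dig, hd, this]
      · refine ⟨min (1 - x) ((1 - β * x) / β), lt_min (by linarith [hx.2])
          (div_pos (by linarith) h0), fun y h1 h2 => ?_⟩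
        have h3 := lt_of_lt_of_le h2 (add_le_add_right (min_le_left _ _) _)
        have h4 := lt_of_lt_of_le h2 (add_le_add_right (min_le_right _ _) _)
        refine ⟨⟨hx.1.trans h1, by linarith⟩, ?_⟩
        have h5 : (y - x) < (1 - β * x) / β := by linarith
        rw [lt_div_iff₀ h0] at h5
        have : ¬ 1 ≤ β * y := by nlinarith
        simp [dig, hd, this]
    obtain ⟨ε1, hε1, hy1⟩ := hbase
    refine ⟨min ε1 (ε / β), lt_min hε1 (by positivity), fun y h1 h2 => ?_⟩
    have h3 := lt_of_lt_of_le h2 (add_le_add_right (min_le_left _ _) _)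
    have h4 := lt_of_lt_of_le h2 (add_le_add_right (min_le_right _ _) _)
    obtain ⟨hyI, hyd⟩ := hy1 y h1 h3
    have h5 : (y - x) < ε / β := by linarith
    rw [lt_div_iff₀ h0] at h5
    have hT := hy (Tbeta β y) (by rw [T_eq h hx, T_eq h hyI, hyd]; nlinarith)
      (by rw [T_eq h hx, T_eq h hyI, hyd]; nlinarith)
    refine ⟨hyI, ?_⟩
    have := hT.2
    simp only [pre_length] at this
    simp only [pre, List.length_cons, pre_length, hyd, this]

lemma exists_right (h : Ctx β m) {x : ℝ} (hx : x ∈ Ico (0:ℝ) 1) (n : ℕ) :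
    ∃ y ∈ cyl β (pre β x n), x < y := by
  obtain ⟨ε, hε, hy⟩ := right_nbhd h hx n
  exact ⟨x + ε / 2, hy _ (by linarith) (by linarith), by linarith⟩

lemma B_lt {t t' : ℝ} (ht : t ∈ Bset β) (h1 : t < t') (h2 : t' < 1) :
    dimH (Kset β t') < dimH (Kset β t) :=
  lt_of_le_of_ne (dimH_mono (Kset_anti h1.le)) (ht.2 t' h1 h2)

lemma avoid_lt (h : Ctx β m) {t : ℝ} (ht : t ∈ Bset β) (N : ℕ) :
    dimH (avoid β (pre β t N) (Kset β t)) < dimH (Kset β t) := by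
  obtain ⟨t', ht', hlt⟩ := exists_right h ht.1 N
  refine lt_of_le_of_lt (dimH_mono ?_) (B_lt ht hlt ht'.1.2)
  rintro x ⟨hx, hav⟩
  refine ⟨hx.1, fun n => ?_⟩
  exact (above_cyl h (mem_cyl_pre ht.1 N) (hx.2 n) (iter_mem hx.1 n) (hav n) le_rfl
    (mem_cyl_pre (iter_mem hx.1 n) _) ht').le

lemma Rset_val (h : Ctx β m) {t : ℝ} (ht0 : t ∈ Ico (0:ℝ) 1) {W c : List Bool}
    (hc : c ∈ Rset β t W) (hne : t ∉ cyl β (c ++ W)) : t < val β (c ++ W) := by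
  have hok := Rset_ok h hc
  obtain ⟨-, x, hK, hW, hxc, hr, hfirst⟩ := hc
  have h1 : x ∈ cyl β (c ++ W) := mem_cyl_append.2 ⟨hxc, hr⟩
  have htx : t < x := lt_of_le_of_ne (hK.2 0) (by rintro rfl; exact hne h1)
  refine pre_le_order h ht0 h1.1 (n := (c ++ W).length) ?_ htx (mem_cyl_pre ht0 _) ?_
  · rw [h1.2]; exact fun hh => hne ⟨ht0, hh⟩
  · rw [h1.2]; exact val_mem_cyl h hok

lemma pre_ext (h : Ctx β m) {x y : ℝ} (hx : x ∈ Ico (0:ℝ) 1) (hy : y ∈ Ico (0:ℝ) 1)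
    (he : ∀ n, pre β x n = pre β y n) : x = y := by
  have h1 : ∀ n : ℕ, |x - y| ≤ 1 / β ^ n := by
    intro n
    have hx1 := cyl_lower h (mem_cyl_pre hx n)
    have hx2 := cyl_upper h (mem_cyl_pre hx n)
    have hy1 := cyl_lower h (mem_cyl_pre hy n)
    have hy2 := cyl_upper h (mem_cyl_pre hy n)
    rw [he n] at hx1 hx2
    rw [pre_length] at hx2 hy2
    rw [abs_le]; constructor <;> linarith
  have h2 : |x - y| ≤ 0 := ge_of_tendsto' (tendsto_inv_pow h 1) h1
  have := abs_nonpos_iff.1 h2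
  linarith

lemma sepN (h : Ctx β m) {t : ℝ} (ht : t ∈ Ico (0:ℝ) 1) (L : ℕ)
    (hL : ∀ l, 0 < l → l < L → (Tbeta β)^[l] t ≠ t) :
    ∃ N0, ∀ N, N0 ≤ N → ∀ l, 0 < l → l < L → (Tbeta β)^[l] t ∉ cyl β (pre β t N) := by
  induction L with
  | zero => exact ⟨0, fun N _ l _ hl => by omega⟩
  | succ L ih =>
    obtain ⟨N0, hN0⟩ := ih (fun l h1 h2 => hL l h1 (by omega))
    by_cases hL0 : L = 0
    · exact ⟨0, fun N _ l _ hl => by omega⟩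
    have hne := hL L (by omega) (by omega)
    have : ∃ k, pre β ((Tbeta β)^[L] t) k ≠ pre β t k := by
      by_contra hcon
      push Not at hcon
      exact hne (pre_ext h (iter_mem ht L) ht hcon)
    obtain ⟨k, hk⟩ := this
    refine ⟨max N0 k, fun N hN l h1 h2 hmem => ?_⟩
    rcases Nat.lt_succ_iff_lt_or_eq.1 h2 with h3 | rfl
    · exact hN0 N (le_of_max_le_left hN) l h1 h3 hmem
    · apply hk
      have := (cyl_mono (pre_prefix t (le_of_max_le_right hN)) hmem).2
      simpa using this

lemma dimH_from_blocks (h : Ctx β m) {t : ℝ} (ht0 : 0 ≤ t) (ht1 : t < 1) {W : List Bool} (hW : m ≤ W.length)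
    (hWok : IsOk m W) {D : Set (List Bool)} (hDf : D.Finite) (hb : Blk W D)
    (hok : ∀ d ∈ D, IsOk m (d ++ W))
    (hv : ∀ d ∈ D, ∀ v, v <:+ d → v ≠ [] → t < val β (v ++ W)) {s : ℝ≥0} (hs : 1 ≤ ws β s D) :
    ∃ τ, t < τ ∧ (s:ℝ≥0∞) ≤ dimH (Kset β τ) := by
  obtain ⟨τ, h1, h2, h3⟩ := finite_gap hDf hv ht1
  refine ⟨τ, h1, ?_⟩
  rw [← KQ_true]
  refine low h (by linarith) (fun _ _ _ _ => trivial) hb (fun l hl => ?_) hs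
  exact goodstar h h2 hb.pre hok hWok hW h3 hl (fun _ _ => trivial)

lemma M1 (h : Ctx β m) {t : ℝ} (ht : t ∈ Bset β) {s : ℝ≥0} (hs : (s:ℝ≥0∞) < dimH (Kset β t)) :
    ∃ τ, t < τ ∧ (s:ℝ≥0∞) ≤ dimH (Kset β τ) := by
  obtain ⟨s', hs1, hs2⟩ := ENNReal.lt_iff_exists_nnreal_btwn.1 hs
  have hss : s < s' := by exact_mod_cast hs1
  have hq : qq β (s' - s) < 1 := qq_lt_one h (tsub_pos_of_lt hss)
  have hR : ∀ N, 1 ≤ ws β s' (Rset β t (pre β t N)) := fun N => Rset_sum h (avoid_lt h ht N) hs2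
  have hsuf : ∀ N, ∀ f ∈ Rset β t (pre β t N), ∀ v, v <:+ f → v ≠ [] → v ≠ f →
      t < val β (v ++ pre β t N) := by
    intro N f hf v hv hne hne'
    refine Rset_suffix h (mem_cyl_pre ht.1 N) hf hv hne hne' (val_mem_cyl h ?_) (mem_cyl_pre ht.1 N)
    obtain ⟨z, rfl⟩ := hv
    have := Rset_ok h hf
    rw [List.append_assoc] at this
    exact this.right
  by_cases hper : ∃ l, 0 < l ∧ (Tbeta β)^[l] t = t
  · classical
    set p := Nat.find hper with hp
    obtain ⟨hp0, hpt⟩ := Nat.find_spec hper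
    have hmin : ∀ l, 0 < l → l < p → (Tbeta β)^[l] t ≠ t :=
      fun l h1 h2 h3 => Nat.find_min hper h2 ⟨h1, h3⟩
    obtain ⟨N0, hN0⟩ := sepN h ht.1 p hmin
    set N := max N0 m with hN
    have hNm : m ≤ N := le_max_right _ _
    set W := pre β t N with hW
    have hWl : m ≤ W.length := by rw [hW, pre_length]; exact hNm
    have hWok : IsOk m W := isOk_pre h ht.1 N
    set a := pre β t p with ha
    have hexc : ∀ c ∈ Rset β t W, c ≠ a → t < val β (c ++ W) := by
      intro c hc hca
      apply Rset_val h ht.1 hc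
      intro hmem
      have h1 := mem_cyl_append.1 hmem
      have hcl : 0 < c.length := List.length_pos_iff.2 hc.1
      rcases lt_trichotomy c.length p with hlt | heq | hgt
      · exact hN0 N (le_max_left _ _) _ hcl hlt h1.2
      · exact hca (by rw [← h1.1.2, heq])
      · obtain ⟨-, x, hK, hxW, hxc, hr, hfirst⟩ := hc
        apply hfirst p hp0 hgt
        have hx2 : x ∈ cyl β (c ++ W) := mem_cyl_append.2 ⟨hxc, hr⟩
        have h3 : a ++ W <+: c ++ W := by
          apply cyl_prefix (x := t) _ hmem
          · simp [ha]; exact hgt.le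
          · refine mem_cyl_append.2 ⟨mem_cyl_pre ht.1 p, ?_⟩
            rw [ha, pre_length, hpt]; exact mem_cyl_pre ht.1 N
        have h4 := (mem_cyl_append.1 (cyl_mono h3 hx2)).2
        rw [ha, pre_length] at h4
        exact h4
    have hbig : 1 < ws β s (Rset β t W) := by
      by_contra hcon
      have h1 := ws_gap h (A := Rset β t W) (L := 1)
        (fun c hc => List.length_pos_iff.2 hc.1) hss.le
      have h2 : qq β (s' - s) ^ 1 * ws β s (Rset β t W) < 1 := by
        calc _ ≤ qq β (s' - s) ^ 1 * 1 := by gcongr; exact not_lt.1 hcon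
          _ < 1 := by simpa using hq
      exact absurd ((hR N).trans h1) (not_le.2 h2)
    obtain ⟨F, hFR, hF1⟩ := ws_exists_finset hbig
    have hbF : Blk W (↑F : Set _) := (Rset_blk t W).mono hFR
    have hc : ∃ c ∈ F, c ≠ a := by
      by_contra hcon
      push Not at hcon
      have : ws β s (↑F : Set _) ≤ ws β s {a} := ws_mono s (fun c hc => hcon c hc)
      rw [ws_singleton] at this
      exact absurd hF1 (not_lt.2 (this.trans (wt_le_one h s a)))
    obtain ⟨c, hcF, hca⟩ := hc
    obtain ⟨M, hM⟩ := exists_pow_ge hF1 (wt_pos h s c) 1 (by simp)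
    have hbD : Blk W ((fun u => u ++ [c].flatten) '' powF (↑F : Set _) M) :=
      tail_blk hbF (by simpa using hcF) (by simp) M
    simp only [List.flatten_cons, List.flatten_nil, List.append_nil] at hbD
    refine dimH_from_blocks h ht.1.1 ht.1.2 hWl hWok ((powF_finite F.finite_toSet M).image _) hbD ?_ ?_ ?_
    · rintro d ⟨u, ⟨l, hl, hl2, rfl⟩, rfl⟩
      have := star_ok (m := m) hbF.pre (fun d hd => Rset_ok h (hFR hd)) hWok hWl (l := l ++ [c]) (by
        intro d hd
        rcases List.mem_append.1 hd with hh | hh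
        · exact hl2 d hh
        · rw [List.mem_singleton.1 hh]; exact hcF)
      simpa using this
    · rintro d ⟨u, ⟨l, hl, hl2, rfl⟩, rfl⟩ v hv hne
      have hta : fw β a t = t := by
        have := fw_pre h ht.1 p
        rwa [hpt] at this
      exact run_low h hta hbF (fun f hf => hsuf N f (hFR hf)) (fun f hf => hexc f (hFR hf))
        hl2 hcF hca hv hne
    · rw [ws_image_append_right]
      refine hM.trans ?_
      gcongr
      exact powF_ws hbF s M
  · push Not at hper
    obtain ⟨L, hL⟩ := qq_small h (tsub_pos_of_lt hss) (ε := 1 / 3) (ENNReal.div_pos (by simp) (by simp))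
    obtain ⟨N0, hN0⟩ := sepN h ht.1 L (fun l h1 _ => hper l h1)
    set N := N0 + L + m with hN
    set W := pre β t N with hW
    have hWl : m ≤ W.length := by rw [hW, pre_length]; omega
    have hWok : IsOk m W := isOk_pre h ht.1 N
    have hlen : ∀ c ∈ Rset β t W, L ≤ c.length := by
      intro c hc
      by_contra hcon
      push Not at hcon
      have hcl : 0 < c.length := List.length_pos_iff.2 hc.1
      have hp := (Rset_blk t W).pre c hc
      have hcW : c <+: W := List.prefix_of_prefix_length_le (List.prefix_append _ _) hp
        (by rw [hW, pre_length]; omega)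
      obtain ⟨z, hz⟩ := hcW
      rw [← hz, List.prefix_append_right_inj, hz] at hp
      have htz : t ∈ cyl β (c ++ z) := by rw [hz]; exact mem_cyl_pre ht.1 N
      have h2 := (mem_cyl_append.1 htz).2
      have hzl : z.length = N - c.length := by
        have := congrArg List.length hz
        rw [hW, pre_length, List.length_append] at this; omega
      have h3 : z = pre β t (N - c.length) := by
        rw [List.prefix_iff_eq_take, hW, pre_take t (by omega), hzl] at hp; exact hp
      rw [h3] at h2
      exact hN0 _ (by omega) _ hcl hcon h2
    have h1 := (hR N).trans (ws_gap h hlen hss.le)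
    have h2 : 3 ≤ ws β s (Rset β t W) := by
      have : 1 ≤ 1 / 3 * ws β s (Rset β t W) := h1.trans (by gcongr)
      calc (3:ℝ≥0∞) = 3 * 1 := by simp
        _ ≤ 3 * (1 / 3 * ws β s (Rset β t W)) := by gcongr
        _ = _ := by rw [← mul_assoc, ENNReal.mul_div_cancel (by simp) (by simp), one_mul]
    set R' := {c | c ∈ Rset β t W ∧ t ∉ cyl β (c ++ W)} with hR'
    have h3 : ws β s (Rset β t W) ≤ ws β s R' + 1 := by
      by_cases hex : ∃ c ∈ Rset β t W, t ∈ cyl β (c ++ W)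
      · obtain ⟨c, hc, hct⟩ := hex
        have hsub : Rset β t W ⊆ R' ∪ {c} := by
          intro d hd
          by_cases hdt : t ∈ cyl β (d ++ W)
          · right
            rcases cyl_comparable hct hdt with hh | hh
            · exact ((Rset_blk t W).inc c hc d hd hh).symm
            · exact (Rset_blk t W).inc d hd c hc hh
          · left; exact ⟨hd, hdt⟩
        refine (ws_mono s hsub).trans ((ws_union s _ _).trans ?_)
        gcongr
        rw [ws_singleton]; exact wt_le_one h s c
      · push Not at hex
        have hsub : Rset β t W ⊆ R' := fun c hc => ⟨hc, hex c hc⟩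
        exact (ws_mono s hsub).trans le_self_add
    have h4 : 1 < ws β s R' := by
      by_contra hcon
      have h5 : ws β s R' + 1 ≤ 1 + 1 := by gcongr; exact not_lt.1 hcon
      have h6 := h2.trans (h3.trans h5)
      norm_num at h6
    obtain ⟨F, hFR, hF1⟩ := ws_exists_finset h4
    refine dimH_from_blocks h ht.1.1 ht.1.2 hWl hWok F.finite_toSet
      ((Rset_blk t W).mono (fun d hd => (hFR hd).1)) (fun d hd => Rset_ok h (hFR hd).1) ?_ hF1.le
    intro d hd v hv hne
    by_cases hvd : v = d
    · subst hvd; exact Rset_val h ht.1 (hFR hd).1 (hFR hd).2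
    · exact hsuf N d (hFR hd).1 v hv hne hvd


lemma exists_inv_pow (h : Ctx β m) {c : ℝ} (hc : 0 < c) (N0 : ℕ) :
    ∃ N, N0 ≤ N ∧ 1 / β ^ N < c := by
  have := (tendsto_inv_pow h 1).eventually (gt_mem_nhds hc)
  obtain ⟨N, h1, h2⟩ := (this.and (eventually_ge_atTop N0)).exists
  exact ⟨N, h2, h1⟩

lemma binv_anti (h : Ctx β m) {k n : ℕ} (hk : k ≤ n) : 1 / β ^ n ≤ 1 / β ^ k :=
  one_div_le_one_div_of_le (pow_pos h.pos _) (pow_le_pow_right₀ h.h1.le hk)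

lemma cyl_last {x : ℝ} {v : List Bool} (hx : x ∈ cyl β v) :
    x ∈ cyl β (v ++ [dig β ((Tbeta β)^[v.length] x)]) := by
  rw [mem_cyl_append]
  exact ⟨hx, iter_mem hx.1 _, by simp [pre]⟩

lemma cyl_two {x : ℝ} {v : List Bool} (hx : x ∈ cyl β v) (d : Bool) (hn : x ∉ cyl β (v ++ [d])) :
    x ∈ cyl β (v ++ [!d]) := by
  have := cyl_last hx
  rcases hh : dig β ((Tbeta β)^[v.length] x) with _ | _ <;> cases d <;> simp_all

lemma M2 (h : Ctx β m) {t : ℝ} (ht : t ∈ Bset β) {r : ℝ} (hr : 0 < r) {s0 : ℝ≥0∞}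
    (hs0 : s0 < dimH (Kset β t)) :
    ∃ (W : List Bool) (s2 : ℝ≥0), m ≤ W.length ∧ IsOk m W ∧ cyl β W ⊆ Ioo t (t + r) ∧ t < val β W ∧
      dimH (avoid β W (Kset β (val β W))) < s2 ∧ s0 < s2 ∧ s2 < dimH (Kset β (val β W)) := by
  have ht0 := ht.1
  obtain ⟨N0, hN0m, hN0r⟩ := exists_inv_pow h hr m
  set A : ℕ → Set ℝ := fun N => avoid β (pre β t N) (Kset β t) with hA
  obtain ⟨s, hs1, hs2⟩ := ENNReal.lt_iff_exists_nnreal_btwn.1 (max_lt (avoid_lt h ht N0) hs0)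
  obtain ⟨τ', htτ, hτ'⟩ := M1 h ht hs2
  obtain ⟨N1, -, hN1⟩ := exists_inv_pow h (sub_pos.2 htτ) 0
  have hmono : ∀ {k n}, k ≤ n → A k ⊆ A n := fun hk x hx =>
    ⟨hx.1, fun j hj => hx.2 j (cyl_mono (pre_prefix t hk) hj)⟩
  have htc : ∀ N, t ∈ cyl β (pre β t N) := mem_cyl_pre ht0
  have hup : ∀ N x, x ∈ cyl β (pre β t N) → x < t + 1 / β ^ N := by
    intro N x hx
    have h1 := cyl_upper h hx
    have h2 := cyl_lower h (htc N)
    rw [pre_length] at h1; linarith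
  have hK1 : Kset β τ' ⊆ A N1 := by
    intro x hx
    refine ⟨Kset_anti htτ.le hx, fun n hn => ?_⟩
    have := hup _ _ hn
    have := hx.2 n
    linarith
  obtain ⟨N, hNN, hP1, hP2⟩ : ∃ N, N0 ≤ N ∧ dimH (A N) < s ∧ s ≤ dimH (A (N + 1)) := by
    by_contra hcon
    push Not at hcon
    have hall : ∀ N, N0 ≤ N → dimH (A N) < s := by
      intro N hN
      induction N, hN using Nat.le_induction with
      | base => exact (le_max_left _ _).trans_lt hs1
      | succ n hn ih => exact hcon n hn ih
    have h1 := hall (max N0 N1) (le_max_left _ _)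
    have h2 := hτ'.trans (dimH_mono (hK1.trans (hmono (le_max_right N0 N1))))
    exact absurd h1 (not_lt.2 h2)
  have hnsub : ¬ A (N + 1) ⊆ A N := fun hc =>
    absurd (hP2.trans (dimH_mono hc)) (not_le.2 hP1)
  set d := dig β ((Tbeta β)^[N] t) with hd
  have hpre : pre β t (N + 1) = pre β t N ++ [d] := by
    rw [pre_add]; rfl
  have hlenN : (pre β t N).length = N := pre_length _ _
  have hdf : d = false := by
    by_contra hdt
    have hdt : d = true := by simpa using hdt
    apply hnsub
    intro x hx
    refine ⟨hx.1, fun n hn => hx.2 n ?_⟩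
    rw [hpre, hdt]
    by_contra hc
    have hc2 := (mem_cyl_append.1 (cyl_two hn true hc)).2
    have hz : t ≤ (Tbeta β)^[n] x := hx.1.2 n
    have e1 := fw_cyl h hn
    have e2 := fw_cyl h (htc N)
    have hz : (Tbeta β)^[(pre β t N).length] t ≤
        (Tbeta β)^[(pre β t N).length] ((Tbeta β)^[n] x) := by
      rw [← fw_le h (pre β t N), e1, e2]; exact hz
    rw [hlenN] at hz hc2
    have h3 := hc2.2
    rw [hd, dig, decide_eq_true_iff] at hdt
    simp only [List.length_singleton, pre, Bool.not_true, List.cons.injEq, and_true, dig,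
      decide_eq_false_iff_not] at h3
    apply h3
    refine hdt.trans ?_
    have := h.pos
    gcongr
  rw [hdf] at hpre
  set W := pre β t N ++ [true] with hW
  obtain ⟨x0, hx0, hx0'⟩ := Set.not_subset.1 hnsub
  have hx0'' : ∃ n, (Tbeta β)^[n] x0 ∈ cyl β (pre β t N) := by
    by_contra hc
    push Not at hc
    exact hx0' ⟨hx0.1, hc⟩
  obtain ⟨n, hn⟩ := hx0''
  have hnn := hx0.2 n
  set z := (Tbeta β)^[n] x0 with hz
  rw [hpre] at hnn
  have hzW : z ∈ cyl β W := cyl_two hn false hnn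
  have hWok := cyl_isOk h hzW
  have hvW := val_mem_cyl h hWok
  have htz : t ≤ z := hx0.1.2 n
  have hWl : W.length = N + 1 := by simp [hW]
  have hlt : ∀ w ∈ cyl β (pre β t (N + 1)), w < val β W := by
    intro w hw
    refine above_cyl h (htc (N + 1)) htz hzW.1 (by rwa [hpre]) (n := N + 1) (by simp) ?_ hw
    rw [← hWl, hzW.2]; exact hvW
  have htW := hlt t (htc _)
  have hWsub : cyl β W ⊆ cyl β (pre β t N) := cyl_mono (List.prefix_append _ _)
  have hKτ : A (N + 1) ⊆ Kset β (val β W) := by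
    intro x hx
    refine ⟨hx.1.1, fun j => ?_⟩
    have hj : t ≤ (Tbeta β)^[j] x := hx.1.2 j
    have hj' := hx.2 j
    by_cases hc : (Tbeta β)^[j] x ∈ cyl β (pre β t N)
    · rw [hpre] at hj'
      exact cyl_lower h (cyl_two hc false hj')
    · exact (above_cyl h (htc N) hj (iter_mem hx.1.1 j) hc (n := N) (by simp)
        (mem_cyl_pre (iter_mem hx.1.1 j) N) (hWsub hvW)).le
  have hav : avoid β W (Kset β (val β W)) ⊆ A N := by
    intro x hx
    refine ⟨Kset_anti htW.le hx.1, fun j hj => ?_⟩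
    have h1 := cyl_two hj true (hx.2 j)
    rw [Bool.not_true, ← hpre] at h1
    exact absurd (hlt _ h1) (not_lt.2 (hx.1.2 j))
  obtain ⟨s2, hs21, hs22⟩ := ENNReal.lt_iff_exists_nnreal_btwn.1
    (max_lt hP1 ((le_max_right _ _).trans_lt hs1))
  refine ⟨W, s2, by omega, hWok, ?_, htW, ((dimH_mono hav).trans (le_max_left _ _)).trans_lt hs21,
    (le_max_right _ _).trans_lt hs21, hs22.trans_le (hP2.trans (dimH_mono hKτ))⟩
  intro w hw
  refine ⟨htW.trans_le (cyl_lower h hw), (hup N w (hWsub hw)).trans ?_⟩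
  have := binv_anti h hNN
  linarith


/-- power of a word -/
def pw (a : List Bool) (k : ℕ) : List Bool := (List.replicate k a).flatten

lemma pw_zero (a) : pw a 0 = [] := rfl
lemma pw_succ (a k) : pw a (k + 1) = a ++ pw a k := by simp [pw, List.replicate_succ]
lemma pw_add (a j k) : pw a (j + k) = pw a j ++ pw a k := by
  rw [pw, List.replicate_add, List.flatten_append]; rfl
lemma pw_len (a k) : (pw a k).length = k * a.length := by simp [pw]

lemma pw_pre {W a : List Bool} (hp : W <+: a ++ W) (k : ℕ) : W <+: pw a k ++ W :=
  flat_pre (D := {a}) (by rintro d rfl; exact hp) (fun d hd => List.eq_of_mem_replicate hd)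

lemma pw_ok {W a : List Bool} (hp : W <+: a ++ W) (hok : IsOk m (a ++ W)) (hW : m ≤ W.length)
    (k : ℕ) : IsOk m (pw a k ++ W) :=
  star_ok (D := {a}) (by rintro d rfl; exact hp) (by rintro d rfl; exact hok) hok.right hW
    (fun d hd => List.eq_of_mem_replicate hd)

lemma cyl_disj_ord (h : Ctx β m) {W : List Bool} {D : Set (List Bool)} (hb : Blk W D)
    (hok : ∀ d ∈ D, IsOk m (d ++ W)) {d d' : List Bool} (hd : d ∈ D) (hd' : d' ∈ D)
    (hne : d ≠ d') (hle : val β (d ++ W) ≤ val β (d' ++ W)) :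
    ∀ x ∈ cyl β (d ++ W), ∀ z ∈ cyl β (d' ++ W), x < z := by
  intro x hx z hz
  have n1 : ¬ d ++ W <+: d' ++ W := fun hc => hne (hb.inc d hd d' hd' hc)
  have n2 : ¬ d' ++ W <+: d ++ W := fun hc => hne (hb.inc d' hd' d hd hc).symm
  have m1 := val_mem_cyl h (hok d hd)
  have m2 := val_mem_cyl h (hok d' hd')
  refine ord_cyl h n1 n2 m1 m2 (lt_of_le_of_ne hle ?_) hx hz
  intro he
  rw [he] at m1
  rcases cyl_comparable m1 m2 with hh | hh
  · exact n1 hh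
  · exact n2 hh

lemma exists_F (h : Ctx β m) {W : List Bool} {s2 : ℝ≥0}
    (hav : dimH (avoid β W (Kset β (val β W))) < s2) (hs2 : s2 < dimH (Kset β (val β W))) :
    ∃ (F : Set (List Bool)) (a c : List Bool), F.Finite ∧ F ⊆ Rset β (val β W) W ∧ a ∈ F ∧ c ∈ F ∧
      1 < ws β s2 F ∧ a ≠ c ∧
      (∀ d ∈ F, d ≠ a → ∀ x ∈ cyl β (a ++ W), ∀ z ∈ cyl β (d ++ W), x < z) ∧
      (∀ d ∈ F, d ≠ c → ∀ x ∈ cyl β (d ++ W), ∀ z ∈ cyl β (c ++ W), x < z) := by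
  obtain ⟨s', h1, h2⟩ := ENNReal.lt_iff_exists_nnreal_btwn.1 hs2
  have h1 : s2 < s' := by exact_mod_cast h1
  have hR := Rset_sum h (hav.trans hs2) h2
  have hlen : ∀ c ∈ Rset β (val β W) W, 1 ≤ c.length := fun c hc =>
    List.length_pos_of_ne_nil hc.1
  have hR1 : 1 < ws β s2 (Rset β (val β W) W) := by
    by_contra hcon
    have h3 := hR.trans (ws_gap h hlen h1.le)
    have h4 : qq β (s' - s2) ^ 1 * ws β s2 (Rset β (val β W) W) ≤ qq β (s' - s2) ^ 1 * 1 := by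
      gcongr; exact not_lt.1 hcon
    have h5 := qq_lt_one h (tsub_pos_of_lt h1)
    rw [pow_one, mul_one] at h4
    exact absurd (h3.trans (by rwa [pow_one])) (not_le.2 h5)
  obtain ⟨F, hFR, hF1⟩ := ws_exists_finset hR1
  have hne : F.Nonempty := by
    rw [Finset.nonempty_iff_ne_empty]; rintro rfl
    simp [ws] at hF1
  obtain ⟨a, ha, hamin⟩ := F.exists_min_image (fun d => val β (d ++ W)) hne
  obtain ⟨c, hc, hcmax⟩ := F.exists_max_image (fun d => val β (d ++ W)) hne
  have hb := (Rset_blk (β := β) (val β W) W).mono hFR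
  have hok : ∀ d ∈ (↑F : Set (List Bool)), IsOk m (d ++ W) := fun d hd => Rset_ok h (hFR hd)
  have A1 : ∀ d ∈ (↑F : Set (List Bool)), d ≠ a → ∀ x ∈ cyl β (a ++ W), ∀ z ∈ cyl β (d ++ W), x < z :=
    fun d hd hda => cyl_disj_ord h hb hok ha hd hda.symm (hamin d hd)
  refine ⟨↑F, a, c, F.finite_toSet, hFR, ha, hc, hF1, ?_, A1,
    fun d hd hdc => cyl_disj_ord h hb hok hd hc hdc (hcmax d hd)⟩
  rintro rfl
  have hsub : (↑F : Set (List Bool)) ⊆ {a} := by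
    intro d hd
    by_contra hda
    have h6 := A1 d hd hda _ (val_mem_cyl h (hok a ha)) _ (val_mem_cyl h (hok d hd))
    exact absurd (hcmax d hd) (not_le.2 h6)
  have := (ws_mono (β := β) s2 hsub).trans ((ws_singleton s2 a).le.trans (wt_le_one h s2 a))
  exact absurd hF1 (not_lt.2 this)

lemma fixpt (h : Ctx β m) {W a c : List Bool} (hW : m ≤ W.length) (ha : a ∈ Rset β (val β W) W)
    (hc : c ∈ Rset β (val β W) W)
    (hord : ∀ x ∈ cyl β (a ++ W), ∀ z ∈ cyl β (c ++ W), x < z) :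
    ∃ ta ∈ cyl β (a ++ W), fw β a ta = ta := by
  have hane := ha.1
  have hb := Rset_blk (β := β) (val β W) W
  have aok := Rset_ok h ha
  have Wok := aok.right
  have hp : 1 < β ^ a.length := one_lt_pow₀ h.h1 (List.length_pos_of_ne_nil hane).ne'
  set ta := val β a * β ^ a.length / (β ^ a.length - 1) with hta
  have hfix : fw β a ta = ta := by
    rw [fw_eq h, hta]
    have : β ^ a.length - 1 ≠ 0 := by linarith
    have : β ^ a.length ≠ 0 := by linarith
    field_simp
    ring
  have hcmp : ∀ x, fw β a x - ta = (x - ta) / β ^ a.length := by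
    intro x
    have := fw_sub h a x ta
    rwa [hfix] at this
  have hWm := val_mem_cyl h Wok
  have hsub : cyl β (a ++ W) ⊆ cyl β W := cyl_mono (hb.pre a ha)
  have hsubc : cyl β (c ++ W) ⊆ cyl β W := cyl_mono (hb.pre c hc)
  have k1 : val β W ≤ ta := by
    have h1 := cyl_lower h (hsub (fw_mem_cyl h aok hW hWm).1)
    have h2 := hcmp (val β W)
    by_contra hlt
    push Not at hlt
    have : (val β W - ta) / β ^ a.length < val β W - ta := div_lt_self (by linarith) hp
    linarith
  have hcc := val_mem_cyl h (Rset_ok h hc)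
  have k2 : ta ≤ val β (c ++ W) := by
    have h1 := hord _ (fw_mem_cyl h aok hW (hsubc hcc)).1 _ hcc
    have h2 := hcmp (val β (c ++ W))
    by_contra hlt
    push Not at hlt
    have : (ta - val β (c ++ W)) / β ^ a.length < ta - val β (c ++ W) := div_lt_self (by linarith) hp
    have e : (val β (c ++ W) - ta) / β ^ a.length = - ((ta - val β (c ++ W)) / β ^ a.length) := by ring
    linarith
  have k3 := cyl_convex h hWm (hsubc hcc) k1 k2
  refine ⟨ta, ?_, hfix⟩
  have := (fw_mem_cyl h aok hW k3).1
  rwa [hfix] at this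

lemma runUp (h : Ctx β m) {W c : List Bool} {F : Set (List Bool)} (hW : m ≤ W.length)
    (hFR : F ⊆ Rset β (val β W) W) (hc : c ∈ F)
    (hord : ∀ d ∈ F, d ≠ c → ∀ x ∈ cyl β (d ++ W), ∀ z ∈ cyl β (c ++ W), x < z) (k : ℕ) :
    ∀ L : List (List Bool), (∀ d ∈ L, d ∈ F) → (L.length ≤ k ∨ ∃ d ∈ L.take k, d ≠ c) →
      val β (L.flatten ++ W) ≤ val β (pw c k ++ W) := by
  have hb := (Rset_blk (β := β) (val β W) W).mono hFR
  have hok : ∀ d ∈ F, IsOk m (d ++ W) := fun d hd => Rset_ok h (hFR hd)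
  have Wok := (hok c hc).right
  have hck : ∀ k, val β (pw c k ++ W) ∈ cyl β (pw c k ++ W) := fun k =>
    val_mem_cyl h (pw_ok (hb.pre c hc) (hok c hc) hW k)
  induction k with
  | zero =>
    intro L hL hh
    have : L = [] := by simpa using hh
    subst this; simp [pw_zero]
  | succ k ih =>
    intro L hL hh
    cases L with
    | nil =>
      simp only [List.flatten_nil, List.nil_append]
      exact cyl_lower h (cyl_mono (pw_pre (hb.pre c hc) (k + 1)) (hck (k + 1)))
    | cons d L =>
      have hdF := hL d (by simp)
      have hLF : ∀ d ∈ L, d ∈ F := fun e he => hL e (by simp [he])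
      by_cases hdc : d = c
      · subst hdc
        rw [pw_succ, List.flatten_cons, List.append_assoc, List.append_assoc, val_append,
          val_append (d), fw_le h]
        refine ih L hLF ?_
        simpa using hh
      · have h1 := hck (k + 1)
        rw [pw_succ, List.append_assoc] at h1
        have hokL := star_ok hb.pre hok Wok hW hL
        have h2 := val_mem_cyl h hokL
        rw [List.flatten_cons, List.append_assoc] at h2
        have h3 := hord d hdF hdc _ (cyl_mono ?_ h2) _ (cyl_mono ?_ h1)
        · rw [pw_succ, List.flatten_cons, List.append_assoc, List.append_assoc]; exact h3.le
        · exact (List.prefix_append_right_inj d).2 (flat_pre hb.pre hLF)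
        · exact (List.prefix_append_right_inj c).2 (pw_pre (hb.pre c hc) k)

lemma Rset_suffix_not (h : Ctx β m) {t : ℝ} {W c : List Bool} (ht : t ∈ cyl β W)
    (hc : c ∈ Rset β t W)
    {v : List Bool} (hv : v <:+ c) (hne : v ≠ []) (hne' : v ≠ c) {z : ℝ}
    (hz : z ∈ cyl β (v ++ W)) : z ∉ cyl β W := fun hw =>
  lt_irrefl z (Rset_suffix h ht hc hv hne hne' hz hw)

lemma suffix_flatten {L : List (List Bool)} {v : List Bool} (hv : v <:+ L.flatten) :
    (∃ L', L' <:+ L ∧ v = L'.flatten) ∨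
    (∃ d L' v1, (d :: L') <:+ L ∧ v1 <:+ d ∧ v1 ≠ [] ∧ v1 ≠ d ∧ v = v1 ++ L'.flatten) := by
  induction L with
  | nil => left; exact ⟨[], by simp, by simpa using hv⟩
  | cons d L ih =>
    rw [List.flatten_cons] at hv
    rcases suffix_app hv with h1 | ⟨v1, hne, hs, rfl⟩
    · rcases ih h1 with ⟨L', h2, h3⟩ | ⟨e, L', v1, h2, h3⟩
      · left; exact ⟨L', h2.trans (List.suffix_cons _ _), h3⟩
      · right; exact ⟨e, L', v1, h2.trans (List.suffix_cons _ _), h3⟩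
    · by_cases hd : v1 = d
      · left; exact ⟨d :: L, List.suffix_rfl, by simp [hd]⟩
      · right; exact ⟨d, L, v1, List.suffix_rfl, hs, hne, hd, rfl⟩

lemma suffix_app2 {α : Type*} {v a b : List α} (h : v <:+ a ++ b) :
    v <:+ b ∨ ∃ v1, v1 ≠ [] ∧ v1 <:+ a ∧ v = v1 ++ b := by
  rcases List.suffix_or_suffix_of_suffix h (List.suffix_append a b) with h1 | h1
  · left; exact h1
  · obtain ⟨v1, rfl⟩ := h1
    by_cases hv : v1 = []
    · left; simp [hv]
    · obtain ⟨w, hw⟩ := h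
      rw [← List.append_assoc] at hw
      right; exact ⟨v1, hv, ⟨w, List.append_cancel_right hw⟩, rfl⟩

lemma blockList {F : Set (List Bool)} {a c : List Bool} (haF : a ∈ F) (hcF : c ∈ F) (hac : a ≠ c)
    (M0 : ℕ) : ∀ l : List (List Bool),
    (∀ d ∈ l, d ∈ (fun u => u ++ [a, c].flatten) '' powF F M0) →
    ∃ L : List (List Bool), (∀ d ∈ L, d ∈ F) ∧ L.flatten = l.flatten ∧
      (L = [] ∨ a ∈ L.take (M0 + 1)) ∧
      ∀ L', L' <:+ L → L'.length ≤ M0 + 2 ∨ ∃ d ∈ L'.take (M0 + 2), d ≠ c := by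
  intro l
  induction l with
  | nil => intro _; exact ⟨[], by simp, by simp, by simp, by simp⟩
  | cons d l ih =>
    intro hl
    obtain ⟨L, h1, h2, h3, h4⟩ := ih (fun e he => hl e (by simp [he]))
    obtain ⟨u, ⟨fs, hfl, hfs, rfl⟩, hd⟩ := hl d (by simp)
    refine ⟨fs ++ [a, c] ++ L, ?_, ?_, ?_, ?_⟩
    · intro e he
      simp only [List.append_assoc, List.cons_append, List.nil_append, List.mem_append,
        List.mem_cons] at he
      rcases he with he | rfl | rfl | he
      exacts [hfs _ he, haF, hcF, h1 _ he]
    · rw [← hd, List.flatten_cons, ← h2]; simp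
    · right
      have : fs ++ [a, c] ++ L = (fs ++ [a]) ++ (c :: L) := by simp
      rw [this, List.take_left' (by simp [hfl])]
      simp
    · intro L' hL'
      rcases suffix_app2 hL' with hh | ⟨p, hpne, hp, rfl⟩
      · exact h4 L' hh
      · have e : fs ++ [a, c] = (fs ++ [a]) ++ [c] := by simp
        have hpl : p.length ≤ M0 + 2 := by
          have := hp.length_le; simpa [hfl] using this
        rw [e] at hp
        rcases suffix_app2 hp with hh | ⟨p1, hp1, hh, rfl⟩
        · have hpc : p = [c] := by
            rcases List.suffix_cons_iff.1 hh with h5 | h5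
            · exact h5
            · simp at h5; exact absurd h5 hpne
          subst hpc
          rcases h3 with rfl | h3
          · left; simp
          · right; refine ⟨a, ?_, hac⟩
            simp only [List.cons_append, List.nil_append, List.take_succ_cons, List.mem_cons]
            right; exact h3
        · right
          refine ⟨a, ?_, hac⟩
          rcases suffix_app2 hh with h6 | ⟨p2, -, -, rfl⟩
          · have hpa : p1 = [a] := by
              rcases List.suffix_cons_iff.1 h6 with h5 | h5
              · exact h5
              · simp at h5; exact absurd h5 hp1
            subst hpa
            simp
          · rw [List.take_append, List.take_of_length_le hpl]; simp


lemma mid_cyl {a W : List Bool} {y : ℝ} (hy : y ∈ cyl β (a ++ W)) {n : ℕ}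
    (hn : n ≤ a.length) : (Tbeta β)^[n] y ∈ cyl β (a.drop n ++ W) := by
  have e : a ++ W = a.take n ++ (a.drop n ++ W) := by
    rw [← List.append_assoc, List.take_append_drop]
  rw [e, mem_cyl_append] at hy
  have := hy.2
  rwa [List.length_take, min_eq_left hn] at this

/-- the facts on points that we need -/
structure Good (β : ℝ) (W c : List Bool) (M : ℕ) (b y : ℝ) : Prop where
  low : ∀ n, b ≤ (Tbeta β)^[n] y
  up : ∀ n, (Tbeta β)^[n] y ∈ cyl β W → (Tbeta β)^[n] y ≤ val β (pw c M ++ W)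
  recr : ∀ N, ∃ n, N ≤ n ∧ (Tbeta β)^[n] y ∈ cyl β W

lemma good_back (h : Ctx β m) {W a c : List Bool} {M : ℕ} (hM : 1 ≤ M) (hW : m ≤ W.length)
    (ha : a ∈ Rset β (val β W) W) (hc : c ∈ Rset β (val β W) W)
    (hord : ∀ x ∈ cyl β (a ++ W), ∀ z ∈ cyl β (c ++ W), x < z) {ta τ1 z : ℝ}
    (hfix : fw β a ta = ta) (hta : ta < τ1) (hz : z ∈ cyl β W) (hg : Good β W c M τ1 z) (k : ℕ) :
    fw β (pw a k) z ∈ cyl β (pw a k ++ W) ∧ ta < fw β (pw a k) z ∧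
      Good β W c M (min τ1 (fw β (pw a k) z)) (fw β (pw a k) z) := by
  have hb := Rset_blk (β := β) (val β W) W
  have aok := Rset_ok h ha
  have cok := Rset_ok h hc
  have Wok := aok.right
  have hWm := val_mem_cyl h Wok
  induction k with
  | zero =>
    simp only [pw_zero, fw_nil, List.nil_append]
    refine ⟨hz, hta.trans_le (hg.low 0), fun n => (min_le_left _ _).trans (hg.low n), hg.up, hg.recr⟩
  | succ k ih =>
    obtain ⟨i1, i2, i3⟩ := ih
    rw [pw_succ, fw_append]
    set y := fw β (pw a k) z with hy
    have hyW : y ∈ cyl β W := cyl_mono (pw_pre (hb.pre a ha) k) i1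
    have hkok : IsOk m (a ++ (pw a k ++ W)) := by
      have := pw_ok (hb.pre a ha) aok hW (k + 1)
      rwa [pw_succ, List.append_assoc] at this
    have hmem := fw_mem_cyl h hkok (by simp; omega) i1
    obtain ⟨hm1, hTy⟩ := hmem
    set y' := fw β a y with hy'
    have hya : y' ∈ cyl β (a ++ W) :=
      cyl_mono ((List.prefix_append_right_inj a).2 (pw_pre (hb.pre a ha) k)) hm1
    have hyW' : y' ∈ cyl β W := cyl_mono (hb.pre a ha) hya
    have hle : y' ≤ y := by
      have e := fw_sub h a y ta
      rw [hfix, ← hy'] at e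
      have : (y - ta) / β ^ a.length ≤ y - ta :=
        div_le_self (by linarith) (one_le_pow₀ h.h1.le)
      linarith
    have hgt : ta < y' := by
      have := (fw_lt h a).2 i2
      rwa [hfix] at this
    have hmid : ∀ n, 0 < n → n < a.length → ∀ w ∈ cyl β W, w < (Tbeta β)^[n] y' := by
      intro n h0 hn w hw
      refine Rset_suffix h hWm ha (List.drop_suffix n a) ?_ ?_ (mid_cyl hya hn.le) hw
      · simp; omega
      · intro hc; have := congrArg List.length hc; simp at this; omega
    have hcase : ∀ n, n = 0 ∨ (0 < n ∧ n < a.length) ∨ ∃ j, n = a.length + j := by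
      intro n
      rcases Nat.eq_zero_or_pos n with h0 | h0
      · exact Or.inl h0
      · rcases lt_or_ge n a.length with h1 | h1
        · exact Or.inr (Or.inl ⟨h0, h1⟩)
        · exact Or.inr (Or.inr ⟨n - a.length, by omega⟩)
    refine ⟨by rwa [List.append_assoc], hgt, ?_, ?_, ?_⟩
    · intro n
      rcases hcase n with rfl | ⟨h0, h1⟩ | ⟨j, rfl⟩
      · exact min_le_right _ _
      · exact (min_le_right _ _).trans (hmid n h0 h1 _ hyW').le
      · rw [iter_add, hTy]
        exact (min_le_min_left _ hle).trans (i3.low j)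
    · intro n hn
      rcases hcase n with rfl | ⟨h0, h1⟩ | ⟨j, rfl⟩
      · refine (hord y' hya _ ?_).le
        obtain ⟨M', rfl⟩ : ∃ M', M = M' + 1 := ⟨M - 1, by omega⟩
        have := val_mem_cyl h (pw_ok (hb.pre c hc) cok hW (M' + 1))
        refine cyl_mono ?_ this
        rw [pw_succ, List.append_assoc]
        exact (List.prefix_append_right_inj c).2 (pw_pre (hb.pre c hc) M')
      · exact absurd (hmid n h0 h1 _ hn) (lt_irrefl _)
      · rw [iter_add, hTy] at hn ⊢
        exact i3.up j hn
    · intro N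
      obtain ⟨n, hn, hn'⟩ := i3.recr N
      exact ⟨a.length + n, by omega, by rw [iter_add, hTy]; exact hn'⟩

lemma M4 (h : Ctx β m) {W : List Bool} {s2 : ℝ≥0} (hW : m ≤ W.length) (Wok : IsOk m W)
    (hτ : 0 < val β W)
    (hav : dimH (avoid β W (Kset β (val β W))) < s2) (hs2 : s2 < dimH (Kset β (val β W))) :
    ∃ (a c : List Bool) (M : ℕ) (E : Set ℝ), a ∈ Rset β (val β W) W ∧ c ∈ Rset β (val β W) W ∧
      1 ≤ M ∧ (∀ x ∈ cyl β (a ++ W), ∀ z ∈ cyl β (c ++ W), x < z) ∧ E ⊆ cyl β (a ++ W) ∧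
      s2 ≤ dimH E ∧ ∀ y ∈ E, Good β W c M y y ∧ val β W < y ∧ s2 ≤ dimH (Kset β y) := by
  obtain ⟨F, a, c, hFf, hFR, ha, hc, hF1, hac, hA, hC⟩ := exists_F h hav hs2
  have hb := (Rset_blk (β := β) (val β W) W).mono hFR
  have hok : ∀ d ∈ F, IsOk m (d ++ W) := fun d hd => Rset_ok h (hFR hd)
  have hWm := val_mem_cyl h Wok
  have hord := hA c hc hac.symm
  obtain ⟨ta, hta, hfix⟩ := fixpt h hW (hFR ha) (hFR hc) hord
  have htaW : ta ∈ cyl β W := cyl_mono (hb.pre a ha) hta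
  have hτta : val β W ≤ ta := cyl_lower h htaW
  obtain ⟨M0, hM0⟩ := exists_pow_ge hF1 (wt_pos h s2 [a, c].flatten) 1 (by simp)
  set D := (fun u => u ++ [a, c].flatten) '' powF F M0 with hD
  have hDb : Blk W D := tail_blk hb (by simp [ha, hc]) (by simp) M0
  have hDf : D.Finite := (powF_finite hFf M0).image _
  have hDw : 1 ≤ ws β s2 D := by
    rw [hD, ws_image_append_right]
    exact hM0.trans (by gcongr; exact powF_ws hb s2 M0)
  have hDok : ∀ d ∈ D, IsOk m (d ++ W) := by
    rintro d ⟨u, ⟨fs, hfl, hfs, rfl⟩, rfl⟩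
    have := star_ok hb.pre hok Wok hW (l := fs ++ [a, c]) (by
      intro d hd; simp at hd; rcases hd with hd | rfl | rfl; exacts [hfs d hd, ha, hc])
    simpa using this
  have hprop : ∀ f ∈ F, ∀ v, v <:+ f → v ≠ [] → v ≠ f → ta < val β (v ++ W) := by
    intro f hf v hv hne hne'
    have hvok : IsOk m (v ++ W) := by
      obtain ⟨w, rfl⟩ := hv
      have := hok _ hf
      rw [List.append_assoc] at this
      exact this.right
    exact Rset_suffix h hWm (hFR hf) hv hne hne' (val_mem_cyl h hvok) htaW
  have hDv : ∀ d ∈ D, ∀ v, v <:+ d → v ≠ [] → ta < val β (v ++ W) := by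
    rintro d ⟨u, ⟨fs, hfl, hfs, rfl⟩, rfl⟩ v hv hne
    refine run_low h hfix hb hprop (fun f hf hfa => hA f hf hfa _ hta _ (val_mem_cyl h (hok f hf)))
      (fs := fs ++ [a]) ?_ hc hac.symm (v := v) ?_ hne
    · intro d hd; simp at hd; rcases hd with hd | rfl; exacts [hfs d hd, ha]
    · simpa using hv
  obtain ⟨τ1, hτ1, hτ1', hDv1⟩ := finite_gap hDf hDv hta.1.2
  set M := M0 + 2 with hM
  set Q : List Bool → Prop := fun v => W <+: v → val β v ≤ val β (pw c M ++ W) with hQ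
  have hQp : PrefClosed Q := by
    intro u v huv hv hWu
    obtain ⟨w, rfl⟩ := huv
    exact (val_append_ge h u w).trans (hv (hWu.trans (List.prefix_append _ _)))
  have hstar : ∀ l : List (List Bool), (∀ d ∈ l, d ∈ D) → l.flatten ∈ Lang β m τ1 Q := by
    intro l hl
    refine goodstar h hτ1' hDb.pre hDok Wok hW hDv1 hl ?_
    obtain ⟨L, l1, l2, -, l4⟩ := blockList ha hc hac M0 l hl
    intro v hv hWv
    rw [← l2] at hv
    refine (val_append_ge h v W).trans ?_
    rcases suffix_flatten hv with ⟨L', k1, rfl⟩ | ⟨d, L', v1, k1, k2, k3, k4, rfl⟩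
    · exact runUp h hW hFR hc hC M L' (fun d hd => l1 d (k1.subset hd)) (l4 L' k1)
    · exfalso
      have hLF : ∀ d ∈ L', d ∈ F := fun e he => l1 e (k1.subset (by simp [he]))
      have hdF : d ∈ F := l1 d (k1.subset (by simp))
      have o1 : IsOk m ((d :: L').flatten ++ W) :=
        star_ok hb.pre hok Wok hW (fun e he => l1 e (k1.subset he))
      have o2 : IsOk m ((v1 ++ L'.flatten) ++ W) := by
        obtain ⟨w, rfl⟩ := k2
        rw [List.flatten_cons, List.append_assoc, List.append_assoc] at o1
        rw [List.append_assoc]; exact o1.right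
      have o3 := val_mem_cyl h o2
      refine Rset_suffix_not h hWm (hFR hdF) k2 k3 k4 (cyl_mono ?_ o3)
        (cyl_mono (hWv.trans (List.prefix_append _ _)) o3)
      rw [List.append_assoc]
      exact (List.prefix_append_right_inj v1).2 (flat_pre hb.pre hLF)
  have hτ10 : 0 < τ1 := by linarith
  have hY := low h hτ10 hQp hDb hstar hDw
  set Y := KQ β τ1 Q with hYdef
  have hYI : Y ⊆ Ico (0:ℝ) 1 := fun x hx => hx.1.1
  have hYT : ∀ x ∈ Y, Tbeta β x ∈ Y := fun x hx => ⟨Kset_T hx.1, fun n k => by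
    have := hx.2 (n + 1) k
    rwa [Function.iterate_succ_apply] at this⟩
  have hsp := split_dim h W hYI hYT
  have havY : avoid β W Y ⊆ avoid β W (Kset β (val β W)) := fun x hx =>
    ⟨Kset_anti (by linarith) hx.1.1, hx.2⟩
  have hZ : s2 ≤ dimH (recur β W Y) := by
    rcases le_max_iff.1 (hY.trans hsp) with h1 | h1
    · exact absurd (h1.trans (dimH_mono havY)) (not_le.2 hav)
    · exact h1
  have hZg : ∀ z ∈ recur β W Y, z ∈ cyl β W ∧ Good β W c M τ1 z := by
    intro z hz
    refine ⟨hz.2.1, hz.1.1.2, fun n hn => ?_, hz.2.2⟩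
    set x := (Tbeta β)^[n] z with hx
    have hle : ∀ k, W.length ≤ k → x ≤ val β (pw c M ++ W) + 1 / β ^ k := by
      intro k hk
      have hxI := hn.1
      have h1 := hz.1.2 n k ((mem_cyl_iff_prefix hxI hk).1 hn)
      have h2 := cyl_upper h (mem_cyl_pre (β := β) hxI k)
      rw [pre_length] at h2
      linarith
    have := (tendsto_inv_pow h 1).const_add (val β (pw c M ++ W))
    rw [add_zero] at this
    exact ge_of_tendsto this ((eventually_ge_atTop W.length).mono hle)
  obtain ⟨k, hk1, hk⟩ := exists_inv_pow h (sub_pos.2 hτ1) 1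
  refine ⟨a, c, M, fw β (pw a k) '' recur β W Y, hFR ha, hFR hc, by omega, hord, ?_, ?_, ?_⟩
  · rintro _ ⟨z, hz, rfl⟩
    have hg := good_back h (M := M) (by omega) hW (hFR ha) (hFR hc) hord hfix hτ1 (hZg z hz).1 (hZg z hz).2 k
    refine cyl_mono ?_ hg.1
    obtain ⟨k', rfl⟩ : ∃ k', k = k' + 1 := ⟨k - 1, by omega⟩
    rw [pw_succ, List.append_assoc]
    exact (List.prefix_append_right_inj a).2 (pw_pre (hb.pre a ha) k')
  · rw [fw_dimH h]; exact hZ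
  · rintro _ ⟨z, hz, rfl⟩
    obtain ⟨hg1, hg2, hg3⟩ := good_back h (M := M) (by omega) hW (hFR ha) (hFR hc) hord hfix hτ1
      (hZg z hz).1 (hZg z hz).2 k
    have hyτ : fw β (pw a k) z ≤ τ1 := by
      have hfk : fw β (pw a k) ta = ta := by
        clear hg1 hg2 hg3 hk hk1
        induction k with
        | zero => rfl
        | succ k ih => rw [pw_succ, fw_append, ih, hfix]
      have e := fw_sub h (pw a k) z ta
      rw [hfk] at e
      have hz1 := (hZg z hz).1.1.2
      have hlen : k ≤ (pw a k).length := by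
        rw [pw_len]
        have := List.length_pos_of_ne_nil (hb.ne a ha)
        nlinarith
      have : (z - ta) / β ^ (pw a k).length ≤ 1 / β ^ (pw a k).length := by
        have := pow_pos h.pos (pw a k).length
        gcongr; linarith
      have := binv_anti h hlen
      linarith
    rw [min_eq_right hyτ] at hg3
    refine ⟨hg3, by linarith, ?_⟩
    exact hY.trans (dimH_mono (fun x hx => Kset_anti hyτ hx.1))


lemma ws_cont (h : Ctx β m) {A : Set (List Bool)} (hA : A.Finite) :
    Continuous (fun s : ℝ≥0 => ws β s A) := by
  have := hA.fintype
  simp only [ws, tsum_fintype]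
  refine continuous_finsetSum _ (fun u _ => ?_)
  unfold wt qq
  refine (ENNReal.continuous_pow _).comp (ENNReal.continuous_ofReal.comp ?_)
  refine Continuous.rpow continuous_const (NNReal.continuous_coe.neg) (fun x => ?_)
  left; exact h.pos.ne'

lemma ws_lt_below (h : Ctx β m) {A : Set (List Bool)} (hA : A.Finite) {s : ℝ≥0} (hs : 0 < s)
    (hw : ws β s A < 1) : ∃ s' < s, ws β s' A < 1 := by
  have ho := (ws_cont h hA).tendsto s (gt_mem_nhds hw)
  obtain ⟨l, hl, hl'⟩ := exists_Ioc_subset_of_mem_nhds ho ⟨0, hs⟩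
  obtain ⟨s', h1, h2⟩ := exists_between hl
  exact ⟨s', h2, hl' ⟨h1, h2.le⟩⟩

lemma ws_gt_above (h : Ctx β m) {A : Set (List Bool)} (hA : A.Finite) {s : ℝ≥0}
    (hw : 1 < ws β s A) : ∃ s' > s, 1 < ws β s' A := by
  have ho := (ws_cont h hA).tendsto s (lt_mem_nhds hw)
  obtain ⟨l, hl, hl'⟩ := exists_Ico_subset_of_mem_nhds ho ⟨s + 1, by simp⟩
  obtain ⟨s', h1, h2⟩ := exists_between hl
  exact ⟨s', h1, hl' ⟨h1.le, h2⟩⟩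

lemma ws_mul (s : ℝ≥0) (A B : Set (List Bool)) :
    ws β s (image2 (fun a b => a ++ b) A B) ≤ ws β s A * ws β s B := by
  have e : image2 (fun a b => a ++ b) A B = ⋃ a : A, (fun b => a.1 ++ b) '' B := by
    ext u; simp [mem_image2]
  rw [e]
  refine (ws_iUnion s _).trans ?_
  simp only [ws_image_append]
  rw [ENNReal.tsum_mul_right]; rfl

/-- return words -/
def LR (β t' : ℝ) (W : List Bool) : Set (List Bool) :=
  {u | ∃ x ∈ Kset β t', x ∈ cyl β W ∧ x ∈ cyl β (u ++ W)}

/-- prefixes -/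
def Lp (β t' : ℝ) (n : ℕ) : Set (List Bool) := (fun x => pre β x n) '' Kset β t'

lemma Lp_finite (t' : ℝ) (n : ℕ) : (Lp β t' n).Finite := by
  refine (List.finite_length_eq Bool n).subset ?_
  rintro _ ⟨x, -, rfl⟩
  simp

lemma Lp_ge (h : Ctx β m) {t' : ℝ} {s : ℝ≥0} (hs : 0 < s) (hd : dimH (Kset β t') = s) (n : ℕ) :
    1 ≤ ws β s (Lp β t' n) := by
  by_contra hc
  obtain ⟨s', h1, h2⟩ := ws_lt_below h (Lp_finite t' n) hs (not_le.1 hc)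
  have := L1 h (Kset_sub t') (R := Lp β t' n) (s := s') (fun x hx =>
    ⟨pre β x n, ⟨x, hx, rfl⟩, mem_cyl_pre hx.1 n, Kset_iter hx _⟩) h2
  rw [hd] at this
  exact absurd (ENNReal.coe_le_coe.1 this) (not_le.2 h1)

lemma Lp_top (h : Ctx β m) {t' : ℝ} {s : ℝ≥0} (hs : 0 < s) (hd : dimH (Kset β t') = s) :
    ws β s (⋃ n, Lp β t' n) = ⊤ := by
  have hdisj : Pairwise (Function.onFun Disjoint (fun n => Lp β t' n)) := by
    intro i j hij
    refine Set.disjoint_left.2 ?_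
    rintro _ ⟨x, -, rfl⟩ ⟨y, -, hy⟩
    have := congrArg List.length hy
    simp at this; exact hij this.symm
  have e : ws β s (⋃ n, Lp β t' n) = ∑' n, ws β s (Lp β t' n) := by
    unfold ws
    rw [← (Set.unionEqSigmaOfDisjoint hdisj).symm.tsum_eq, ENNReal.tsum_sigma']
    rfl
  rw [e, eq_top_iff, ← ENNReal.tsum_const_eq_top_of_ne_zero (α := ℕ) (c := 1) (by simp)]
  exact ENNReal.tsum_le_tsum (fun n => Lp_ge h hs hd n)

lemma pre_mem_Lang (h : Ctx β m) {τ x : ℝ} (hx : x ∈ Kset β τ) {W : List Bool} (hW : W ≠ []) (n : ℕ)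
    (hno : ∀ i, i < n → (Tbeta β)^[i] x ∉ cyl β W) :
    pre β x n ∈ Lang β m τ (fun v => ¬ W <+: v) := by
  intro v hv
  have hvl := hv.length_le
  rw [pre_length] at hvl
  have e := List.suffix_iff_eq_drop.1 hv
  rw [pre_length, pre_drop x (by omega)] at e
  set i := n - v.length with hi
  set z := (Tbeta β)^[i] x with hz
  have hzK : z ∈ Kset β τ := Kset_iter hx i
  rw [e]
  refine ⟨fun hc => isOk_pre h hzK.1 _ hc.isInfix, ?_, fun hc => ?_⟩
  · have h1 := fw_pre h hzK.1 (n - i)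
    have h2 : τ ≤ z := hzK.2 0
    rw [← h1] at h2
    refine h2.trans ((fw_le h _).2 ?_)
    have h3 := (iter_mem (β := β) hzK.1 (n - i)).2
    have h4 : 1 ≤ 1 / (β - 1) := by
      rw [le_div_iff₀ (by linarith [h.h1])]; linarith [h.h2]
    linarith
  · have h1 : W.length ≤ n - i := by simpa using hc.length_le
    have h2 := List.length_pos_of_ne_nil hW
    exact hno i (by omega) ((mem_cyl_iff_prefix hzK.1 h1).2 hc)

lemma LR_top (h : Ctx β m) {W : List Bool} (hW : W ≠ []) (hτ : 0 < val β W) {t' : ℝ} {s : ℝ≥0}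
    (hs : dimH (avoid β W (Kset β (val β W))) < s) (ht : val β W ≤ t')
    (hd : dimH (Kset β t') = s) : ws β s (LR β t' W) = ⊤ := by
  have hs0 : 0 < s := by
    have := pos_of_gt hs
    exact_mod_cast this
  set Q : List Bool → Prop := fun v => ¬ W <+: v with hQ
  have hQp : PrefClosed Q := fun u v huv hv hu => hv (hu.trans huv)
  set V := Lang β m (val β W) Q with hV
  have hVf : ws β s V ≠ ⊤ := by
    refine L3 h hτ hQp (lt_of_le_of_lt (dimH_mono ?_) hs)
    intro x hx
    refine ⟨hx.1, fun n hn => hx.2 n W.length ?_⟩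
    rw [hn.2]
  set V' : Set (List Bool) := {[]} ∪ ((fun u => [true] ++ u) '' V ∪ (fun u => [false] ++ u) '' V)
    with hV'
  have hVf' : ws β s V' ≠ ⊤ := by
    refine ne_top_of_le_ne_top ?_ ((ws_union s _ _).trans (add_le_add le_rfl (ws_union s _ _)))
    rw [ws_singleton, ws_image_append, ws_image_append]
    refine ENNReal.add_ne_top.2 ⟨wt_ne_top _ _, ENNReal.add_ne_top.2
      ⟨ENNReal.mul_ne_top (wt_ne_top _ _) hVf, ENNReal.mul_ne_top (wt_ne_top _ _) hVf⟩⟩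
  have hsub : (⋃ n, Lp β t' n) ⊆ V ∪ image2 (fun a b => a ++ b)
      (image2 (fun a b => a ++ b) V (LR β t' W)) V' := by
    intro u hu
    obtain ⟨n, x, hx, rfl⟩ := mem_iUnion.1 hu
    simp only
    by_cases hex : ∃ i, i ≤ n ∧ (Tbeta β)^[i] x ∈ cyl β W
    · right
      classical
      set j := Nat.find hex with hj
      obtain ⟨hjn, hjW⟩ := Nat.find_spec hex
      set j' := Nat.findGreatest (fun i => (Tbeta β)^[i] x ∈ cyl β W) n with hj'
      have hj'W : (Tbeta β)^[j'] x ∈ cyl β W :=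
        Nat.findGreatest_spec (P := fun i => (Tbeta β)^[i] x ∈ cyl β W) hjn hjW
      have hjj' : j ≤ j' := Nat.le_findGreatest hjn hjW
      have hj'n : j' ≤ n := Nat.findGreatest_le n
      refine ⟨pre β x j ++ pre β ((Tbeta β)^[j] x) (j' - j), ⟨_, ?_, _, ?_, rfl⟩,
        pre β ((Tbeta β)^[j'] x) (n - j'), ?_, ?_⟩
      · refine pre_mem_Lang h (Kset_anti ht hx) hW j (fun i hi hc => ?_)
        exact Nat.find_min hex hi ⟨by omega, hc⟩
      · refine ⟨(Tbeta β)^[j] x, Kset_iter hx j, hjW, ?_⟩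
        rw [mem_cyl_append]
        refine ⟨mem_cyl_pre hjW.1 _, ?_⟩
        rw [pre_length, ← iter_add, show j + (j' - j) = j' by omega]
        exact hj'W
      · rcases Nat.eq_or_lt_of_le hj'n with he | hlt
        · left; simp [he, pre]
        · right
          obtain ⟨k, hk⟩ : ∃ k, n - j' = k + 1 := ⟨n - j' - 1, by omega⟩
          have hkV : pre β (Tbeta β ((Tbeta β)^[j'] x)) k ∈ V := by
            rw [← Function.iterate_succ_apply' (Tbeta β)]
            refine pre_mem_Lang h (Kset_iter (Kset_anti ht hx) _) hW k (fun i hi hc => ?_)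
            rw [← iter_add] at hc
            have : j' + 1 + i ≤ j' := Nat.le_findGreatest (by omega) hc
            omega
          rw [hk, pre]
          rcases dig β ((Tbeta β)^[j'] x) with _ | _
          · right; exact ⟨_, hkV, rfl⟩
          · left; exact ⟨_, hkV, rfl⟩
      · simp only
        rw [← pre_add, show j + (j' - j) = j' by omega, ← pre_add, show j' + (n - j') = n by omega]
    · left
      push Not at hex
      exact pre_mem_Lang h (Kset_anti ht hx) hW n (fun i hi => hex i hi.le)
  have h1 := (ws_mono (β := β) s hsub).trans (ws_union s _ _)
  rw [Lp_top h hs0 hd] at h1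
  by_contra hcon
  have h2 : ws β s V + ws β s (image2 (fun a b => a ++ b)
      (image2 (fun a b => a ++ b) V (LR β t' W)) V') ≠ ⊤ := by
    refine ENNReal.add_ne_top.2 ⟨hVf, ne_top_of_le_ne_top ?_ (ws_mul s _ _)⟩
    refine ENNReal.mul_ne_top (ne_top_of_le_ne_top ?_ (ws_mul s _ _)) hVf'
    exact ENNReal.mul_ne_top hVf hcon
  exact h2 (top_le_iff.1 h1)


/-- words that can be concatenated -/
def DD (m : ℕ) (W : List Bool) : Set (List Bool) := {d | W <+: d ++ W ∧ IsOk m (d ++ W)}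

lemma DD_app {W d e : List Bool} (hW : m ≤ W.length) (hd : d ∈ DD m W) (he : e ∈ DD m W) :
    d ++ e ∈ DD m W := by
  constructor
  · rw [List.append_assoc]
    exact hd.1.trans ((List.prefix_append_right_inj d).2 he.1)
  · rw [List.append_assoc]
    exact isOk_cat hd.2 he.2 he.1 hW

lemma suffix_pw {c v : List Bool} {M : ℕ} (hv : v <:+ pw c M) :
    (∃ j, j ≤ M ∧ v = pw c j) ∨ ∃ j v1, v1 <:+ c ∧ v1 ≠ [] ∧ v1 ≠ c ∧ v = v1 ++ pw c j := by
  have key : ∀ L', L' <:+ List.replicate M c → ∃ j, j ≤ M ∧ L' = List.replicate j c := by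
    intro L' hL
    refine ⟨L'.length, by simpa using hL.length_le, ?_⟩
    exact List.eq_replicate_of_mem (fun b hb => List.eq_of_mem_replicate (hL.subset hb))
  rcases suffix_flatten hv with ⟨L', h1, h2⟩ | ⟨d, L', v1, h1, h2, h3, h4, h5⟩
  · obtain ⟨j, hj, rfl⟩ := key L' h1
    left; exact ⟨j, hj, h2⟩
  · right
    have hd : d = c := List.eq_of_mem_replicate (h1.subset (by simp))
    subst hd
    obtain ⟨j, hj, rfl⟩ := key L' ((List.suffix_cons _ _).trans h1)
    exact ⟨j, v1, h2, h3, h4, h5⟩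

lemma pw_cyl_c {W c : List Bool} (hp : W <+: c ++ W) {j : ℕ} (hj : 0 < j) {x : ℝ}
    (hx : x ∈ cyl β (pw c j ++ W)) : x ∈ cyl β (c ++ W) := by
  obtain ⟨j', rfl⟩ : ∃ j', j = j' + 1 := ⟨j - 1, by omega⟩
  refine cyl_mono ?_ hx
  rw [pw_succ, List.append_assoc]
  exact (List.prefix_append_right_inj c).2 (pw_pre hp j')

lemma lemX (h : Ctx β m) {W a c : List Bool} {M : ℕ} (hM : 1 ≤ M) (Wok : IsOk m W)
    (ha : a ∈ Rset β (val β W) W) (hc : c ∈ Rset β (val β W) W)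
    (hord : ∀ x ∈ cyl β (a ++ W), ∀ z ∈ cyl β (c ++ W), x < z) {i : ℕ} (hi : 0 < i) {P : ℝ}
    (h1 : P ∈ cyl β ((pw c M).drop i ++ (a ++ W))) (h2 : P ∈ cyl β (pw c M ++ W)) : False := by
  have hb := Rset_blk (β := β) (val β W) W
  have hcl := List.length_pos_of_ne_nil hc.1
  have hWm := val_mem_cyl h Wok
  rcases suffix_pw (List.drop_suffix i (pw c M)) with ⟨j, hj, he⟩ | ⟨j, v1, k1, k2, k3, he⟩
  · have hjM : j < M := by
      have hl := congrArg List.length he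
      rw [List.length_drop, pw_len, pw_len] at hl
      by_contra hcon
      have : j = M := by omega
      subst this
      have : 0 < j * c.length := Nat.mul_pos (by omega) hcl
      omega
    rw [he, mem_cyl_append] at h1
    obtain ⟨r, rfl⟩ : ∃ r, M = j + r := ⟨M - j, by omega⟩
    rw [pw_add, List.append_assoc, mem_cyl_append] at h2
    exact lt_irrefl _ (hord _ h1.2 _ (pw_cyl_c (hb.pre c hc) (by omega) h2.2))
  · rw [he, List.append_assoc] at h1
    refine Rset_suffix_not h hWm hc k1 k2 k3 (cyl_mono ?_ h1)
      (cyl_mono (pw_pre (hb.pre c hc) M) h2)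
    refine (List.prefix_append_right_inj v1).2 ((pw_pre (hb.pre c hc) j).trans ?_)
    exact (List.prefix_append_right_inj _).2 (hb.pre a ha)

lemma gammaSuf (h : Ctx β m) {W a c : List Bool} {M : ℕ} (Wok : IsOk m W)
    (ha : a ∈ Rset β (val β W) W) (hc : c ∈ Rset β (val β W) W)
    (hord : ∀ x ∈ cyl β (a ++ W), ∀ z ∈ cyl β (c ++ W), x < z) {y : ℝ} (hy : y ∈ cyl β (a ++ W))
    {v : List Bool} (hv : v <:+ pw c M) (hne : v ≠ []) {p : ℝ} (hp : p ∈ cyl β (v ++ W)) : y < p := by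
  have hb := Rset_blk (β := β) (val β W) W
  have hWm := val_mem_cyl h Wok
  rcases suffix_pw hv with ⟨j, hj, rfl⟩ | ⟨j, v1, k1, k2, k3, rfl⟩
  · have : 0 < j := by
      rcases Nat.eq_zero_or_pos j with rfl | h0
      · exact absurd (pw_zero c) hne
      · exact h0
    exact hord _ hy _ (pw_cyl_c (hb.pre c hc) this hp)
  · refine Rset_suffix h hWm hc k1 k2 k3 (cyl_mono ?_ hp) (cyl_mono (hb.pre a ha) hy)
    rw [List.append_assoc]
    exact (List.prefix_append_right_inj v1).2 (pw_pre (hb.pre c hc) j)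

lemma noOverlap (h : Ctx β m) {W a c : List Bool} {M : ℕ} (hM : 1 ≤ M) (hW : m ≤ W.length)
    (Wok : IsOk m W)
    (ha : a ∈ Rset β (val β W) W) (hc : c ∈ Rset β (val β W) W)
    (hord : ∀ x ∈ cyl β (a ++ W), ∀ z ∈ cyl β (c ++ W), x < z) {y : ℝ} (hy : y ∈ cyl β (a ++ W))
    (hg : Good β W c M y y) (hτy : val β W < y) {t' : ℝ} {k : ℕ} (hk : (Tbeta β)^[k] y ∈ cyl β W)
    (hka : (a ++ W).length ≤ k) (hkt : ∀ x ∈ cyl β (pre β y k), x < t')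
    (hgD : pw c M ++ (pre β y k ++ pw c M) ∈ DD m W)
    {u : List Bool} (hu : u ≠ []) {ξ : ℝ} (hξ : ξ ∈ Kset β t') (hξu : ξ ∈ cyl β (u ++ W))
    (hpre : (pw c M ++ (pre β y k ++ pw c M)) ++ W <+:
      u ++ ((pw c M ++ (pre β y k ++ pw c M)) ++ W)) : False := by
  have hb := Rset_blk (β := β) (val β W) W
  set Γ := pw c M with hΓ
  set q := pre β y k with hq
  set g := Γ ++ (q ++ Γ) with hgdef
  have hul := List.length_pos_of_ne_nil hu
  have hqy : y ∈ cyl β (q ++ W) := by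
    rw [mem_cyl_append, pre_length]; exact ⟨mem_cyl_pre hy.1 k, hk⟩
  have hqa : a ++ W <+: q := (mem_cyl_iff_prefix hy.1 hka).1 hy
  have hql : q.length = k := pre_length _ _
  set p := val β (u ++ (g ++ W)) with hp
  have hok : IsOk m (u ++ (g ++ W)) := isOk_cat (cyl_isOk h hξu) hgD.2 hgD.1 hW
  have hp1 : p ∈ cyl β (u ++ (g ++ W)) := val_mem_cyl h hok
  have hp2 : p ∈ cyl β (g ++ W) := cyl_mono hpre hp1
  have eg : g ++ W = Γ ++ (q ++ (Γ ++ W)) := by simp [hgdef]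
  have hΓW : Γ ++ W <+: g ++ W := by
    rw [eg]
    refine (List.prefix_append_right_inj Γ).2 ?_
    exact (hb.pre a ha).trans (hqa.trans (List.prefix_append _ _))
  have hgq : ∀ z i, z ∈ cyl β (g ++ W) → i ≤ Γ.length →
      (Tbeta β)^[i] z ∈ cyl β (Γ.drop i ++ (a ++ W)) := by
    intro z i hz hi
    rw [eg] at hz
    refine cyl_mono ?_ (mid_cyl hz hi)
    exact (List.prefix_append_right_inj _).2 (hqa.trans (List.prefix_append _ _))
  rcases le_or_gt u.length Γ.length with hle | hgt
  · have h1 := hgq p u.length hp2 hle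
    have h2 := (mem_cyl_append.1 hp1).2
    exact lemX h hM Wok ha hc hord hul h1 (cyl_mono hΓW h2)
  · have hΓu : Γ <+: u := by
      have c1 : p ∈ cyl β u := (mem_cyl_append.1 hp1).1
      have c2 : p ∈ cyl β Γ := by rw [eg] at hp2; exact (mem_cyl_append.1 hp2).1
      exact cyl_prefix c2 c1 hgt.le
    obtain ⟨u', rfl⟩ := hΓu
    rw [List.append_assoc, mem_cyl_append] at hp1 hξu
    rw [eg, mem_cyl_append] at hp2
    have hp1 := hp1.2
    have hp2 := hp2.2
    have hξu := hξu.2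
    set p' := (Tbeta β)^[Γ.length] p with hp'
    set ξ' := (Tbeta β)^[Γ.length] ξ with hξ'
    have hξK : t' ≤ ξ' := hξ.2 _
    have hp'q : p' ∈ cyl β q := (mem_cyl_append.1 hp2).1
    have hp'u : p' ∈ cyl β (u' ++ W) :=
      cyl_mono ((List.prefix_append_right_inj u').2 hgD.1) hp1
    rcases le_or_gt q.length (u' ++ W).length with hle | hgt2
    · have := cyl_prefix hp'q hp'u hle
      exact absurd (hkt _ (cyl_mono this hξu)) (not_lt.2 hξK)
    · have huq : u' ++ W <+: q := cyl_prefix hp'u hp'q hgt2.le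
      have hyu : y ∈ cyl β (u' ++ W) := cyl_mono huq (mem_cyl_append.1 hqy).1
      set l := u'.length with hl
      have hyl : (Tbeta β)^[l] y ∈ cyl β W := (mem_cyl_append.1 hyu).2
      have hlq : l ≤ q.length := by rw [List.length_append] at hgt2; omega
      have hP1 : (Tbeta β)^[l] p' ∈ cyl β (g ++ W) := (mem_cyl_append.1 hp1).2
      have hP2 : (Tbeta β)^[l] p' ∈ cyl β (q.drop l ++ (Γ ++ W)) := mid_cyl hp2 hlq
      have hyq : (Tbeta β)^[l] y ∈ cyl β (q.drop l ++ W) := mid_cyl hqy hlq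
      set P := (Tbeta β)^[l] p' with hP
      rcases le_or_gt (q.drop l).length Γ.length with hle3 | hgt3
      · have h1 := hgq P _ hP1 hle3
        have h2 := (mem_cyl_append.1 hP2).2
        refine lemX h hM Wok ha hc hord ?_ h1 h2
        rw [List.length_append] at hgt2
        rw [List.length_drop]
        omega
      · have hP3 : P ∈ cyl β Γ := by rw [eg] at hP1; exact (mem_cyl_append.1 hP1).1
        have hP4 : P ∈ cyl β (q.drop l) := (mem_cyl_append.1 hP2).1
        have hpr := cyl_prefix hP3 hP4 hgt3.le
        have hyΓ : (Tbeta β)^[l] y ∈ cyl β Γ := cyl_mono hpr (mem_cyl_append.1 hyq).1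
        have h1 := hg.up l hyl
        have h2 := fw_cyl h hyΓ
        rw [← iter_add] at h2
        have h3 := hg.low (l + Γ.length)
        rw [← h2, val_append, fw_le h] at h1
        linarith

lemma M5 (h : Ctx β m) {W a c : List Bool} {M : ℕ} (hM : 1 ≤ M) (hW : m ≤ W.length)
    (Wok : IsOk m W) (hτ : 0 < val β W) {s2 : ℝ≥0}
    (hav : dimH (avoid β W (Kset β (val β W))) < s2)
    (ha : a ∈ Rset β (val β W) W) (hc : c ∈ Rset β (val β W) W)
    (hord : ∀ x ∈ cyl β (a ++ W), ∀ z ∈ cyl β (c ++ W), x < z) {y : ℝ} (hy : y ∈ cyl β (a ++ W))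
    (hg : Good β W c M y y) (hτy : val β W < y) (hs2 : s2 ≤ dimH (Kset β y)) : y ∈ Bset β := by
  refine ⟨hy.1, fun t' hyt ht1 heq => ?_⟩
  have hb := Rset_blk (β := β) (val β W) W
  have hWne : W ≠ [] := by
    rintro rfl; have := h.hm; simp at hW; omega
  have hWm := val_mem_cyl h Wok
  have hfin : dimH (Kset β y) ≠ ⊤ := by
    refine ne_top_of_le_ne_top ?_ (dimH_mono (subset_univ _))
    rw [Real.dimH_univ]; simp
  obtain ⟨s, hs⟩ : ∃ s : ℝ≥0, (s : ℝ≥0∞) = dimH (Kset β y) :=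
    ⟨_, ENNReal.coe_toNNReal hfin⟩
  have hLR : ws β s (LR β t' W) = ⊤ :=
    LR_top h hWne hτ (by rw [hs]; exact hav.trans_le hs2) (by linarith) (by rw [heq, hs])
  obtain ⟨N, -, hN⟩ := exists_inv_pow h (sub_pos.2 hyt) 0
  obtain ⟨k, hkN, hk⟩ := hg.recr (max N (a ++ W).length)
  have hka : (a ++ W).length ≤ k := (le_max_right _ _).trans hkN
  have hkt : ∀ x ∈ cyl β (pre β y k), x < t' := by
    intro x hx
    have h1 := cyl_upper h hx
    have h2 := cyl_lower h (mem_cyl_pre (β := β) hy.1 k)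
    rw [pre_length] at h1
    have := binv_anti h ((le_max_left N _).trans hkN)
    linarith
  set Γ := pw c M with hΓ
  set q := pre β y k with hq
  set g := Γ ++ (q ++ Γ) with hgdef
  have hql : q.length = k := pre_length _ _
  have hqy : y ∈ cyl β (q ++ W) := by
    rw [mem_cyl_append, pre_length]; exact ⟨mem_cyl_pre hy.1 k, hk⟩
  have hyW : y ∈ cyl β W := cyl_mono (hb.pre a ha) hy
  have hΓD : Γ ∈ DD m W := ⟨pw_pre (hb.pre c hc) M, pw_ok (hb.pre c hc) (Rset_ok h hc) hW M⟩
  have hqD : q ∈ DD m W := ⟨cyl_prefix hyW hqy (by simp), cyl_isOk h hqy⟩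
  have hqΓ := DD_app hW hqD hΓD
  have hgD : g ∈ DD m W := DD_app hW hΓD hqΓ
  have hLRD : ∀ u ∈ LR β t' W, u ∈ DD m W := by
    rintro u ⟨x, -, hx1, hx2⟩
    exact ⟨cyl_prefix hx1 hx2 (by simp), cyl_isOk h hx2⟩
  set G := (fun u => u ++ g) '' LR β t' W with hG
  have hGD : ∀ d ∈ G, d ∈ DD m W := by
    rintro _ ⟨u, hu, rfl⟩; exact DD_app hW (hLRD u hu) hgD
  have hGw : ws β s G = ⊤ := by
    rw [hG, ws_image_append_right, hLR, ENNReal.top_mul (wt_pos h s g).ne']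
  have hGne : ∀ d ∈ G, d ≠ [] := by
    rintro _ ⟨u, hu, rfl⟩ hcon
    have h1 := congrArg List.length hcon
    simp only [hgdef, List.length_append, hql, List.length_nil] at h1
    have h2 := List.length_pos_of_ne_nil hWne
    rw [List.length_append] at hka
    omega
  have hinc : ∀ u ∈ LR β t' W, ∀ u2 ∈ LR β t' W, (u ++ g) ++ W <+: (u2 ++ g) ++ W → u = u2 := by
    intro u hu u2 hu2 hpre
    have hlen : u.length ≤ u2.length := by
      have := hpre.length_le; simp at this; omega
    rw [List.append_assoc u g W, List.append_assoc u2 g W] at hpre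
    have huu : u <+: u2 := List.prefix_of_prefix_length_le
      ((List.prefix_append _ _).trans hpre) (List.prefix_append _ _) hlen
    obtain ⟨u', rfl⟩ := huu
    by_cases hu' : u' = []
    · simp [hu']
    · exfalso
      rw [List.append_assoc u u' (g ++ W), List.prefix_append_right_inj] at hpre
      obtain ⟨x, hxK, -, hx2⟩ := hu2
      rw [List.append_assoc u u' W, mem_cyl_append] at hx2
      exact noOverlap h hM hW Wok ha hc hord hy hg hτy hk hka hkt hgD hu' (Kset_iter hxK _) hx2.2 hpre
  have hGb : Blk W G := by
    refine ⟨hGne, fun d hd => (hGD d hd).1, ?_⟩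
    rintro _ ⟨u, hu, rfl⟩ _ ⟨u2, hu2, rfl⟩ hpre
    rw [hinc u hu u2 hu2 hpre]
  have hsufok : ∀ {v d : List Bool}, v <:+ d → IsOk m (d ++ W) → IsOk m (v ++ W) := by
    rintro v _ ⟨w, rfl⟩ hd
    rw [List.append_assoc] at hd; exact hd.right
  have hGv : ∀ d ∈ G, ∀ v, v <:+ d → v ≠ [] → y ≤ val β (v ++ W) := by
    rintro _ ⟨u, hu, rfl⟩ v hv hne
    have hvm := val_mem_cyl h (hsufok hv (DD_app hW (hLRD u hu) hgD).2)
    rcases suffix_app hv with hv1 | ⟨v1, hv1, hv1s, rfl⟩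
    · rcases suffix_app hv1 with hv2 | ⟨v2, hv2ne, hv2s, rfl⟩
      · rcases suffix_app hv2 with hv3 | ⟨v1, hv1, hv1s, rfl⟩
        · exact (gammaSuf h Wok ha hc hord hy hv3 hne hvm).le
        · have e := List.suffix_iff_eq_drop.1 hv1s
          set j := q.length - v1.length with hj
          have hyj : (Tbeta β)^[j] y ∈ cyl β (v1 ++ W) := by
            rw [e]; exact mid_cyl hqy (by omega)
          have hl := hv1s.length_le
          have h1 := fw_cyl h (mem_cyl_append.1 hyj).1
          have hjk : j + v1.length = k := by omega
          rw [← iter_add, hjk] at h1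
          rw [List.append_assoc, val_append]
          have h2 := (fw_le h v1).2 (hg.up k hk)
          rw [h1] at h2
          exact (hg.low j).trans h2
      · refine (gammaSuf h Wok ha hc hord hy hv2s hv2ne (cyl_mono ?_ hvm)).le
        rw [List.append_assoc]
        exact (List.prefix_append_right_inj v2).2 hqΓ.1
    · have hok1 : IsOk m (v1 ++ (Γ ++ W)) :=
        isOk_cat (hsufok hv1s (hLRD u hu).2) hΓD.2 hΓD.1 hW
      have hp := val_mem_cyl h hok1
      have hp' : val β (v1 ++ (Γ ++ W)) ∈ cyl β (v1 ++ W) :=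
        cyl_mono ((List.prefix_append_right_inj v1).2 hΓD.1) hp
      have hge : val β (v1 ++ (Γ ++ W)) ≤ val β (v1 ++ g ++ W) := by
        have e1 : v1 ++ g ++ W = v1 ++ (Γ ++ ((q ++ Γ) ++ W)) := by simp [hgdef]
        rw [e1, val_append v1, val_append v1, fw_le h, val_append Γ, val_append Γ, fw_le h]
        exact cyl_lower h (cyl_mono hqΓ.1 (val_mem_cyl h hqΓ.2))
      refine le_trans ?_ hge
      by_contra hcon
      push Not at hcon
      obtain ⟨x, hxK, -, hx2⟩ := hu
      obtain ⟨w, rfl⟩ := hv1s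
      rw [List.append_assoc, mem_cyl_append] at hx2
      have hξ := hxK.2 w.length
      have hyc := cyl_convex h hp' hx2.2 hcon.le (by linarith)
      have hyc' := mem_cyl_append.1 hyc
      have h1 := hg.up _ hyc'.2
      have h2 := fw_cyl h hyc'.1
      have h3 := (fw_le h v1).2 h1
      rw [h2, ← val_append] at h3
      linarith
  obtain ⟨G0, hG0, hG0w⟩ := ws_exists_finset (show 1 < ws β s G by rw [hGw]; simp)
  obtain ⟨s', hss', hs'⟩ := ws_gt_above h G0.finite_toSet hG0w
  have hlow := low h (Q := fun _ => True) (lt_trans hτ hτy) (fun _ _ _ _ => trivial)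
    (hGb.mono hG0) (fun l hl => goodstar h hy.1.2.le (fun d hd => (hGD d (hG0 hd)).1)
      (fun d hd => (hGD d (hG0 hd)).2) Wok hW (fun d hd => hGv d (hG0 hd)) hl (fun _ _ => trivial))
    hs'.le
  rw [KQ_true, ← hs] at hlow
  exact absurd (ENNReal.coe_le_coe.1 hlow) (not_le.2 hss')


lemma SS_sum (hβ : 1 < β) (j : ℕ) : SS β j = ∑ i ∈ Finset.range j, 1 / β ^ (i + 1) := by
  induction j with
  | zero => simp [SS]
  | succ j ih =>
    rw [SS, ih, Finset.sum_range_succ', add_div, Finset.sum_div, add_comm]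
    have : β ≠ 0 := by linarith
    congr 1
    · refine Finset.sum_congr rfl (fun i _ => ?_)
      rw [div_div, ← pow_succ]
    · simp

lemma ctx_of (hβ : β ∈ Ioo (1:ℝ) 2) (hm : 1 ≤ m)
    (hδ : IsQuasiGreedy β (perSeq (List.replicate m 1 ++ [0]))) : Ctx β m := by
  refine ⟨hβ.1, hβ.2, hm, ?_⟩
  have h0 : β ≠ 0 := by linarith [hβ.1]
  obtain ⟨-, -, hsum, -⟩ := hδ
  set d := perSeq (List.replicate m 1 ++ [0]) with hd
  set f : ℕ → ℝ := fun i => (d i : ℝ) / β ^ (i + 1) with hf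
  have hlen : (List.replicate m 1 ++ [0]).length = m + 1 := by simp
  have hper : ∀ i, d (i + (m + 1)) = d i := by
    intro i
    simp only [hd, perSeq, hlen, Nat.add_mod_right]
  have hS : Summable f := by
    by_contra hc
    rw [tsum_eq_zero_of_not_summable hc] at hsum
    norm_num at hsum
  have h1 := hS.sum_add_tsum_nat_add (m + 1)
  rw [hsum] at h1
  have h2 : ∀ i, f (i + (m + 1)) = f i * (1 / β ^ (m + 1)) := by
    intro i
    simp only [hf, hper]
    rw [div_mul_div_comm, mul_one, ← pow_add]
    congr 2; ring
  simp only [h2] at h1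
  rw [tsum_mul_right, hsum, Finset.sum_range_succ] at h1
  have h3 : f m = 0 := by
    simp [hf, hd, perSeq, Nat.mod_eq_of_lt]
  have h4 : ∑ i ∈ Finset.range m, f i = ∑ i ∈ Finset.range m, 1 / β ^ (i + 1) := by
    refine Finset.sum_congr rfl (fun i hi => ?_)
    have hi := Finset.mem_range.1 hi
    have : d i = 1 := by
      simp only [hd, perSeq, hlen]
      rw [Nat.mod_eq_of_lt (by omega), List.getD_append _ _ _ _ (by simpa using hi)]
      simp [List.getD, hi]
    simp [hf, this]
  rw [SS_sum hβ.1, Finset.sum_range_succ, ← h4]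
  rw [h3] at h1
  linarith

lemma B_min (h : Ctx β m) {y : ℝ} (hy : y ∈ Bset β) (n : ℕ) : y ≤ (Tbeta β)^[n] y := by
  by_contra hcon
  push Not at hcon
  obtain ⟨ε, hε, hcyl⟩ := right_nbhd h hy.1 n
  set p := (Tbeta β)^[n] y with hp
  have hβn := pow_pos h.pos n
  have hgap : 0 < (y - p) / β ^ n := div_pos (by linarith) hβn
  obtain ⟨t', h1, h2⟩ := exists_between
    (show y < min (y + ε) (min 1 (y + (y - p) / β ^ n)) by
      refine lt_min (by linarith) (lt_min hy.1.2 (by linarith)))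
  have h3 := lt_min_iff.1 h2
  have h4 := lt_min_iff.1 h3.2
  refine hy.2 t' h1 h4.1 (congrArg dimH (Subset.antisymm (Kset_anti h1.le) ?_))
  intro x hx
  refine ⟨hx.1, fun j => ?_⟩
  by_contra hc
  push Not at hc
  set z := (Tbeta β)^[j] x with hz
  have hzy : y ≤ z := hx.2 j
  have hzc := hcyl z hzy (by linarith)
  have e1 := fw_cyl h hzc
  have e2 := fw_pre h hy.1 n
  rw [pre_length] at e1
  have e3 := fw_sub h (pre β y n) ((Tbeta β)^[n] z) ((Tbeta β)^[n] y)
  rw [e1, e2, pre_length] at e3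
  have h5 : y ≤ (Tbeta β)^[n] z := by
    rw [hz, ← iter_add]; exact hx.2 _
  have h6 : (y - p) / β ^ n ≤ ((Tbeta β)^[n] z - (Tbeta β)^[n] y) / β ^ n := by
    gcongr
  linarith

lemma main_lower (h : Ctx β m) {t : ℝ} (ht : t ∈ Bset β) {r : ℝ} (hr : 0 < r) {s0 : ℝ≥0∞}
    (hs0 : s0 < dimH (Kset β t)) : s0 < dimH (Bset β ∩ Ioo t (t + r)) := by
  obtain ⟨W, s2, hW, Wok, hsub, htW, hav, h02, hs2⟩ := M2 h ht hr hs0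
  have hτ : 0 < val β W := lt_of_le_of_lt ht.1.1 htW
  obtain ⟨a, c, M, E, ha, hc, hM, hord, hE, hdE, hgood⟩ := M4 h hW Wok hτ hav hs2
  refine h02.trans_le (hdE.trans (dimH_mono ?_))
  intro y hy
  obtain ⟨g1, g2, g3⟩ := hgood y hy
  exact ⟨M5 h hM hW Wok hτ hav ha hc hord (hE hy) g1 g2 g3,
    hsub (cyl_mono ((Rset_blk _ W).pre a ha) (hE hy))⟩

end Helpers


/-- Let `β ∈ (1,2)` with `δ(β) = (1^m 0)^∞` for some `m ≥ 1`. Then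
for every `t ∈ B_β`, `lim_{r→0⁺} dim_H (B_β ∩ (t, t+r)) = dim_H K_β(t) > 0`. -/
theorem stmt_13 (β : ℝ) (hβ : β ∈ Set.Ioo (1 : ℝ) 2) (m : ℕ) (hm : 1 ≤ m)
    (hδ : IsQuasiGreedy β (perSeq (List.replicate m 1 ++ [0]))) :
    ∀ t ∈ Bset β,
      Filter.Tendsto (fun r : ℝ => dimH (Bset β ∩ Set.Ioo t (t + r)))
        (nhdsWithin 0 (Set.Ioi 0)) (nhds (dimH (Kset β t))) ∧
      0 < dimH (Kset β t) := by
  have h : Ctx β m := ctx_of hβ hm hδ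
  intro t ht
  have hpos : 0 < dimH (Kset β t) :=
    pos_of_gt (B_lt ht (t' := (t + 1) / 2) (by linarith [ht.1.2]) (by linarith [ht.1.2]))
  refine ⟨?_, hpos⟩
  have hupper : ∀ r : ℝ, dimH (Bset β ∩ Set.Ioo t (t + r)) ≤ dimH (Kset β t) := by
    intro r
    refine dimH_mono ?_
    rintro y ⟨hy, hy'⟩
    exact ⟨hy.1, fun n => hy'.1.le.trans (B_min h hy n)⟩
  rw [tendsto_order]
  constructor
  · intro s0 hs0
    filter_upwards [self_mem_nhdsWithin] with r hr
    exact main_lower h ht hr hs0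
  · intro s0 hs0
    exact Filter.Eventually.of_forall (fun r => (hupper r).trans_lt hs0)
end

section
/- Let (x_i) ∈ {0,1}^ℕ and let s_1…s_p ∈ {0,1}^p be any finite word. Then σ^n((x_i)) ≽ s_1…s_p 0^∞ for all n ≥ 0 if and only if σ^n((x_i)) ≽ (s_1…s_p)^∞ for all n ≥ 0. -/
open Set Filter MeasureTheory

theorem seqLe_iff_aux (a y : ℕ → ℕ) :
    seqLe a y ↔ ∀ n, (∀ i, i < n → a i = y i) → a n ≤ y n := by
  constructor
  · rintro (rfl | ⟨m, hm, hlt⟩) n hn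
    · exact le_rfl
    · rcases lt_trichotomy n m with h | h | h
      · exact (hm n h).le
      · subst h; exact hlt.le
      · have := hn m h
        omega
  · intro h
    by_cases hay : a = y
    · exact Or.inl hay
    · right
      have hex : ∃ n, a n ≠ y n := by
        by_contra hc
        push Not at hc
        exact hay (funext hc)
      classical
      have hmin : ∀ i, i < Nat.find hex → a i = y i := fun i hi => by
        have := Nat.find_min hex hi
        simpa using this
      exact ⟨Nat.find hex, hmin, lt_of_le_of_ne (h _ hmin) (Nat.find_spec hex)⟩

theorem perSeq_eq_aux (s : List ℕ) (i : ℕ) (h : i < s.length) : perSeq s i = wordSeq s i := by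
  simp only [perSeq, wordSeq, Nat.mod_eq_of_lt h]

theorem wordSeq_zero_aux (s : List ℕ) (i : ℕ) (h : s.length ≤ i) : wordSeq s i = 0 := by
  simp [wordSeq, List.getD, h]

theorem perSeq_add_aux (s : List ℕ) (i : ℕ) : perSeq s (i + s.length) = perSeq s i := by
  simp [perSeq]

/-- For `(x_i) ∈ {0,1}^ℕ` and a finite word `s = s_1…s_p ∈ {0,1}^p`,
`σ^n((x_i)) ≽ s 0^∞` for all `n ≥ 0` iff `σ^n((x_i)) ≽ s^∞` for all `n ≥ 0`. -/
theorem stmt_14 (x : ℕ → ℕ) (hx : ∀ i, x i ≤ 1) (s : List ℕ) (hs : ∀ a ∈ s, a ≤ 1) :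
    (∀ n : ℕ, seqLe (wordSeq s) (shiftN n x)) ↔
      (∀ n : ℕ, seqLe (perSeq s) (shiftN n x)) := by
  simp only [seqLe_iff_aux, shiftN]
  constructor
  · intro H n k
    induction k using Nat.strong_induction_on generalizing n with
    | _ k ih =>
      intro hk
      rcases lt_or_ge k s.length with hlt | hge
      · rw [perSeq_eq_aux s k hlt]
        exact H n k fun i hi => by rw [← perSeq_eq_aux s i (hi.trans hlt)]; exact hk i hi
      · rcases Nat.eq_zero_or_pos s.length with h0 | hpos
        · have : s = [] := List.length_eq_zero_iff.mp h0
          subst this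
          simp [perSeq]
        · obtain ⟨m, rfl⟩ := Nat.exists_eq_add_of_le' hge
          rw [perSeq_add_aux]
          have := ih m (by omega) (n + s.length) (fun i hi => by
            have h1 := hk (i + s.length) (by omega)
            rw [perSeq_add_aux] at h1
            rw [h1]; congr 1; omega)
          rwa [show m + s.length + n = m + (n + s.length) by omega]
  · intro H n k hk
    rcases lt_or_ge k s.length with hlt | hge
    · rw [← perSeq_eq_aux s k hlt]
      exact H n k fun i hi => by rw [perSeq_eq_aux s i (hi.trans hlt)]; exact hk i hi
    · rw [wordSeq_zero_aux s k hge]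
      exact Nat.zero_le _
end
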